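/- Let n ≥ 1. Let Ω₁ = 𝔹^{n₁} × ⋯ × 𝔹^{n_l} ⊆ ℂⁿ with generic norm ρ₁(z) = ∏_{i=1}^l (1−‖z⁽ⁱ⁾‖²)^{p_i} (positive integer exponents p_i with p_{i₀} = 1 for some i₀), and let Ω₂ = 𝔹^{m₁} × ⋯ × 𝔹^{m_{l'}} ⊆ ℂⁿ with generic norm ρ₂(w) = ∏_{j=1}^{l'} (1−‖w⁽ʲ⁾‖²)^{q_j} (positive integer exponents q_j with q_{j₀} = 1 for some j₀), where n₁+⋯+n_l = m₁+⋯+m_{l'} = n. Let Σ₁, Σ₂ ⊆ ℂ^{n+1} be the corresponding circle bundles and D₁, D₂ ⊆ ℂ^{n+1} the corresponding disc bundles. Let U ⊆ ℂ^{n+1} be a connected open set with U ∩ Σ₁ ≠ ∅ and let F : U → ℂ^{n+1} be a nonconstant holomorphic map with F(U ∩ Σ₁) ⊆ Σ₂. Then there exist polynomials P₁,…,P_{n+1}, Q on ℂ^{n+1} with Q nowhere zero on D₁ such that the rational map G = (P₁/Q, …, P_{n+1}/Q) restricts to a biholomorphism from D₁ onto D₂ and G coincides with F on some nonempty open subset of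 U. -/

import Mathlib

noncomputable section

open Complex

/-- `Biholo f s t`: `f` is a biholomorphism from `s` onto `t`. -/
def Biholo {E F : Type*} [NormedAddCommGroup E] [NormedSpace ℂ E]
    [NormedAddCommGroup F] [NormedSpace ℂ F]
    (f : E → F) (s : Set E) (t : Set F) : Prop :=
  DifferentiableOn ℂ f s ∧ Set.MapsTo f s t ∧
    ∃ g : F → E, DifferentiableOn ℂ g t ∧ Set.MapsTo g t s ∧
      Set.LeftInvOn g f s ∧ Set.RightInvOn g f t

/-- The squared Hermitian norm of the `i`-th block of coordinates `z` of `ℂⁿ`, where the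
block decomposition is given by the (surjective) assignment `β : Fin n → Fin l` of each
coordinate to a factor. -/
def blockSq {n l : ℕ} (β : Fin n → Fin l) (i : Fin l) (z : Fin n → ℂ) : ℝ :=
  ∑ j ∈ Finset.univ.filter (fun j => β j = i), Complex.normSq (z j)

/-- The product of balls `𝔹^{n₁} × ⋯ × 𝔹^{n_l} ⊆ ℂⁿ` determined by the block
decomposition `β`. -/
def prodBalls {n l : ℕ} (β : Fin n → Fin l) : Set (Fin n → ℂ) :=
  {z | ∀ i, blockSq β i z < 1}

/-- The generalized generic norm `ρ(z) = ∏ᵢ (1 − ‖z⁽ⁱ⁾‖²)^{pᵢ}` of the product of balls. -/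
def gnorm {n l : ℕ} (β : Fin n → Fin l) (p : Fin l → ℕ) (z : Fin n → ℂ) : ℝ :=
  ∏ i, (1 - blockSq β i z) ^ (p i)

/-- The circle bundle `Σ(Ω, ρ) = {(z,ξ) ∈ Ω × ℂ : |ξ|² = ρ(z)}`. -/
def circBundle {n l : ℕ} (β : Fin n → Fin l) (p : Fin l → ℕ) : Set ((Fin n → ℂ) × ℂ) :=
  {P | P.1 ∈ prodBalls β ∧ Complex.normSq P.2 = gnorm β p P.1}

/-- The disc bundle `D(Ω, ρ) = {(z,ξ) ∈ Ω × ℂ : |ξ|² < ρ(z)}`. -/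
def discBundle {n l : ℕ} (β : Fin n → Fin l) (p : Fin l → ℕ) : Set ((Fin n → ℂ) × ℂ) :=
  {P | P.1 ∈ prodBalls β ∧ Complex.normSq P.2 < gnorm β p P.1}

/-- Evaluation of a polynomial in the `n+1` variables `(z, ξ)` at a point of `ℂⁿ × ℂ`. -/
def evalP {n : ℕ} (f : MvPolynomial (Fin n ⊕ Unit) ℂ) (P : (Fin n → ℂ) × ℂ) : ℂ :=
  MvPolynomial.eval (Sum.elim P.1 (fun _ => P.2)) f

/-!
Polarizing `ρ` turns `|ξ|² = ρ(z)` into the holomorphic equation `ξ η = ∏ᵢ (1 - ⟨z, w⟩ᵢ) ^ pᵢ`,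
whose solutions are preserved by `F` together with its conjugate. The disc bundles have explicit
rational automorphisms acting transitively on the circle bundles, so at any point of `Σ₁` the map
may be assumed to fix `(0, 1)`. If the derivative is not injective there, it kills the complex
tangent directions of `Σ₁`; if this happens at all nearby points of `Σ₁`, polarization makes the
derivative vanish identically and `F` is constant.

So let `F` fix `(0, 1)` with injective derivative, and let `A` be the derivative of its first
component along `ℂⁿ`. The polarized equation forces `z ↦ F (z, 1)` to be a linear fractional map
`((1 - λ z)⁻¹ A z, 1)`, and its second order part on the level sets of the polarized norm gives
`λ = 0` when `Ω₁` has several factors. In that case, moving the base point along `Σ₁`,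
`F (z, ξ) = (A z, f ξ)`. As some exponents equal `1`, comparing logarithmic derivatives shows
`f ξ = ξ`, and comparing the poles of these shows that `A` is an isometry matching the factors
together with their exponents. When `Ω₁` is a single ball, so is `Ω₂`; then `D₁` and `D₂` are
balls, `1 / (1 - ξ')` is computed from the polarized equation, and `F` turns out to be a linear
fractional map between balls.
-/

open Metric Filter Topology

section SeveralVariables

variable {E G : Type*} [NormedAddCommGroup E] [NormedSpace ℂ E]
  [NormedAddCommGroup G] [NormedSpace ℂ G]

lemma exists_eventually_norm_fderiv_le {f : E → G} {x : E}
    (hf : ∀ᶠ y in 𝓝 x, DifferentiableAt ℂ f y) : ∃ M, ∀ᶠ y in 𝓝 x, ‖fderiv ℂ f y‖ ≤ M := by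
  have hcont : ∀ᶠ y in 𝓝 x, f y ∈ ball (f x) 1 :=
    hf.self_of_nhds.continuousAt (ball_mem_nhds _ one_pos)
  obtain ⟨R, hR, hball⟩ := Metric.eventually_nhds_iff_ball.1 (hf.and hcont)
  refine ⟨2 / (R / 2), ?_⟩
  filter_upwards [ball_mem_nhds x (half_pos hR)] with y hy
  have hsub : ball y (R / 2) ⊆ ball x R :=
    ball_subset_ball' (by linarith [mem_ball.1 hy])
  have hyR : y ∈ ball x R := ball_subset_ball (half_le_self hR.le) hy
  refine norm_fderiv_le_div_of_mapsTo_ball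
    (fun u hu => (hball u (hsub hu)).1.differentiableWithinAt) (fun u hu => ?_) (half_pos hR)
  have hu := mem_ball.1 (hball u (hsub hu)).2
  have hy := mem_ball.1 (hball y hyR).2
  rw [mem_closedBall]
  linarith [dist_triangle_right (f u) (f y) (f x)]

lemma fderiv_apply_eq_circleIntegral [CompleteSpace G] {f : E → G} {y v : E} {r : ℝ} (hr : 0 < r)
    (hf : ∀ ζ ∈ closedBall (0 : ℂ) r, DifferentiableAt ℂ f (y + ζ • v)) :
    fderiv ℂ f y v =
      (2 * Real.pi * I : ℂ)⁻¹ • ∮ ζ in C(0, r), (1 / (ζ - 0) ^ 2) • f (y + ζ • v) := by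
  have hd : DifferentiableOn ℂ (fun ζ : ℂ => f (y + ζ • v)) (closedBall 0 r) := fun ζ hζ =>
    ((hf ζ hζ).comp ζ (by fun_prop)).differentiableWithinAt
  rw [hd.deriv_eq_smul_circleIntegral hr, smul_smul, inv_mul_cancel₀ two_pi_I_ne_zero, one_smul]
  have hline : HasDerivAt (fun ζ : ℂ => y + ζ • v) v 0 := by
    simpa using ((hasDerivAt_id (0 : ℂ)).smul_const v).const_add y
  have hfy : HasFDerivAt f (fderiv ℂ f y) (y + (0 : ℂ) • v) := by
    simpa using (hf 0 (mem_closedBall_self hr.le)).hasFDerivAt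
  exact (hfy.comp_hasDerivAt (0 : ℂ) hline).deriv.symm

variable [FiniteDimensional ℂ E] [FiniteDimensional ℂ G]

lemma differentiableAt_circleIntegral_smul_comp_add {f : E → G} {g : ℂ → ℂ} {x v : E}
    {r s M : ℝ} (hs : 0 < s) (hg : Continuous fun θ => g (circleMap 0 r θ))
    (hf : ∀ y ∈ ball x s, ∀ θ, DifferentiableAt ℂ f (y + circleMap 0 r θ • v))
    (hM : ∀ y ∈ ball x s, ∀ θ, ‖fderiv ℂ f (y + circleMap 0 r θ • v)‖ ≤ M) :
    DifferentiableAt ℂ (fun y => ∮ ζ in C(0, r), g ζ • f (y + ζ • v)) x := by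
  have : CompleteSpace G := FiniteDimensional.complete ℂ G
  have : CompleteSpace E := FiniteDimensional.complete ℂ E
  have : ProperSpace E := FiniteDimensional.proper ℂ E
  have : ProperSpace G := FiniteDimensional.proper ℂ G
  let _ : MeasurableSpace E := borel E
  have : BorelSpace E := ⟨rfl⟩
  have hderiv : Continuous (deriv (circleMap 0 r)) := by
    simp only [funext (deriv_circleMap 0 r)]
    fun_prop
  have hintegrand : ∀ y ∈ ball x s, Continuous fun θ : ℝ =>
      deriv (circleMap 0 r) θ • g (circleMap 0 r θ) • f (y + circleMap 0 r θ • v) := by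
    refine fun y hy => hderiv.smul (hg.smul (continuous_iff_continuousAt.2 fun θ => ?_))
    exact (hf y hy θ).continuousAt.comp (f := fun θ : ℝ => y + circleMap 0 r θ • v) (by fun_prop)
  refine (intervalIntegral.hasFDerivAt_integral_of_dominated_of_fderiv_le (𝕜 := ℂ)
    (F' := fun y θ => deriv (circleMap 0 r) θ • g (circleMap 0 r θ) •
      fderiv ℂ f (y + circleMap 0 r θ • v))
    (bound := fun θ => ‖deriv (circleMap 0 r) θ‖ * (‖g (circleMap 0 r θ)‖ * M))
    (ball_mem_nhds x hs) ?_ ((hintegrand x (mem_ball_self hs)).intervalIntegrable _ _) ?_ ?_ ?_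
    ?_).differentiableAt
  · filter_upwards [ball_mem_nhds x hs] with y hy using (hintegrand y hy).aestronglyMeasurable
  · have hline : Continuous fun θ : ℝ => x + circleMap 0 r θ • v := by fun_prop
    exact (hderiv.measurable.fun_smul
      (hg.measurable.fun_smul ((measurable_fderiv ℂ f).comp hline.measurable))).aestronglyMeasurable
  · filter_upwards with θ _ y hy
    rw [norm_smul, norm_smul]
    gcongr
    exact hM y hy θ
  · exact (hderiv.norm.mul (hg.norm.mul continuous_const)).intervalIntegrable _ _
  · filter_upwards with θ _ y hy
    exact ((((hf y hy θ).hasFDerivAt.comp y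
      ((hasFDerivAt_id y).add_const _)).const_smul _).const_smul _)

lemma differentiableAt_fderiv_apply {f : E → G} {x : E} (v : E)
    (hf : ∀ᶠ y in 𝓝 x, DifferentiableAt ℂ f y) :
    DifferentiableAt ℂ (fun y => fderiv ℂ f y v) x := by
  have : CompleteSpace G := FiniteDimensional.complete ℂ G
  obtain ⟨M, hM⟩ := exists_eventually_norm_fderiv_le hf
  have hcont : Tendsto (fun a : E × ℂ => a.1 + a.2 • v) (𝓝 (x, 0)) (𝓝 x) :=
    Continuous.tendsto' (by fun_prop) _ _ (by simp)
  obtain ⟨R, hR, hball⟩ := Metric.eventually_nhds_iff_ball.1 (hcont.eventually (hf.and hM))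
  have hmem : ∀ y ∈ ball x R, ∀ ζ ∈ closedBall (0 : ℂ) (R / 2),
      DifferentiableAt ℂ f (y + ζ • v) ∧ ‖fderiv ℂ f (y + ζ • v)‖ ≤ M := fun y hy ζ hζ =>
    hball (y, ζ) (by
      rw [← ball_prod_same]
      exact ⟨hy, closedBall_subset_ball (half_lt_self hR) hζ⟩)
  have hcircle : ∀ θ, circleMap 0 (R / 2) θ ∈ closedBall (0 : ℂ) (R / 2) :=
    circleMap_mem_closedBall 0 (half_pos hR).le
  have hkernel : Continuous fun θ => 1 / (circleMap 0 (R / 2) θ - 0) ^ 2 := by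
    refine continuous_const.div (by fun_prop) fun θ => ?_
    simpa using (half_pos hR).ne'
  refine ((differentiableAt_circleIntegral_smul_comp_add (v := v)
    (g := fun ζ => 1 / (ζ - 0) ^ 2) hR hkernel
    (fun y hy θ => (hmem y hy _ (hcircle θ)).1)
    (fun y hy θ => (hmem y hy _ (hcircle θ)).2)).const_smul
      ((2 * Real.pi * I : ℂ)⁻¹)).congr_of_eventuallyEq ?_
  filter_upwards [ball_mem_nhds x hR] with y hy
  exact fderiv_apply_eq_circleIntegral (half_pos hR) fun ζ hζ => (hmem y hy ζ hζ).1

lemma differentiableAt_fderiv {f : E → G} {x : E}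
    (hf : ∀ᶠ y in 𝓝 x, DifferentiableAt ℂ f y) : DifferentiableAt ℂ (fderiv ℂ f) x := by
  let b := Module.finBasis ℂ E
  let coord i : E →L[ℂ] ℂ := (b.coord i).toContinuousLinearMap
  have hsum : fderiv ℂ f = fun y => ∑ i, (coord i).smulRight (fderiv ℂ f y (b i)) := by
    funext y
    ext u
    conv_lhs => rw [← b.sum_repr u, map_sum]
    simp only [map_smul, FunLike.coe_sum, Finset.sum_apply]
    rfl
  rw [hsum]
  refine DifferentiableAt.fun_sum fun i _ => ?_
  exact (ContinuousLinearMap.smulRightL ℂ E G (coord i)).differentiableAt.comp x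
    (differentiableAt_fderiv_apply (b i) hf)

lemma eventually_differentiableAt_fderiv {f : E → G} {x : E}
    (hf : ∀ᶠ y in 𝓝 x, DifferentiableAt ℂ f y) :
    ∀ᶠ y in 𝓝 x, DifferentiableAt ℂ (fderiv ℂ f) y :=
  hf.eventually_nhds.mono fun _ => differentiableAt_fderiv

end SeveralVariables

section Identity

variable {E G : Type*} [NormedAddCommGroup E] [NormedSpace ℂ E]
  [NormedAddCommGroup G] [NormedSpace ℂ G] [CompleteSpace G]

lemma eq_zero_on_line {f : E → G} {x : E} {r : ℝ}
    (hf : ∀ y ∈ ball x r, DifferentiableAt ℂ f y) {a b : E} (ha : a ∈ ball x r)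
    (h0 : ∃ᶠ t : ℂ in 𝓝[≠] 0, f (a + t • b) = 0) {t : ℂ} (ht : a + t • b ∈ ball x r) :
    f (a + t • b) = 0 := by
  set S : Set ℂ := (fun t : ℂ => a + t • b) ⁻¹' ball x r
  have hS : IsOpen S := isOpen_ball.preimage (by fun_prop)
  have hconv : Convex ℝ S := by
    have := (convex_ball x r).affine_preimage
      ((AffineMap.const ℝ ℂ a) + ((LinearMap.toSpanSingleton ℂ E b).restrictScalars ℝ).toAffineMap)
    exact this
  have hd : DifferentiableOn ℂ (fun t : ℂ => f (a + t • b)) S := fun s hs =>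
    (DifferentiableAt.comp s (hf _ hs) (by fun_prop)).differentiableWithinAt
  exact (hd.analyticOnNhd hS).eqOn_zero_of_preconnected_of_frequently_eq_zero
    hconv.isPreconnected (by simpa [S] using ha) h0 ht

lemma eqOn_const_of_eventually {U : Set E} (hU : IsOpen U) (hc : IsPreconnected U) {f : E → G}
    (hf : DifferentiableOn ℂ f U) {x : E} (hx : x ∈ U) {c : G} (h : ∀ᶠ y in 𝓝 x, f y = c) :
    Set.EqOn f (fun _ => c) U := by
  have key : U ⊆ {y | ∀ᶠ u in 𝓝 y, f u = c} := by
    refine hc.subset_of_closure_inter_subset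
      (isOpen_iff_mem_nhds.2 fun y hy => hy.eventually_nhds) ⟨x, hx, h⟩ ?_
    rintro y ⟨hy, hyU⟩
    obtain ⟨r, hr, hrU⟩ := Metric.isOpen_iff.1 hU y hyU
    obtain ⟨a, ha, hya⟩ := Metric.mem_closure_iff.1 hy r hr
    rw [dist_comm] at hya
    have hd : ∀ u ∈ ball y r, DifferentiableAt ℂ (fun u => f u - c) u := fun u hu =>
      (hf.differentiableAt (hU.mem_nhds (hrU hu))).sub_const c
    filter_upwards [ball_mem_nhds y hr] with u hu
    have hline : Tendsto (fun t : ℂ => a + t • (u - a)) (𝓝 0) (𝓝 a) :=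
      Continuous.tendsto' (by fun_prop) _ _ (by simp)
    have h0 : ∀ᶠ t : ℂ in 𝓝[≠] 0, f (a + t • (u - a)) - c = 0 :=
      eventually_nhdsWithin_of_eventually_nhds
        ((hline.eventually ha).mono fun t ht => sub_eq_zero.2 ht)
    have := eq_zero_on_line hd hya h0.frequently (t := 1) (by simpa using hu)
    simpa [sub_eq_zero] using this
  exact fun y hy => (key hy).self_of_nhds

lemma exists_eq_add_I_smul_of_antilinear_involution {c : E → E}
    (hadd : ∀ x y, c (x + y) = c x + c y) (hsmul : ∀ (t : ℂ) x, c (t • x) = star t • c x)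
    (hc : ∀ x, c (c x) = x) (hn : ∀ x, ‖c x‖ ≤ ‖x‖) (v : E) :
    ∃ a b, c a = a ∧ c b = b ∧ ‖a‖ ≤ ‖v‖ ∧ ‖b‖ ≤ ‖v‖ ∧ v = a + I • b := by
  refine ⟨(1 / 2 : ℂ) • (v + c v), (1 / 2 : ℂ) • (-I • v + I • c v), ?_, ?_, ?_, ?_, ?_⟩
  · simp [hsmul, hadd, hc, add_comm]
  · simp [hsmul, hadd, hc, add_comm, -neg_smul]
  · rw [norm_smul]
    norm_num
    linarith [norm_add_le v (c v), hn v]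
  · have := norm_add_le (-I • v) (I • c v)
    simp only [norm_smul, norm_neg, norm_I, one_mul] at this
    rw [norm_smul, norm_div, norm_one, Complex.norm_two]
    linarith [hn v]
  · simp only [smul_add, smul_smul]
    rw [show I * (1 / 2 * -I) = 1 / 2 by linear_combination (-1 / 2) * I_mul_I,
      show I * (1 / 2 * I) = -(1 / 2) by linear_combination (1 / 2) * I_mul_I]
    module

lemma eventually_eq_zero_of_antilinear_involution {c : E → E}
    (hadd : ∀ x y, c (x + y) = c x + c y) (hsmul : ∀ (t : ℂ) x, c (t • x) = star t • c x)
    (hc : ∀ x, c (c x) = x) (hn : ∀ x, ‖c x‖ ≤ ‖x‖) {K : E → G}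
    (hK : ∀ᶠ x in 𝓝 0, DifferentiableAt ℂ K x) (h0 : ∀ᶠ x in 𝓝 0, c x = x → K x = 0) :
    ∀ᶠ x in 𝓝 0, K x = 0 := by
  obtain ⟨δ, hδ, hball⟩ := Metric.eventually_nhds_iff_ball.1 (hK.and h0)
  filter_upwards [ball_mem_nhds (0 : E) (half_pos hδ)] with v hv
  rw [mem_ball_zero_iff] at hv
  obtain ⟨a, b, hca, hcb, hna, hnb, rfl⟩ :=
    exists_eq_add_I_smul_of_antilinear_involution hadd hsmul hc hn v
  set v := a + I • b with hv'
  have hreal : ∀ᶠ t : ℝ in 𝓝 0, K (a + (t : ℂ) • b) = 0 := by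
    filter_upwards [ball_mem_nhds (0 : ℝ) one_pos] with t ht
    rw [mem_ball_zero_iff] at ht
    refine (hball _ ?_).2 (by rw [hadd, hsmul (t : ℂ) b, hca, hcb, star_def, conj_ofReal])
    rw [mem_ball_zero_iff]
    calc ‖a + (t : ℂ) • b‖ ≤ ‖a‖ + ‖(t : ℂ) • b‖ := norm_add_le _ _
      _ = ‖a‖ + ‖t‖ * ‖b‖ := by rw [norm_smul (t : ℂ) b, Complex.norm_real]
      _ ≤ ‖v‖ + 1 * ‖v‖ := by gcongr
      _ < δ := by linarith
  have hofReal : Tendsto ((↑) : ℝ → ℂ) (𝓝[≠] 0) (𝓝[≠] 0) :=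
    tendsto_nhdsWithin_of_tendsto_nhds_of_eventually_within _
      ((continuous_ofReal.tendsto' 0 0 (by simp)).mono_left nhdsWithin_le_nhds)
      (by filter_upwards [self_mem_nhdsWithin] with t ht using by simpa using ht)
  refine eq_zero_on_line (x := 0) (r := δ) (fun y hy => (hball y hy).1)
    (mem_ball_zero_iff.2 (by linarith))
    (hofReal.frequently (eventually_nhdsWithin_of_eventually_nhds hreal).frequently) ?_
  rw [mem_ball_zero_iff, ← hv']
  linarith [norm_nonneg v]

end Identity

section Polarization

variable {n l : ℕ}

/-- The polarization of `blockSq β i` as a complex bilinear form. -/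
def blockForm (β : Fin n → Fin l) (i : Fin l) : (Fin n → ℂ) →L[ℂ] (Fin n → ℂ) →L[ℂ] ℂ :=
  ∑ j with β j = i, (ContinuousLinearMap.proj j).smulRight (ContinuousLinearMap.proj j)

/-- The polarization `∏ᵢ (1 - ⟨z, w⟩ᵢ) ^ pᵢ` of `gnorm β p`. -/
def gnormPolar (β : Fin n → Fin l) (p : Fin l → ℕ) (z w : Fin n → ℂ) : ℂ :=
  ∏ i, (1 - blockForm β i z w) ^ p i

/-- The Segre variety of the circle bundle: the complexification of `|ξ|² = ρ(z)`, in which the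
conjugate of the point is an independent variable. -/
def Segre (β : Fin n → Fin l) (p : Fin l → ℕ) (P Q : (Fin n → ℂ) × ℂ) : Prop :=
  P.2 * Q.2 = gnormPolar β p P.1 Q.1

/-- The point `(0, 1)`, which lies on every circle bundle. -/
def basePoint : (Fin n → ℂ) × ℂ := (0, 1)

@[simp] lemma basePoint_fst : (basePoint : (Fin n → ℂ) × ℂ).1 = 0 := rfl

@[simp] lemma basePoint_snd : (basePoint : (Fin n → ℂ) × ℂ).2 = 1 := rfl

@[simp] lemma star_basePoint : star (basePoint : (Fin n → ℂ) × ℂ) = basePoint := by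
  ext <;> simp [basePoint]

variable (β : Fin n → Fin l) (p : Fin l → ℕ) (i : Fin l)

lemma blockForm_apply (z w : Fin n → ℂ) : blockForm β i z w = ∑ j with β j = i, z j * w j := by
  simp [blockForm]

lemma blockForm_comm (z w : Fin n → ℂ) : blockForm β i z w = blockForm β i w z := by
  simp [blockForm_apply, mul_comm]

lemma star_blockForm (z w : Fin n → ℂ) :
    star (blockForm β i z w) = blockForm β i (star z) (star w) := by
  simp [blockForm_apply]

lemma blockForm_star_self (z : Fin n → ℂ) : blockForm β i z (star z) = blockSq β i z := by
  simp [blockForm_apply, blockSq, Complex.mul_conj]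

lemma gnormPolar_comm (z w : Fin n → ℂ) : gnormPolar β p z w = gnormPolar β p w z := by
  simp only [gnormPolar, blockForm_comm β _ z w]

lemma gnormPolar_star_self (z : Fin n → ℂ) : gnormPolar β p z (star z) = gnorm β p z := by
  simp [gnormPolar, gnorm, blockForm_star_self]

@[simp] lemma gnormPolar_zero_left (w : Fin n → ℂ) : gnormPolar β p 0 w = 1 := by
  simp [gnormPolar]

@[simp] lemma gnormPolar_zero_right (z : Fin n → ℂ) : gnormPolar β p z 0 = 1 := by
  simp [gnormPolar]

@[fun_prop] lemma differentiableAt_gnormPolar {E : Type*} [NormedAddCommGroup E] [NormedSpace ℂ E]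
    {f g : E → Fin n → ℂ} {x : E} (hf : DifferentiableAt ℂ f x) (hg : DifferentiableAt ℂ g x) :
    DifferentiableAt ℂ (fun y => gnormPolar β p (f y) (g y)) x := by
  unfold gnormPolar
  fun_prop

variable {β p}

lemma Segre.symm {P Q : (Fin n → ℂ) × ℂ} (h : Segre β p P Q) : Segre β p Q P := by
  rwa [Segre, mul_comm, gnormPolar_comm]

lemma segre_star_self_iff {P : (Fin n → ℂ) × ℂ} :
    Segre β p P (star P) ↔ normSq P.2 = gnorm β p P.1 := by
  rw [Segre, Prod.fst_star, gnormPolar_star_self, Prod.snd_star, star_def, mul_conj]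
  exact ofReal_inj

lemma gnorm_pos {z : Fin n → ℂ} (hz : z ∈ prodBalls β) : 0 < gnorm β p z :=
  Finset.prod_pos fun i _ => pow_pos (sub_pos.2 (hz i)) _

variable (β p)

lemma isOpen_prodBalls : IsOpen (prodBalls β) := by
  simp only [prodBalls, blockSq, Set.ofPred_forall]
  exact isOpen_iInter_of_finite fun i => isOpen_lt (by fun_prop) continuous_const

lemma zero_mem_prodBalls : (0 : Fin n → ℂ) ∈ prodBalls β := fun i => by
  simp [blockSq]

lemma basePoint_mem_circBundle : basePoint ∈ circBundle β p :=
  ⟨zero_mem_prodBalls β, by simp [gnorm, blockSq]⟩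

/-- A holomorphic chart of the Segre variety near `(basePoint, basePoint)`, in which conjugation
becomes the antilinear involution `(z, w, σ) ↦ (w̄, z̄, -σ̄)`. -/
def segreChart (T : (Fin n → ℂ) × (Fin n → ℂ) × ℂ) : ((Fin n → ℂ) × ℂ) × ((Fin n → ℂ) × ℂ) :=
  ((T.1, exp (log (gnormPolar β p T.1 T.2.1) / 2 + T.2.2)),
    (T.2.1, exp (log (gnormPolar β p T.1 T.2.1) / 2 - T.2.2)))

@[simp] lemma segreChart_zero : segreChart β p 0 = (basePoint, basePoint) := by
  simp [segreChart, basePoint]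

lemma eventually_gnormPolar_mem_slitPlane {X : Type*} [TopologicalSpace X] {x : X}
    {f g : X → Fin n → ℂ} (hf : ContinuousAt f x) (hg : ContinuousAt g x) (hfx : f x = 0) :
    ∀ᶠ y in 𝓝 x, gnormPolar β p (f y) (g y) ∈ slitPlane := by
  have hcont : ContinuousAt (fun R : (Fin n → ℂ) × (Fin n → ℂ) => gnormPolar β p R.1 R.2)
      (f x, g x) := DifferentiableAt.continuousAt (𝕜 := ℂ) (by fun_prop)
  refine (hcont.comp (f := fun y => (f y, g y)) (hf.prodMk hg)).eventually
    (isOpen_slitPlane.mem_nhds ?_)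
  simp [hfx]

lemma differentiableAt_segreChart {T : (Fin n → ℂ) × (Fin n → ℂ) × ℂ}
    (hT : gnormPolar β p T.1 T.2.1 ∈ slitPlane) : DifferentiableAt ℂ (segreChart β p) T := by
  have := DifferentiableAt.clog (f := fun T : (Fin n → ℂ) × (Fin n → ℂ) × ℂ =>
    gnormPolar β p T.1 T.2.1) (by fun_prop) hT
  unfold segreChart
  fun_prop

/-- The inverse of `segreChart` on the Segre variety. -/
def segreChartInv (R : ((Fin n → ℂ) × ℂ) × ((Fin n → ℂ) × ℂ)) : (Fin n → ℂ) × (Fin n → ℂ) × ℂ :=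
  (R.1.1, R.2.1, log R.1.2 - log (gnormPolar β p R.1.1 R.2.1) / 2)

@[simp] lemma segreChartInv_basePoint : segreChartInv β p (basePoint, basePoint) = 0 := by
  simp [segreChartInv]

lemma eventually_gnormPolar_fst_mem_slitPlane :
    ∀ᶠ R in 𝓝 ((basePoint, basePoint) : ((Fin n → ℂ) × ℂ) × ((Fin n → ℂ) × ℂ)),
      gnormPolar β p R.1.1 R.2.1 ∈ slitPlane :=
  eventually_gnormPolar_mem_slitPlane β p (by fun_prop) (by fun_prop) rfl

lemma continuousAt_segreChartInv : ContinuousAt (segreChartInv β p) (basePoint, basePoint) := by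
  have hlog : ContinuousAt (fun R : ((Fin n → ℂ) × ℂ) × ((Fin n → ℂ) × ℂ) =>
      log (gnormPolar β p R.1.1 R.2.1)) (basePoint, basePoint) :=
    DifferentiableAt.continuousAt (𝕜 := ℂ) (DifferentiableAt.clog (by fun_prop)
      (eventually_gnormPolar_fst_mem_slitPlane β p).self_of_nhds)
  exact ContinuousAt.prodMk (by fun_prop) (ContinuousAt.prodMk (by fun_prop)
    ((ContinuousAt.clog (by fun_prop) (by simp)).sub (hlog.div_const 2)))

lemma eventually_segreChart_segreChartInv :
    ∀ᶠ R in 𝓝 ((basePoint, basePoint) : ((Fin n → ℂ) × ℂ) × ((Fin n → ℂ) × ℂ)),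
      Segre β p R.1 R.2 → segreChart β p (segreChartInv β p R) = R := by
  have hξ : ∀ᶠ R in 𝓝 ((basePoint, basePoint) : ((Fin n → ℂ) × ℂ) × ((Fin n → ℂ) × ℂ)),
      R.1.2 ≠ 0 :=
    Tendsto.eventually_ne (Continuous.tendsto (by fun_prop) _) (by simp)
  filter_upwards [hξ, eventually_gnormPolar_fst_mem_slitPlane β p] with R hξ hρ hR
  obtain ⟨⟨z, ξ⟩, ⟨w, η⟩⟩ := R
  simp only [segreChart, segreChartInv, Prod.mk.injEq, true_and]
  refine ⟨by rw [add_sub_cancel, exp_log hξ], ?_⟩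
  rw [show ∀ a b : ℂ, a / 2 - (b - a / 2) = a - b by intros; ring, exp_sub,
    exp_log (slitPlane_ne_zero hρ), exp_log hξ, div_eq_iff hξ, mul_comm]
  exact Eq.symm hR

variable {β p}

lemma segreChart_star {z : Fin n → ℂ} {σ : ℂ} (hz : z ∈ prodBalls β) (hσ : star σ = -σ) :
    (segreChart β p (z, star z, σ)).1 ∈ circBundle β p ∧
      (segreChart β p (z, star z, σ)).2 = star (segreChart β p (z, star z, σ)).1 := by
  have hρ : (0 : ℝ) < gnorm β p z := gnorm_pos hz
  have hchart : segreChart β p (z, star z, σ) =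
      ((z, exp (Real.log (gnorm β p z) / 2 + σ)),
        (star z, exp (Real.log (gnorm β p z) / 2 - σ))) := by
    simp only [segreChart, gnormPolar_star_self, ofReal_log hρ.le]
  have hstar : star (exp (Real.log (gnorm β p z) / 2 + σ)) =
      exp (Real.log (gnorm β p z) / 2 - σ) := by
    rw [star_def] at hσ ⊢
    rw [← exp_conj, map_add, hσ, map_div₀, conj_ofReal, map_ofNat, sub_eq_add_neg]
  rw [hchart]
  refine ⟨⟨hz, segre_star_self_iff.1 ?_⟩, Prod.ext rfl hstar.symm⟩
  rw [Segre, Prod.snd_star, hstar, ← exp_add, Prod.fst_star, gnormPolar_star_self,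
    add_add_sub_cancel, add_halves, ← ofReal_exp, Real.exp_log hρ]

variable {G : Type*} [NormedAddCommGroup G] [NormedSpace ℂ G] [CompleteSpace G]

lemma eventually_eq_zero_of_circBundle {H : ((Fin n → ℂ) × ℂ) × ((Fin n → ℂ) × ℂ) → G}
    (hH : ∀ᶠ R in 𝓝 (basePoint, basePoint), DifferentiableAt ℂ H R)
    (h0 : ∀ᶠ P in 𝓝 basePoint, P ∈ circBundle β p → H (P, star P) = 0) :
    ∀ᶠ R in 𝓝 (basePoint, basePoint), Segre β p R.1 R.2 → H R = 0 := by
  have hslit : ∀ᶠ T in 𝓝 (0 : (Fin n → ℂ) × (Fin n → ℂ) × ℂ),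
      gnormPolar β p T.1 T.2.1 ∈ slitPlane :=
    eventually_gnormPolar_mem_slitPlane β p (by fun_prop) (by fun_prop) rfl
  have hchart : Tendsto (segreChart β p) (𝓝 0) (𝓝 (basePoint, basePoint)) := by
    rw [← segreChart_zero β p]
    exact (differentiableAt_segreChart β p hslit.self_of_nhds).continuousAt
  have hK : ∀ᶠ T in 𝓝 0, DifferentiableAt ℂ (fun T => H (segreChart β p T)) T := by
    filter_upwards [hchart.eventually hH, hslit] with T hHT hT
    exact hHT.comp T (differentiableAt_segreChart β p hT)
  have hfix : ∀ᶠ T in 𝓝 (0 : (Fin n → ℂ) × (Fin n → ℂ) × ℂ),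
      (star T.2.1, star T.1, -star T.2.2) = T → H (segreChart β p T) = 0 := by
    have hball : ∀ᶠ T in 𝓝 (0 : (Fin n → ℂ) × (Fin n → ℂ) × ℂ), T.1 ∈ prodBalls β :=
      continuous_fst.continuousAt ((isOpen_prodBalls β).mem_nhds (zero_mem_prodBalls β))
    filter_upwards [hchart.fst_nhds.eventually h0, hball] with T hT hTball hfixT
    obtain ⟨z, w, σ⟩ := T
    obtain ⟨-, rfl, hσ⟩ := by simpa only [Prod.mk.injEq] using hfixT
    obtain ⟨hmem, hstar⟩ := segreChart_star (p := p) hTball (neg_eq_iff_eq_neg.1 hσ)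
    rw [← hT hmem, ← hstar]
  have hzero := eventually_eq_zero_of_antilinear_involution
    (c := fun T : (Fin n → ℂ) × (Fin n → ℂ) × ℂ => (star T.2.1, star T.1, -star T.2.2))
    (fun x y => by simp; ring) (fun t x => by ext <;> simp) (fun x => by simp)
    (fun x => by simp only [Prod.norm_def, norm_neg, norm_star]; rw [max_left_comm]) hK hfix
  have hinv := (continuousAt_segreChartInv β p).tendsto
  rw [segreChartInv_basePoint] at hinv
  filter_upwards [hinv.eventually hzero, eventually_segreChart_segreChartInv β p] with R hR hchartR
    hseg
  rwa [hchartR hseg] at hR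

end Polarization

lemma differentiableAt_fun_div {E : Type*} [NormedAddCommGroup E] [NormedSpace ℂ E] {f g : E → ℂ}
    {x : E} (hf : DifferentiableAt ℂ f x) (hg : DifferentiableAt ℂ g x) (h : g x ≠ 0) :
    DifferentiableAt ℂ (fun y => f y / g y) x := by
  simpa only [div_eq_mul_inv] using hf.fun_mul (hg.fun_inv h)

section Automorphisms

variable {n l : ℕ} {β : Fin n → Fin l} {p : Fin l → ℕ}

lemma norm_blockForm_star_le (i : Fin l) (z a : Fin n → ℂ) :
    ‖blockForm β i z (star a)‖ ≤ (blockSq β i z + blockSq β i a) / 2 := by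
  rw [blockForm_apply, blockSq, blockSq, ← Finset.sum_add_distrib, Finset.sum_div]
  refine (norm_sum_le _ _).trans (Finset.sum_le_sum fun j _ => ?_)
  rw [norm_mul, Pi.star_apply, norm_star, normSq_eq_norm_sq, normSq_eq_norm_sq]
  linarith [two_mul_le_add_sq ‖z j‖ ‖a j‖]

lemma one_sub_blockForm_star_ne_zero {z a : Fin n → ℂ} (hz : z ∈ prodBalls β)
    (ha : a ∈ prodBalls β) (i : Fin l) : 1 - blockForm β i z (star a) ≠ 0 := by
  intro h
  have hle := norm_blockForm_star_le (β := β) i z a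
  rw [← sub_eq_zero.1 h, norm_one] at hle
  linarith [hz i, ha i]

lemma gnormPolar_star_ne_zero {z a : Fin n → ℂ} (hz : z ∈ prodBalls β) (ha : a ∈ prodBalls β) :
    gnormPolar β p z (star a) ≠ 0 :=
  Finset.prod_ne_zero_iff.2 fun i _ => pow_ne_zero _ (one_sub_blockForm_star_ne_zero hz ha i)

lemma snd_ne_zero_of_mem_circBundle {A : (Fin n → ℂ) × ℂ} (hA : A ∈ circBundle β p) : A.2 ≠ 0 :=
  normSq_pos.1 (hA.2 ▸ gnorm_pos hA.1)

/-- The number `√(1 - ‖a⁽ⁱ⁾‖²)` attached to a point `a` of the product of balls. -/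
def blockRadius (β : Fin n → Fin l) (a : Fin n → ℂ) (i : Fin l) : ℝ := √(1 - blockSq β i a)

lemma blockRadius_pos {a : Fin n → ℂ} (ha : a ∈ prodBalls β) (i : Fin l) : 0 < blockRadius β a i :=
  Real.sqrt_pos.2 (sub_pos.2 (ha i))

lemma blockRadius_sq {a : Fin n → ℂ} (ha : a ∈ prodBalls β) (i : Fin l) :
    (blockRadius β a i : ℂ) ^ 2 = 1 - blockForm β i a (star a) := by
  rw [blockForm_star_self]
  exact_mod_cast Real.sq_sqrt (sub_pos.2 (ha i)).le

lemma one_add_blockRadius_ne_zero {a : Fin n → ℂ} (ha : a ∈ prodBalls β) (i : Fin l) :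
    1 + (blockRadius β a i : ℂ) ≠ 0 := by
  have := blockRadius_pos ha i
  exact_mod_cast (by positivity : 1 + blockRadius β a i ≠ 0)

/-- The involutive automorphism of the product of balls exchanging `0` and `a`. -/
def ballInvolution (β : Fin n → Fin l) (a z : Fin n → ℂ) : Fin n → ℂ := fun j =>
  ((1 - blockForm β (β j) z (star a) / (1 + blockRadius β a (β j))) * a j -
    blockRadius β a (β j) * z j) / (1 - blockForm β (β j) z (star a))

@[simp] lemma ballInvolution_zero (a : Fin n → ℂ) : ballInvolution β a 0 = a := by
  funext j
  simp [ballInvolution]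

lemma blockForm_ballInvolution (a z w : Fin n → ℂ) (i : Fin l) :
    blockForm β i (ballInvolution β a z) w =
      ((1 - blockForm β i z (star a) / (1 + blockRadius β a i)) * blockForm β i a w -
        blockRadius β a i * blockForm β i z w) / (1 - blockForm β i z (star a)) := by
  generalize hu : blockForm β i z (star a) = u
  simp only [blockForm_apply _ _ _ w, Finset.mul_sum, ← Finset.sum_sub_distrib, Finset.sum_div]
  refine Finset.sum_congr rfl fun j hj => ?_
  obtain rfl := (Finset.mem_filter.1 hj).2
  rw [ballInvolution, hu]
  ring

lemma one_sub_blockForm_ballInvolution {a z w : Fin n → ℂ} (ha : a ∈ prodBalls β)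
    (hz : z ∈ prodBalls β) (hw : w ∈ prodBalls β) (i : Fin l) :
    1 - blockForm β i (ballInvolution β a z) (star (ballInvolution β a w)) =
      (blockRadius β a i : ℂ) ^ 2 * (1 - blockForm β i z (star w)) /
        ((1 - blockForm β i z (star a)) * (1 - blockForm β i a (star w))) := by
  have hza := one_sub_blockForm_star_ne_zero hz ha i
  have haw := one_sub_blockForm_star_ne_zero ha hw i
  have hr := one_add_blockRadius_ne_zero ha i
  have haa : blockForm β i a (star a) = (1 - blockRadius β a i) * (1 + blockRadius β a i) := by
    linear_combination blockRadius_sq ha i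
  have hstar : ∀ u, blockForm β i u (star (ballInvolution β a w)) =
      ((1 - blockForm β i a (star w) / (1 + blockRadius β a i)) * blockForm β i u (star a) -
        blockRadius β a i * blockForm β i u (star w)) / (1 - blockForm β i a (star w)) := by
    intro u
    have hconj : ∀ v v' : Fin n → ℂ,
        blockForm β i v (star v') = star (blockForm β i v' (star v)) := fun v v' => by
      rw [star_blockForm, star_star, blockForm_comm]
    rw [hconj, blockForm_ballInvolution]
    simp only [star_div₀, star_sub, star_mul', star_add, star_one, ← hconj]
    simp
  rw [blockForm_ballInvolution, hstar, hstar, haa]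
  field_simp
  ring

lemma one_sub_blockForm_ballInvolution_center {a z : Fin n → ℂ} (ha : a ∈ prodBalls β)
    (hz : z ∈ prodBalls β) (i : Fin l) :
    1 - blockForm β i (ballInvolution β a z) (star a) =
      (blockRadius β a i : ℂ) ^ 2 / (1 - blockForm β i z (star a)) := by
  simpa using one_sub_blockForm_ballInvolution ha hz (zero_mem_prodBalls β) i

lemma ballInvolution_mem {a z : Fin n → ℂ} (ha : a ∈ prodBalls β) (hz : z ∈ prodBalls β) :
    ballInvolution β a z ∈ prodBalls β := by
  intro i
  have h := one_sub_blockForm_ballInvolution ha hz hz i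
  have hconj : 1 - blockForm β i a (star z) = star (1 - blockForm β i z (star a)) := by
    rw [star_sub, star_one, star_blockForm, star_star, blockForm_comm]
  rw [blockForm_star_self, blockForm_star_self, hconj, star_def, Complex.mul_conj] at h
  have hreal : 1 - blockSq β i (ballInvolution β a z) =
      blockRadius β a i ^ 2 * (1 - blockSq β i z) / normSq (1 - blockForm β i z (star a)) := by
    exact_mod_cast h
  rw [← sub_pos, hreal]
  exact div_pos (mul_pos (pow_pos (blockRadius_pos ha i) 2) (sub_pos.2 (hz i)))
    (normSq_pos.2 (one_sub_blockForm_star_ne_zero hz ha i))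

lemma ballInvolution_ballInvolution {a z : Fin n → ℂ} (ha : a ∈ prodBalls β)
    (hz : z ∈ prodBalls β) : ballInvolution β a (ballInvolution β a z) = z := by
  funext j
  have hza := one_sub_blockForm_star_ne_zero hz ha (β j)
  have hr := one_add_blockRadius_ne_zero ha (β j)
  have hr0 : (blockRadius β a (β j) : ℂ) ≠ 0 := by exact_mod_cast (blockRadius_pos ha (β j)).ne'
  have hform : blockForm β (β j) (ballInvolution β a z) (star a) =
      1 - (blockRadius β a (β j) : ℂ) ^ 2 / (1 - blockForm β (β j) z (star a)) := by
    linear_combination -one_sub_blockForm_ballInvolution_center ha hz (β j)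
  rw [ballInvolution.eq_def β a (ballInvolution β a z), hform, ballInvolution]
  field_simp
  ring

lemma gnormPolar_ballInvolution {A : (Fin n → ℂ) × ℂ} {z w : Fin n → ℂ} (hA : A ∈ circBundle β p)
    (hz : z ∈ prodBalls β) (hw : w ∈ prodBalls β) :
    gnormPolar β p (ballInvolution β A.1 z) (star (ballInvolution β A.1 w)) =
      normSq A.2 * gnormPolar β p z (star w) /
        (gnormPolar β p z (star A.1) * gnormPolar β p A.1 (star w)) := by
  rw [hA.2, ← gnormPolar_star_self]
  simp only [gnormPolar, one_sub_blockForm_ballInvolution hA.1 hz hw, ← blockRadius_sq hA.1,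
    div_pow, mul_pow, Finset.prod_mul_distrib, Finset.prod_div_distrib]

/-- The automorphism of the disc and circle bundles sending the base point to `A`. -/
def bundleAut (β : Fin n → Fin l) (p : Fin l → ℕ) (A P : (Fin n → ℂ) × ℂ) : (Fin n → ℂ) × ℂ :=
  (ballInvolution β A.1 P.1, A.2 * P.2 / gnormPolar β p P.1 (star A.1))

/-- The point `(a, ᾱ)`, whose `bundleAut` is inverse to that of `(a, α)`. -/
def conjSnd (A : (Fin n → ℂ) × ℂ) : (Fin n → ℂ) × ℂ := (A.1, star A.2)

@[simp] lemma conjSnd_conjSnd (A : (Fin n → ℂ) × ℂ) : conjSnd (conjSnd A) = A := by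
  simp [conjSnd]

lemma conjSnd_mem_circBundle {A : (Fin n → ℂ) × ℂ} (hA : A ∈ circBundle β p) :
    conjSnd A ∈ circBundle β p :=
  ⟨hA.1, by simpa [conjSnd] using hA.2⟩

@[simp] lemma bundleAut_basePoint (A : (Fin n → ℂ) × ℂ) : bundleAut β p A basePoint = A := by
  simp [bundleAut]

lemma gnorm_bundleAut {A P : (Fin n → ℂ) × ℂ} (hA : A ∈ circBundle β p) (hP : P.1 ∈ prodBalls β) :
    gnorm β p (bundleAut β p A P).1 =
      normSq A.2 / normSq (gnormPolar β p P.1 (star A.1)) * gnorm β p P.1 := by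
  have hconj : gnormPolar β p A.1 (star P.1) = star (gnormPolar β p P.1 (star A.1)) := by
    simp only [gnormPolar, star_prod, star_pow, star_sub, star_one, star_blockForm, star_star,
      blockForm_comm β _ A.1]
  have h := gnormPolar_ballInvolution hA hP hP
  rw [gnormPolar_star_self, gnormPolar_star_self, hconj, star_def, Complex.mul_conj] at h
  rw [div_mul_eq_mul_div]
  exact_mod_cast h

lemma normSq_bundleAut (A P : (Fin n → ℂ) × ℂ) :
    normSq (bundleAut β p A P).2 =
      normSq A.2 / normSq (gnormPolar β p P.1 (star A.1)) * normSq P.2 := by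
  simp only [bundleAut, map_div₀, map_mul]
  ring

lemma bundleAut_mem_circBundle {A P : (Fin n → ℂ) × ℂ} (hA : A ∈ circBundle β p)
    (hP : P ∈ circBundle β p) : bundleAut β p A P ∈ circBundle β p :=
  ⟨ballInvolution_mem hA.1 hP.1, by rw [gnorm_bundleAut hA hP.1, normSq_bundleAut, hP.2]⟩

lemma bundleAut_mem_discBundle {A P : (Fin n → ℂ) × ℂ} (hA : A ∈ circBundle β p)
    (hP : P ∈ discBundle β p) : bundleAut β p A P ∈ discBundle β p := by
  refine ⟨ballInvolution_mem hA.1 hP.1, ?_⟩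
  rw [gnorm_bundleAut hA hP.1, normSq_bundleAut]
  exact mul_lt_mul_of_pos_left hP.2 (div_pos (normSq_pos.2 (snd_ne_zero_of_mem_circBundle hA))
    (normSq_pos.2 (gnormPolar_star_ne_zero hP.1 hA.1)))

lemma gnormPolar_ballInvolution_center {A : (Fin n → ℂ) × ℂ} {z : Fin n → ℂ}
    (hA : A ∈ circBundle β p) (hz : z ∈ prodBalls β) :
    gnormPolar β p (ballInvolution β A.1 z) (star A.1) =
      normSq A.2 / gnormPolar β p z (star A.1) := by
  simpa using gnormPolar_ballInvolution hA hz (zero_mem_prodBalls β)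

lemma bundleAut_conjSnd_bundleAut {A P : (Fin n → ℂ) × ℂ} (hA : A ∈ circBundle β p)
    (hP : P.1 ∈ prodBalls β) : bundleAut β p (conjSnd A) (bundleAut β p A P) = P := by
  refine Prod.ext (ballInvolution_ballInvolution hA.1 hP) ?_
  have hPA := gnormPolar_star_ne_zero (p := p) hP hA.1
  have hA2 := snd_ne_zero_of_mem_circBundle hA
  have hA2' : (starRingEnd ℂ) A.2 ≠ 0 := (map_ne_zero _).2 hA2
  simp only [bundleAut, conjSnd, gnormPolar_ballInvolution_center hA hP, star_def,
    ← Complex.mul_conj]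
  field_simp

lemma bundleAut_bundleAut_conjSnd {A P : (Fin n → ℂ) × ℂ} (hA : A ∈ circBundle β p)
    (hP : P.1 ∈ prodBalls β) : bundleAut β p A (bundleAut β p (conjSnd A) P) = P := by
  simpa using bundleAut_conjSnd_bundleAut (conjSnd_mem_circBundle hA) hP

lemma bundleAut_conjSnd_self {A : (Fin n → ℂ) × ℂ} (hA : A ∈ circBundle β p) :
    bundleAut β p (conjSnd A) A = basePoint := by
  simpa using bundleAut_conjSnd_bundleAut (P := basePoint) hA (zero_mem_prodBalls β)

lemma differentiableAt_bundleAut {A P : (Fin n → ℂ) × ℂ} (hA : A ∈ circBundle β p)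
    (hP : P.1 ∈ prodBalls β) : DifferentiableAt ℂ (bundleAut β p A) P := by
  unfold bundleAut ballInvolution
  refine DifferentiableAt.prodMk (differentiableAt_pi.2 fun j => ?_) ?_
  · exact differentiableAt_fun_div (by fun_prop) (by fun_prop)
      (one_sub_blockForm_star_ne_zero hP hA.1 _)
  · exact differentiableAt_fun_div (by fun_prop) (by fun_prop) (gnormPolar_star_ne_zero hP hA.1)

end Automorphisms

section WeightedForm

variable {n l : ℕ} (β : Fin n → Fin l) (p : Fin l → ℕ)

/-- The bilinear form `∑ᵢ pᵢ ⟨z, w⟩ᵢ`, which is minus the linear part of `gnormPolar β p`. -/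
def weightedForm : (Fin n → ℂ) →L[ℂ] (Fin n → ℂ) →L[ℂ] ℂ := ∑ i, (p i : ℂ) • blockForm β i

lemma weightedForm_eq_sum_blockForm (z w : Fin n → ℂ) :
    weightedForm β p z w = ∑ i, p i * blockForm β i z w := by
  simp [weightedForm]

lemma weightedForm_apply (z w : Fin n → ℂ) :
    weightedForm β p z w = ∑ j, p (β j) * (z j * w j) := by
  simp only [weightedForm_eq_sum_blockForm, blockForm_apply, Finset.mul_sum]
  rw [← Finset.sum_fiberwise (s := Finset.univ) (g := β)]
  refine Finset.sum_congr rfl fun i _ => Finset.sum_congr rfl fun j hj => ?_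
  rw [(Finset.mem_filter.1 hj).2]

lemma weightedForm_comm (z w : Fin n → ℂ) : weightedForm β p z w = weightedForm β p w z := by
  simp [weightedForm_apply, mul_comm (z _)]

lemma star_weightedForm (z w : Fin n → ℂ) :
    star (weightedForm β p z w) = weightedForm β p (star z) (star w) := by
  simp [weightedForm_apply]

lemma weightedForm_single_right (z : Fin n → ℂ) (m : Fin n) (t : ℂ) :
    weightedForm β p z (Pi.single m t) = p (β m) * (z m * t) := by
  rw [weightedForm_apply, Finset.sum_eq_single m]
  · simp
  · intro j _ hj
    simp [Pi.single_eq_of_ne hj]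
  · simp

variable {β p}

lemma eq_zero_of_forall_weightedForm_eq_zero (hp : ∀ i, 0 < p i) {z : Fin n → ℂ}
    (h : ∀ w, weightedForm β p z w = 0) : z = 0 := by
  funext m
  simpa [weightedForm_single_right, (hp (β m)).ne'] using h (Pi.single m 1)

lemma eq_zero_of_weightedForm_star_self (hp : ∀ i, 0 < p i) {z : Fin n → ℂ}
    (h : weightedForm β p z (star z) = 0) : z = 0 := by
  have hsum : ∑ j, (p (β j) : ℝ) * normSq (z j) = 0 := by
    rw [weightedForm_apply] at h
    simp only [Pi.star_apply, star_def, mul_conj] at h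
    exact_mod_cast h
  rw [Finset.sum_eq_zero_iff_of_nonneg fun j _ => mul_nonneg (Nat.cast_nonneg _)
    (normSq_nonneg _)] at hsum
  funext j
  simpa [(hp (β j)).ne'] using hsum j (Finset.mem_univ j)

lemma hasDerivAt_gnormPolar_left {x : ℂ → Fin n → ℂ} {x' b : Fin n → ℂ} {t : ℂ}
    (hx : HasDerivAt x x' t) (h1 : ∀ i, 1 - blockForm β i (x t) b ≠ 0) :
    HasDerivAt (fun s => gnormPolar β p (x s) b)
      (gnormPolar β p (x t) b *
        -∑ i, p i * (blockForm β i x' b / (1 - blockForm β i (x t) b))) t := by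
  have hfactor (i : Fin l) : HasDerivAt (fun s => (1 - blockForm β i (x s) b) ^ p i)
      (p i * (1 - blockForm β i (x t) b) ^ (p i - 1) * -blockForm β i x' b) t :=
    ((((blockForm β i).flip b).hasFDerivAt.comp_hasDerivAt t hx).const_sub 1).fun_pow (p i)
  have hprod := HasDerivAt.fun_finsetProd (u := Finset.univ) fun i _ => hfactor i
  refine hprod.congr_deriv (Eq.symm ?_)
  rw [gnormPolar, ← Finset.sum_neg_distrib, Finset.mul_sum]
  refine Finset.sum_congr rfl fun i _ => ?_
  rw [← Finset.mul_prod_erase Finset.univ _ (Finset.mem_univ i), smul_eq_mul]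
  have := h1 i
  obtain hpi | ⟨k, hk⟩ : p i = 0 ∨ ∃ k, p i = k + 1 := by cases p i <;> simp
  · simp [hpi]
  · rw [hk, Nat.add_sub_cancel, pow_succ]
    field_simp

lemma hasDerivAt_gnormPolar_right {x : ℂ → Fin n → ℂ} {x' : Fin n → ℂ} {t : ℂ}
    (hx : HasDerivAt x x' t) (h0 : x t = 0) (z : Fin n → ℂ) :
    HasDerivAt (fun s => gnormPolar β p z (x s)) (-weightedForm β p z x') t := by
  have h := hasDerivAt_gnormPolar_left (β := β) (p := p) (b := z) hx (by simp [h0])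
  simp only [gnormPolar_comm β p _ z] at h
  simpa [h0, weightedForm_eq_sum_blockForm, blockForm_comm β _ z] using h

lemma weightedForm_add_sum_sq_eq_zero {x x' : ℂ → Fin n → ℂ} {x'' b : Fin n → ℂ}
    (hx : ∀ᶠ t in 𝓝 0, HasDerivAt x (x' t) t) (h0 : x 0 = 0) (hx' : HasDerivAt x' x'' 0)
    (h : ∀ᶠ t in 𝓝 0, gnormPolar β p (x t) b = 1) :
    weightedForm β p x'' b + ∑ i, p i * blockForm β i (x' 0) b ^ 2 = 0 := by
  have hne : ∀ᶠ t in 𝓝 0, ∀ i, 1 - blockForm β i (x t) b ≠ 0 := eventually_all.2 fun i => by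
    have : ContinuousAt x 0 := hx.self_of_nhds.continuousAt
    have : ContinuousAt (fun t => 1 - blockForm β i (x t) b) 0 := by fun_prop
    exact this.eventually_ne (by simp [h0])
  have hlog : ∀ᶠ t in 𝓝 0,
      ∑ i, p i * (blockForm β i (x' t) b / (1 - blockForm β i (x t) b)) = 0 := by
    filter_upwards [hx, hne, h.eventually_nhds] with t hxt hnet ht
    have h2 := (hasDerivAt_gnormPolar_left (p := p) hxt hnet).unique
      ((hasDerivAt_const t (1 : ℂ)).congr_of_eventuallyEq ht)
    rwa [ht.self_of_nhds, one_mul, neg_eq_zero] at h2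
  have hterm (i : Fin l) : HasDerivAt
      (fun t => p i * (blockForm β i (x' t) b / (1 - blockForm β i (x t) b)))
      (p i * (blockForm β i x'' b + blockForm β i (x' 0) b ^ 2)) 0 := by
    have hnum := ((blockForm β i).flip b).hasFDerivAt.comp_hasDerivAt 0 hx'
    have hden := ((blockForm β i).flip b).hasFDerivAt.comp_hasDerivAt 0 hx.self_of_nhds
    refine ((hnum.fun_div (hden.const_sub 1) (by simp [h0])).const_mul (p i : ℂ)).congr_deriv ?_
    simp [h0, sq]
  have hderiv := (HasDerivAt.fun_sum fun i (_ : i ∈ Finset.univ) => hterm i).unique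
    ((hasDerivAt_const (0 : ℂ) (0 : ℂ)).congr_of_eventuallyEq hlog)
  refine Eq.trans ?_ hderiv
  rw [weightedForm_eq_sum_blockForm, ← Finset.sum_add_distrib]
  simp only [mul_add]

end WeightedForm

section Germs

variable {n l l' : ℕ}

/-- A germ at `x` of a holomorphic map sending the circle bundle of `(β₁, p)` to that of
`(β₂, q)`. -/
structure CRGerm (β₁ : Fin n → Fin l) (p : Fin l → ℕ) (β₂ : Fin n → Fin l') (q : Fin l' → ℕ)
    (F : (Fin n → ℂ) × ℂ → (Fin n → ℂ) × ℂ) (x : (Fin n → ℂ) × ℂ) : Prop where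
  differentiableAt : ∀ᶠ P in 𝓝 x, DifferentiableAt ℂ F P
  map : ∀ᶠ P in 𝓝 x, P ∈ circBundle β₁ p → F P ∈ circBundle β₂ q
  mem : x ∈ circBundle β₁ p

/-- A pair of germs of holomorphic maps fixing the base point whose product preserves the Segre
varieties: the complexification of a `CRGerm`, with `G` in the role of the conjugate of `F`. -/
structure SegrePair (β₁ : Fin n → Fin l) (p : Fin l → ℕ) (β₂ : Fin n → Fin l') (q : Fin l' → ℕ)
    (F G : (Fin n → ℂ) × ℂ → (Fin n → ℂ) × ℂ) : Prop where
  differentiableAt_left : ∀ᶠ P in 𝓝 basePoint, DifferentiableAt ℂ F P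
  differentiableAt_right : ∀ᶠ P in 𝓝 basePoint, DifferentiableAt ℂ G P
  map_left : F basePoint = basePoint
  map_right : G basePoint = basePoint
  map_segre : ∀ᶠ R in 𝓝 (basePoint, basePoint),
    Segre β₁ p R.1 R.2 → Segre β₂ q (F R.1) (G R.2)

/-- The conjugate map `P ↦ conj (F (conj P))`. -/
def conjMap (F : (Fin n → ℂ) × ℂ → (Fin n → ℂ) × ℂ) (P : (Fin n → ℂ) × ℂ) : (Fin n → ℂ) × ℂ :=
  star (F (star P))

/-- The first component of the derivative of `F` at the base point along `ℂⁿ`. -/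
def horizMap (F : (Fin n → ℂ) × ℂ → (Fin n → ℂ) × ℂ) : (Fin n → ℂ) →L[ℂ] (Fin n → ℂ) :=
  ContinuousLinearMap.fst ℂ _ _ ∘L fderiv ℂ F basePoint ∘L ContinuousLinearMap.inl ℂ _ _

/-- The first component of the derivative of `F` at the base point along the fibre. -/
def vertVec (F : (Fin n → ℂ) × ℂ → (Fin n → ℂ) × ℂ) : Fin n → ℂ :=
  (fderiv ℂ F basePoint (0, 1)).1

/-- The second component of the derivative of `F` at the base point along the fibre. -/
def vertCoeff (F : (Fin n → ℂ) × ℂ → (Fin n → ℂ) × ℂ) : ℂ := (fderiv ℂ F basePoint (0, 1)).2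

variable {β₁ : Fin n → Fin l} {p : Fin l → ℕ} {β₂ : Fin n → Fin l'} {q : Fin l' → ℕ}
  {F G : (Fin n → ℂ) × ℂ → (Fin n → ℂ) × ℂ}

lemma hasDerivAt_fst {E E' : Type*} [NormedAddCommGroup E] [NormedSpace ℂ E]
    [NormedAddCommGroup E'] [NormedSpace ℂ E'] {f : ℂ → E × E'} {f' : E × E'} {t : ℂ}
    (h : HasDerivAt f f' t) : HasDerivAt (fun s => (f s).1) f'.1 t :=
  HasFDerivAt.comp_hasDerivAt (l' := ContinuousLinearMap.fst ℂ E E') t hasFDerivAt_fst h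

lemma hasDerivAt_snd {E E' : Type*} [NormedAddCommGroup E] [NormedSpace ℂ E]
    [NormedAddCommGroup E'] [NormedSpace ℂ E'] {f : ℂ → E × E'} {f' : E × E'} {t : ℂ}
    (h : HasDerivAt f f' t) : HasDerivAt (fun s => (f s).2) f'.2 t :=
  HasFDerivAt.comp_hasDerivAt (l' := ContinuousLinearMap.snd ℂ E E') t hasFDerivAt_snd h

lemma hasDerivAt_smul_vec {E : Type*} [NormedAddCommGroup E] [NormedSpace ℂ E] (v : E) :
    HasDerivAt (fun t : ℂ => t • v) v 0 := by
  simpa using (hasDerivAt_id (0 : ℂ)).smul_const v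

lemma eventually_conjMap {s : (Fin n → ℂ) × ℂ → Prop} (h : ∀ᶠ P in 𝓝 basePoint, s P) :
    ∀ᶠ P in 𝓝 basePoint, s (star P) :=
  (Continuous.tendsto' continuous_star _ _ star_basePoint).eventually h

namespace CRGerm

lemma segrePair (h : CRGerm β₁ p β₂ q F basePoint) (h1 : F basePoint = basePoint) :
    SegrePair β₁ p β₂ q F (conjMap F) := by
  have hconj : ∀ᶠ P in 𝓝 basePoint, DifferentiableAt ℂ (conjMap F) P := by
    filter_upwards [eventually_conjMap h.differentiableAt] with P hP
    have hstar := hP.star_star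
    rwa [star_star] at hstar
  refine ⟨h.differentiableAt, hconj, h1, by simp [conjMap, h1], ?_⟩
  have hzero := eventually_eq_zero_of_circBundle (β := β₁) (p := p) (H := fun R =>
    (F R.1).2 * (conjMap F R.2).2 - gnormPolar β₂ q (F R.1).1 (conjMap F R.2).1) ?_ ?_
  · filter_upwards [hzero] with R hR hseg using sub_eq_zero.1 (hR hseg)
  · filter_upwards [continuousAt_fst.eventually h.differentiableAt,
      continuousAt_snd.eventually hconj] with R hF hG
    have hF' := hF.comp R differentiableAt_fst
    have hG' := hG.comp R differentiableAt_snd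
    exact (hF'.snd.fun_mul hG'.snd).fun_sub (differentiableAt_gnormPolar β₂ q hF'.fst hG'.fst)
  · filter_upwards [h.map] with P hP hPmem
    simp only [conjMap, star_star]
    exact sub_eq_zero.2 (segre_star_self_iff.2 (hP hPmem).2)

end CRGerm

namespace SegrePair

protected lemma symm (h : SegrePair β₁ p β₂ q F G) : SegrePair β₁ p β₂ q G F where
  differentiableAt_left := h.differentiableAt_right
  differentiableAt_right := h.differentiableAt_left
  map_left := h.map_right
  map_right := h.map_left
  map_segre := by
    have hswap := continuous_swap.tendsto ((basePoint : (Fin n → ℂ) × ℂ), basePoint (n := n))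
    filter_upwards [hswap.eventually h.map_segre] with R hR hseg using (hR hseg.symm).symm

lemma hasFDerivAt (h : SegrePair β₁ p β₂ q F G) :
    HasFDerivAt F (fderiv ℂ F basePoint) basePoint :=
  h.differentiableAt_left.self_of_nhds.hasFDerivAt

lemma hasDerivAt_comp (h : SegrePair β₁ p β₂ q F G) {x : ℂ → (Fin n → ℂ) × ℂ}
    {x' : (Fin n → ℂ) × ℂ} (hx : HasDerivAt x x' 0) (h0 : x 0 = basePoint) :
    HasDerivAt (fun t => F (x t)) (fderiv ℂ F basePoint x') 0 :=
  HasFDerivAt.comp_hasDerivAt 0 (h0 ▸ h.hasFDerivAt) hx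

lemma eventually_snd_eq_one (h : SegrePair β₁ p β₂ q F G) : ∀ᶠ z in 𝓝 0, (F (z, 1)).2 = 1 := by
  have ht : Tendsto (fun z : Fin n → ℂ => ((z, (1 : ℂ)), (basePoint : (Fin n → ℂ) × ℂ)))
      (𝓝 0) (𝓝 (basePoint, basePoint)) :=
    Continuous.tendsto' (by fun_prop) _ _ rfl
  filter_upwards [ht.eventually h.map_segre] with z hz
  simpa [Segre, h.map_right] using hz (by simp [Segre])

lemma eventually_snd_eq_gnormPolar (h : SegrePair β₁ p β₂ q F G) :
    ∀ᶠ T in 𝓝 ((0, 0) : (Fin n → ℂ) × (Fin n → ℂ)), (G (T.2, gnormPolar β₁ p T.1 T.2)).2 =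
      gnormPolar β₂ q (F (T.1, 1)).1 (G (T.2, gnormPolar β₁ p T.1 T.2)).1 := by
  have hcont : Continuous fun T : (Fin n → ℂ) × (Fin n → ℂ) => gnormPolar β₁ p T.1 T.2 :=
    Differentiable.continuous (𝕜 := ℂ) fun T => by fun_prop
  have ht : Tendsto (fun T : (Fin n → ℂ) × (Fin n → ℂ) =>
      ((T.1, (1 : ℂ)), (T.2, gnormPolar β₁ p T.1 T.2))) (𝓝 (0, 0)) (𝓝 (basePoint, basePoint)) :=
    Continuous.tendsto' (by fun_prop) _ _ (by simp [basePoint])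
  have hfst : Tendsto Prod.fst (𝓝 ((0, 0) : (Fin n → ℂ) × (Fin n → ℂ))) (𝓝 0) :=
    continuousAt_fst
  filter_upwards [ht.eventually h.map_segre, hfst.eventually h.eventually_snd_eq_one] with T hT hT1
  simpa [Segre, hT1] using hT (by simp [Segre])

lemma fderiv_apply (h : SegrePair β₁ p β₂ q F G) (v : Fin n → ℂ) (t : ℂ) :
    fderiv ℂ F basePoint (v, t) = (horizMap F v + t • vertVec F, t * vertCoeff F) := by
  have hcurve : HasDerivAt (fun t : ℂ => (t • v, (1 : ℂ))) (v, 0) 0 :=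
    (hasDerivAt_smul_vec v).prodMk (hasDerivAt_const _ _)
  have ht : Tendsto (fun t : ℂ => t • v) (𝓝 0) (𝓝 0) :=
    Continuous.tendsto' (by fun_prop) _ _ (by simp)
  have hsnd : (fderiv ℂ F basePoint (v, 0)).2 = 0 :=
    (hasDerivAt_snd (h.hasDerivAt_comp hcurve (by simp [basePoint]))).unique
      ((hasDerivAt_const _ 1).congr_of_eventuallyEq (ht.eventually h.eventually_snd_eq_one))
  have hsplit : ((v, t) : (Fin n → ℂ) × ℂ) = (v, 0) + t • (0, 1) := by ext <;> simp
  rw [hsplit, map_add, map_smul]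
  ext1
  · simp [horizMap, vertVec]
  · simp [hsnd, vertCoeff]

lemma eventually_weightedForm_fst (h : SegrePair β₁ p β₂ q F G) : ∀ᶠ z in 𝓝 0, ∀ w,
    weightedForm β₂ q (F (z, 1)).1 (horizMap G w) = weightedForm β₁ p z w *
      (vertCoeff G + weightedForm β₂ q (F (z, 1)).1 (vertVec G)) := by
  filter_upwards [h.eventually_snd_eq_gnormPolar.curry_nhds] with z hz w
  have hcurve := (hasDerivAt_smul_vec w).prodMk
    (hasDerivAt_gnormPolar_right (β := β₁) (p := p) (hasDerivAt_smul_vec w) (by simp) z)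
  have hG := h.symm.hasDerivAt_comp hcurve (by simp [basePoint])
  rw [h.symm.fderiv_apply] at hG
  have hG0 : (G (0, 1)).1 = 0 := congrArg Prod.fst h.map_right
  have hρ := hasDerivAt_gnormPolar_right (β := β₂) (p := q) (hasDerivAt_fst hG) (by simp [hG0])
    (F (z, 1)).1
  have ht : Tendsto (fun t : ℂ => t • w) (𝓝 0) (𝓝 0) :=
    Continuous.tendsto' (by fun_prop) _ _ (by simp)
  have hunique := (hasDerivAt_snd hG).unique (hρ.congr_of_eventuallyEq (ht.eventually hz))
  simp only [map_add, map_smul, smul_eq_mul] at hunique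
  linear_combination hunique

lemma weightedForm_horizMap (h : SegrePair β₁ p β₂ q F G) (z w : Fin n → ℂ) :
    weightedForm β₂ q (horizMap F z) (horizMap G w) =
      weightedForm β₁ p z w * vertCoeff G := by
  have hcurve : HasDerivAt (fun t : ℂ => (t • z, (1 : ℂ))) (z, 0) 0 :=
    (hasDerivAt_smul_vec z).prodMk (hasDerivAt_const _ _)
  have hF := hasDerivAt_fst (h.hasDerivAt_comp hcurve (by simp [basePoint]))
  rw [h.fderiv_apply] at hF
  simp only [zero_smul, add_zero] at hF
  have hleft := ((weightedForm β₂ q).flip (horizMap G w)).hasFDerivAt.comp_hasDerivAt 0 hF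
  have hright := (((weightedForm β₁ p).flip w).hasFDerivAt.comp_hasDerivAt 0
    (hasDerivAt_smul_vec z)).fun_mul ((((weightedForm β₂ q).flip
      (vertVec G)).hasFDerivAt.comp_hasDerivAt 0 hF).const_add (vertCoeff G))
  have ht : Tendsto (fun t : ℂ => t • z) (𝓝 0) (𝓝 0) :=
    Continuous.tendsto' (by fun_prop) _ _ (by simp)
  have hunique := hleft.unique (hright.congr_of_eventuallyEq (by
    filter_upwards [ht.eventually h.eventually_weightedForm_fst] with t ht using ht w))
  have hF0 : F (0, 1) = basePoint := h.map_left
  simpa [hF0] using hunique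

end SegrePair

end Germs

section LevelCurve

variable {n l : ℕ} {β : Fin n → Fin l} {p : Fin l → ℕ}

/-- The primitive of `ε ↦ exp (-t ε)` vanishing at `0`. -/
def expPrim (t ε : ℂ) : ℂ := if t = 0 then ε else (1 - exp (-t * ε)) / t

lemma hasDerivAt_exp_neg_mul (t ε : ℂ) :
    HasDerivAt (fun e => exp (-t * e)) (-t * exp (-t * ε)) ε := by
  simpa [mul_comm] using ((hasDerivAt_id ε).const_mul (-t)).cexp

lemma hasDerivAt_expPrim (t ε : ℂ) : HasDerivAt (expPrim t) (exp (-t * ε)) ε := by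
  unfold expPrim
  by_cases ht : t = 0
  · simp only [ht, if_true, neg_zero, zero_mul, exp_zero]
    exact hasDerivAt_id ε
  · simp only [ht, if_false]
    refine (((hasDerivAt_exp_neg_mul t ε).const_sub 1).div_const t).congr_deriv ?_
    field_simp

lemma one_sub_expPrim_mul (t ε : ℂ) : 1 - expPrim t ε * t = exp (-t * ε) := by
  unfold expPrim
  split_ifs with ht
  · simp [ht]
  · field_simp
    ring

/-- The vector `z` with its `i`-th block multiplied by `a i`. -/
def blockScale (β : Fin n → Fin l) (a : Fin l → ℂ) (z : Fin n → ℂ) : Fin n → ℂ :=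
  fun m => a (β m) * z m

lemma blockForm_blockScale (i : Fin l) (a : Fin l → ℂ) (z w : Fin n → ℂ) :
    blockForm β i (blockScale β a z) w = a i * blockForm β i z w := by
  simp only [blockForm_apply, Finset.mul_sum]
  refine Finset.sum_congr rfl fun j hj => ?_
  rw [blockScale, (Finset.mem_filter.1 hj).2, mul_assoc]

lemma hasDerivAt_blockScale {a : ℂ → Fin l → ℂ} {a' : Fin l → ℂ} {t : ℂ}
    (ha : ∀ i, HasDerivAt (fun s => a s i) (a' i) t) (z : Fin n → ℂ) :
    HasDerivAt (fun s => blockScale β (a s) z) (blockScale β a' z) t :=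
  hasDerivAt_pi.2 fun m => (ha (β m)).mul_const (z m)

/-- When `weightedForm β p z w = 0`, a curve through `0` with velocity `z` in the hypersurface
`gnormPolar β p · w = 1`. -/
def levelCurve (β : Fin n → Fin l) (z w : Fin n → ℂ) (ε : ℂ) : Fin n → ℂ :=
  blockScale β (fun i => expPrim (blockForm β i z w) ε) z

@[simp] lemma levelCurve_zero (z w : Fin n → ℂ) : levelCurve β z w 0 = 0 := by
  funext m
  simp [levelCurve, blockScale, expPrim]

lemma hasDerivAt_levelCurve (z w : Fin n → ℂ) (ε : ℂ) : HasDerivAt (levelCurve β z w)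
    (blockScale β (fun i => exp (-blockForm β i z w * ε)) z) ε :=
  hasDerivAt_blockScale (fun _ => hasDerivAt_expPrim _ ε) z

lemma gnormPolar_levelCurve {z w : Fin n → ℂ} (h : weightedForm β p z w = 0) (ε : ℂ) :
    gnormPolar β p (levelCurve β z w ε) w = 1 := by
  simp only [gnormPolar, levelCurve, blockForm_blockScale, one_sub_expPrim_mul, ← exp_nat_mul]
  have hsum : ∑ i, (p i : ℂ) * (-blockForm β i z w * ε) = -ε * weightedForm β p z w := by
    rw [weightedForm_eq_sum_blockForm, Finset.mul_sum]
    exact Finset.sum_congr rfl fun i _ => by ring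
  rw [← exp_sum, hsum, h, mul_zero, exp_zero]

end LevelCurve

section SecondOrder

variable {n l l' : ℕ} {β₁ : Fin n → Fin l} {p : Fin l → ℕ} {β₂ : Fin n → Fin l'} {q : Fin l' → ℕ}
  {F G : (Fin n → ℂ) × ℂ → (Fin n → ℂ) × ℂ}

/-- The linear form `λ` such that `z ↦ (F (z, 1)).1` is the linear fractional map
`(1 - λ z)⁻¹ • horizMap F z` for a `SegrePair F G`. -/
def poleForm (β₂ : Fin n → Fin l') (q : Fin l' → ℕ) (F G : (Fin n → ℂ) × ℂ → (Fin n → ℂ) × ℂ) :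
    (Fin n → ℂ) →L[ℂ] ℂ :=
  (vertCoeff G)⁻¹ • (weightedForm β₂ q).flip (vertVec G) ∘L horizMap F

lemma poleForm_apply (z : Fin n → ℂ) : poleForm β₂ q F G z =
    (vertCoeff G)⁻¹ * weightedForm β₂ q (horizMap F z) (vertVec G) := rfl

namespace SegrePair

lemma horizMap_injective (h : SegrePair β₁ p β₂ q F G) (hp : ∀ i, 0 < p i)
    (hd : vertCoeff G ≠ 0) : Function.Injective (horizMap F) := by
  rw [injective_iff_map_eq_zero]
  intro v hv
  refine eq_zero_of_forall_weightedForm_eq_zero (β := β₁) hp fun w => ?_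
  simpa [hv, hd] using (h.weightedForm_horizMap v w).symm

lemma horizMap_surjective (h : SegrePair β₁ p β₂ q F G) (hp : ∀ i, 0 < p i)
    (hd : vertCoeff G ≠ 0) : Function.Surjective (horizMap F) :=
  LinearMap.injective_iff_surjective.1 (h.horizMap_injective hp hd)

lemma vertCoeff_eq [NeZero n] (h : SegrePair β₁ p β₂ q F G) (hp : ∀ i, 0 < p i) :
    vertCoeff F = vertCoeff G := by
  have hF := h.weightedForm_horizMap (Pi.single 0 1) (Pi.single 0 1)
  have hG := h.symm.weightedForm_horizMap (Pi.single 0 1) (Pi.single 0 1)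
  rw [weightedForm_comm, hG] at hF
  simpa [weightedForm_single_right, (hp (β₁ 0)).ne'] using hF

lemma eventually_fst_eq [NeZero n] (h : SegrePair β₁ p β₂ q F G) (hp : ∀ i, 0 < p i)
    (hq : ∀ i, 0 < q i) (hd : vertCoeff F ≠ 0) : ∀ᶠ z in 𝓝 0,
      1 - poleForm β₂ q F G z ≠ 0 ∧ (F (z, 1)).1 = (1 - poleForm β₂ q F G z)⁻¹ • horizMap F z := by
  have hd' : vertCoeff G ≠ 0 := h.vertCoeff_eq hp ▸ hd
  filter_upwards [h.eventually_weightedForm_fst] with z hz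
  set μ : ℂ := 1 + (vertCoeff G)⁻¹ * weightedForm β₂ q (F (z, 1)).1 (vertVec G) with hμ
  have hF : (F (z, 1)).1 = μ • horizMap F z := by
    refine sub_eq_zero.1 (eq_zero_of_forall_weightedForm_eq_zero (β := β₂) hq fun w => ?_)
    obtain ⟨w, rfl⟩ := h.symm.horizMap_surjective hp hd w
    rw [map_sub, map_smul, sub_apply, smul_apply, hz,
      h.weightedForm_horizMap, hμ, smul_eq_mul]
    field_simp
    ring
  have hμ1 : μ * (1 - poleForm β₂ q F G z) = 1 := by
    rw [hF, map_smul, smul_apply, smul_eq_mul] at hμ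
    rw [poleForm_apply]
    linear_combination hμ
  exact ⟨right_ne_zero_of_mul_eq_one hμ1, by rw [hF, eq_inv_of_mul_eq_one_left hμ1]⟩

lemma eventually_gnormPolar_eq_one (h : SegrePair β₁ p β₂ q F G) :
    ∀ᶠ T in 𝓝 ((0, 0) : (Fin n → ℂ) × (Fin n → ℂ)), gnormPolar β₁ p T.2 T.1 = 1 →
      gnormPolar β₂ q (F (T.2, 1)).1 (G (T.1, 1)).1 = 1 := by
  have ht : Tendsto (fun T : (Fin n → ℂ) × (Fin n → ℂ) => ((T.2, (1 : ℂ)), (T.1, (1 : ℂ))))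
      (𝓝 (0, 0)) (𝓝 (basePoint, basePoint)) :=
    Continuous.tendsto' (by fun_prop) _ _ rfl
  have hfst : Tendsto Prod.fst (𝓝 ((0, 0) : (Fin n → ℂ) × (Fin n → ℂ))) (𝓝 0) := continuousAt_fst
  have hsnd : Tendsto Prod.snd (𝓝 ((0, 0) : (Fin n → ℂ) × (Fin n → ℂ))) (𝓝 0) := continuousAt_snd
  filter_upwards [ht.eventually h.map_segre, hsnd.eventually h.eventually_snd_eq_one,
    hfst.eventually h.symm.eventually_snd_eq_one] with T hT hF hG hρ
  simpa [Segre, hF, hG] using Eq.symm (hT (by simp [Segre, hρ]))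

end SegrePair

lemma hasDerivAt_linearFractional {A : (Fin n → ℂ) →L[ℂ] (Fin n → ℂ)} {κ : (Fin n → ℂ) →L[ℂ] ℂ}
    {x : ℂ → Fin n → ℂ} {x' : Fin n → ℂ} {t : ℂ} (hx : HasDerivAt x x' t) (h : 1 - κ (x t) ≠ 0) :
    HasDerivAt (fun s => (1 - κ (x s))⁻¹ • A (x s))
      ((1 - κ (x t))⁻¹ • A x' + (κ x' / (1 - κ (x t)) ^ 2) • A (x t)) t := by
  have hκ := (κ.hasFDerivAt.comp_hasDerivAt t hx).const_sub 1
  refine ((hκ.fun_inv h).smul (A.hasFDerivAt.comp_hasDerivAt t hx)).congr_deriv ?_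
  simp

lemma hasDerivAt_deriv_linearFractional {A : (Fin n → ℂ) →L[ℂ] (Fin n → ℂ)}
    {κ : (Fin n → ℂ) →L[ℂ] ℂ} {x x' : ℂ → Fin n → ℂ} {x'' : Fin n → ℂ}
    (hx : HasDerivAt x (x' 0) 0) (h0 : x 0 = 0) (hx' : HasDerivAt x' x'' 0) :
    HasDerivAt (fun s => (1 - κ (x s))⁻¹ • A (x' s) + (κ (x' s) / (1 - κ (x s)) ^ 2) • A (x s))
      (A x'' + (2 * κ (x' 0)) • A (x' 0)) 0 := by
  have hκ := (κ.hasFDerivAt.comp_hasDerivAt 0 hx).const_sub 1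
  have hinv := (hκ.fun_inv (by simp [h0])).smul (A.hasFDerivAt.comp_hasDerivAt 0 hx')
  have hquot := ((κ.hasFDerivAt.comp_hasDerivAt 0 hx').fun_div (hκ.fun_pow 2) (by simp [h0])).smul
    (A.hasFDerivAt.comp_hasDerivAt 0 hx)
  refine (hinv.add hquot).congr_deriv ?_
  simp only [Function.comp_apply, h0, map_zero, sub_zero, inv_one, one_pow, div_one, one_smul,
    smul_zero, add_zero, neg_neg, add_assoc, two_mul, add_smul]

namespace SegrePair

lemma eventually_sum_sq_horizMap [NeZero n] (h : SegrePair β₁ p β₂ q F G) (hp : ∀ i, 0 < p i)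
    (hq : ∀ i, 0 < q i) (hd : vertCoeff F ≠ 0) :
    ∀ᶠ w in 𝓝 0, ∀ z, weightedForm β₁ p z w = 0 →
      ∑ i, q i * blockForm β₂ i (horizMap F z) (horizMap G w) ^ 2 =
        vertCoeff F * (1 - poleForm β₂ q G F w) * ∑ i, p i * blockForm β₁ i z w ^ 2 := by
  have hdeq := h.vertCoeff_eq hp
  filter_upwards [h.eventually_gnormPolar_eq_one.curry_nhds,
    h.symm.eventually_fst_eq hp hq (hdeq ▸ hd)] with w hw ⟨hw0, hGw⟩ z hzw
  set c := levelCurve β₁ z w with hc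
  set c' := fun ε : ℂ => blockScale β₁ (fun i => exp (-blockForm β₁ i z w * ε)) z with hc'
  have hc'0 : c' 0 = z := by
    funext j
    simp [hc', blockScale]
  have hcderiv (ε : ℂ) : HasDerivAt c (c' ε) ε := hasDerivAt_levelCurve z w ε
  have hcc : HasDerivAt c' (blockScale β₁ (fun i => -blockForm β₁ i z w) z) 0 :=
    (hasDerivAt_blockScale (fun i => hasDerivAt_exp_neg_mul _ 0) z).congr_deriv (by simp)
  have htend : Tendsto c (𝓝 0) (𝓝 0) := by
    simpa [hc] using (hcderiv 0).continuousAt.tendsto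
  have hfst := htend.eventually (h.eventually_fst_eq hp hq hd)
  have hsecond := weightedForm_add_sum_sq_eq_zero (β := β₂) (p := q) (b := (G (w, 1)).1)
    (hfst.mono fun ε hε => hasDerivAt_linearFractional (A := horizMap F) (hcderiv ε) hε.1)
    (by simp [hc]) (hasDerivAt_deriv_linearFractional (hcderiv 0) (by simp [hc]) hcc)
    (by filter_upwards [htend.eventually hw, hfst] with ε hε hFε
        rw [← hFε.2]
        exact hε (gnormPolar_levelCurve hzw ε))
  have hKc : weightedForm β₁ p (blockScale β₁ (fun i => -blockForm β₁ i z w) z) w =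
      -∑ i, p i * blockForm β₁ i z w ^ 2 := by
    simp only [weightedForm_eq_sum_blockForm, blockForm_blockScale, ← Finset.sum_neg_distrib]
    exact Finset.sum_congr rfl fun i _ => by ring
  simp only [hGw, hc, hc'0, levelCurve_zero, map_zero, sub_zero, inv_one, one_smul, one_pow,
    div_one, smul_zero, add_zero, map_add, map_smul, add_apply, smul_apply, smul_eq_mul,
    h.weightedForm_horizMap, hKc, hzw, zero_mul, mul_zero, mul_pow, mul_left_comm _ (_ ^ 2),
    ← Finset.mul_sum, ← hdeq] at hsecond
  field_simp at hsecond
  linear_combination hsecond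

lemma sum_sq_horizMap [NeZero n] (h : SegrePair β₁ p β₂ q F G) (hp : ∀ i, 0 < p i)
    (hq : ∀ i, 0 < q i) (hd : vertCoeff F ≠ 0) {z w : Fin n → ℂ}
    (hzw : weightedForm β₁ p z w = 0) :
    ∑ i, q i * blockForm β₂ i (horizMap F z) (horizMap G w) ^ 2 =
        vertCoeff F * ∑ i, p i * blockForm β₁ i z w ^ 2 ∧
      poleForm β₂ q G F w * ∑ i, p i * blockForm β₁ i z w ^ 2 = 0 := by
  have htend (c : ℂ) : Tendsto (fun ε : ℂ => (c * ε) • w) (𝓝[≠] 0) (𝓝 0) :=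
    (Continuous.tendsto' (by fun_prop) _ _ (by simp)).mono_left nhdsWithin_le_nhds
  have hscaled (c : ℂ) (hc : c ≠ 0) : ∀ᶠ ε : ℂ in 𝓝[≠] 0,
      ∑ i, q i * blockForm β₂ i (horizMap F z) (horizMap G w) ^ 2 =
        vertCoeff F * (1 - c * ε * poleForm β₂ q G F w) * ∑ i, p i * blockForm β₁ i z w ^ 2 := by
    filter_upwards [(htend c).eventually (h.eventually_sum_sq_horizMap hp hq hd),
      eventually_mem_nhdsWithin] with ε hε hε0
    have hscale := hε z (by simp [hzw])
    simp only [map_smul, smul_eq_mul, mul_pow _ (blockForm _ _ _ _), mul_left_comm _ (_ ^ 2),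
      ← Finset.mul_sum] at hscale
    refine mul_left_cancel₀ (pow_ne_zero 2 (mul_ne_zero hc hε0)) ?_
    linear_combination hscale
  obtain ⟨ε, ⟨h1, h2⟩, hε⟩ := (((hscaled 1 one_ne_zero).and (hscaled 2 two_ne_zero)).and
    eventually_mem_nhdsWithin).exists
  have hpole : poleForm β₂ q G F w * ∑ i, p i * blockForm β₁ i z w ^ 2 = 0 := by
    refine mul_left_cancel₀ (mul_ne_zero hd hε) ?_
    linear_combination h2 - h1
  exact ⟨by linear_combination h1 - vertCoeff F * ε * hpole, hpole⟩

end SegrePair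

lemma blockForm_single_left (β : Fin n → Fin l) (i : Fin l) (m : Fin n) (a : ℂ)
    (w : Fin n → ℂ) : blockForm β i (Pi.single m a) w = if β m = i then a * w m else 0 := by
  rw [blockForm_apply, Finset.sum_filter, Finset.sum_eq_single m]
  · simp
  · intro j _ hj
    simp [Pi.single_eq_of_ne hj]
  · simp

lemma exists_weightedForm_eq_zero {β : Fin n → Fin l} (hp : ∀ i, 0 < p i) {m m' : Fin n}
    (hm : β m ≠ β m') {w : Fin n → ℂ} (hw : w m ≠ 0) (hw' : w m' ≠ 0) :
    ∃ z, weightedForm β p z w = 0 ∧ ∑ i, p i * blockForm β i z w ^ 2 ≠ 0 := by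
  set z : Fin n → ℂ := Pi.single m (p (β m') / w m) - Pi.single m' (p (β m) / w m') with hz
  have hb (i : Fin l) : blockForm β i z w =
      (if β m = i then (p (β m') : ℂ) else 0) - (if β m' = i then (p (β m) : ℂ) else 0) := by
    rw [hz, map_sub, sub_apply, blockForm_single_left, blockForm_single_left,
      div_mul_cancel₀ _ hw, div_mul_cancel₀ _ hw']
  refine ⟨z, ?_, ?_⟩
  · simp only [weightedForm_eq_sum_blockForm, hb, mul_sub, Finset.sum_sub_distrib, mul_ite,
      mul_zero, Finset.sum_ite_eq, Finset.mem_univ, if_true]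
    ring
  · have hsq (i : Fin l) : (p i : ℂ) * blockForm β i z w ^ 2 =
        (if β m = i then (p i : ℂ) * p (β m') ^ 2 else 0) +
          (if β m' = i then (p i : ℂ) * p (β m) ^ 2 else 0) := by
      rw [hb]
      by_cases h1 : β m = i
      · have h2 : β m' ≠ i := h1 ▸ Ne.symm hm
        simp [h1, h2]
      · split_ifs <;> simp
    simp only [hsq, Finset.sum_add_distrib, Finset.sum_ite_eq, Finset.mem_univ, if_true]
    have := hp (β m)
    have := hp (β m')
    have hpos : 0 < p (β m) * p (β m') ^ 2 + p (β m') * p (β m) ^ 2 := by positivity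
    exact_mod_cast hpos.ne'

namespace SegrePair

lemma subsingleton_target [Subsingleton (Fin l)] (h : SegrePair β₁ p β₂ q F G)
    (hp : ∀ i, 0 < p i) (hq : ∀ i, 0 < q i) (hd : vertCoeff F ≠ 0)
    (hβ₂ : Function.Surjective β₂) : Subsingleton (Fin l') := by
  refine ⟨fun j j' => by_contra fun hne => ?_⟩
  obtain ⟨m, rfl⟩ := hβ₂ j
  obtain ⟨m', rfl⟩ := hβ₂ j'
  have : NeZero n := ⟨fun h0 => (h0 ▸ m).elim0⟩
  have hd' : vertCoeff G ≠ 0 := h.vertCoeff_eq hp ▸ hd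
  obtain ⟨w, hw⟩ := h.symm.horizMap_surjective hp hd fun _ => 1
  obtain ⟨z, hz, hz2⟩ := exists_weightedForm_eq_zero (w := horizMap G w) hq hne
    (by simp [hw]) (by simp [hw])
  obtain ⟨z, rfl⟩ := h.horizMap_surjective hp hd' z
  rw [h.weightedForm_horizMap, mul_eq_zero_iff_right hd'] at hz
  refine hz2 ((h.sum_sq_horizMap hp hq hd hz).1.trans ?_)
  rw [weightedForm_eq_sum_blockForm] at hz
  have hterm (i : Fin l) : blockForm β₁ i z w = 0 := by
    rw [Fintype.sum_subsingleton _ i] at hz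
    simpa [(hp i).ne'] using hz
  simp [hterm]

lemma vertVec_eq_zero (h : SegrePair β₁ p β₂ q F G) (hp : ∀ i, 0 < p i) (hq : ∀ i, 0 < q i)
    (hd : vertCoeff F ≠ 0) {m m' : Fin n} (hm : β₁ m ≠ β₁ m') : vertVec F = 0 := by
  have : NeZero n := ⟨fun h0 => (h0 ▸ m).elim0⟩
  have hne (w : Fin n → ℂ) (hw : w m ≠ 0) (hw' : w m' ≠ 0) : poleForm β₂ q G F w = 0 := by
    obtain ⟨z, hz1, hz2⟩ := exists_weightedForm_eq_zero hp hm hw hw'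
    exact (mul_eq_zero.1 (h.sum_sq_horizMap hp hq hd hz1).2).resolve_right hz2
  have hpole (w : Fin n → ℂ) : poleForm β₂ q G F w = 0 := by
    obtain ⟨κ, hκ⟩ := ({-w m, -w m'} : Finset ℂ).exists_notMem
    simp only [Finset.mem_insert, Finset.mem_singleton, not_or] at hκ
    have hshift := hne (w + κ • fun _ => 1)
      (by simpa [add_eq_zero_iff_eq_neg', eq_comm] using hκ.1)
      (by simpa [add_eq_zero_iff_eq_neg', eq_comm] using hκ.2)
    simpa [hne (fun _ => 1) one_ne_zero one_ne_zero] using hshift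
  refine eq_zero_of_forall_weightedForm_eq_zero (β := β₂) hq fun w => ?_
  obtain ⟨w, rfl⟩ := h.symm.horizMap_surjective hp hd w
  rw [weightedForm_comm]
  simpa [poleForm_apply, hd] using hpole w

end SegrePair

end SecondOrder

section Moving

variable {n l l' : ℕ} {β β₁ : Fin n → Fin l} {p : Fin l → ℕ} {β₂ : Fin n → Fin l'}
  {q : Fin l' → ℕ} {F : (Fin n → ℂ) × ℂ → (Fin n → ℂ) × ℂ} {x : (Fin n → ℂ) × ℂ}

lemma fderiv_conjMap (h : ∀ᶠ P in 𝓝 basePoint, DifferentiableAt ℂ F P) (u : (Fin n → ℂ) × ℂ) :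
    fderiv ℂ (conjMap F) basePoint u = star (fderiv ℂ F basePoint (star u)) := by
  have hstar := h.self_of_nhds.hasFDerivAt.star_star
  rw [star_basePoint] at hstar
  exact DFunLike.congr_fun hstar.fderiv u

namespace CRGerm

lemma vertCoeff_conjMap (h : CRGerm β₁ p β₂ q F basePoint) :
    vertCoeff (conjMap F) = star (vertCoeff F) := by
  rw [vertCoeff, fderiv_conjMap h.differentiableAt, vertCoeff,
    show star ((0, 1) : (Fin n → ℂ) × ℂ) = (0, 1) by ext <;> simp, Prod.snd_star]

lemma horizMap_conjMap (h : CRGerm β₁ p β₂ q F basePoint) (w : Fin n → ℂ) :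
    horizMap (conjMap F) w = star (horizMap F (star w)) := by
  simp [horizMap, fderiv_conjMap h.differentiableAt, Prod.star_def]

lemma horizMap_eq_zero (h : CRGerm β₁ p β₂ q F basePoint) (h1 : F basePoint = basePoint)
    (hq : ∀ i, 0 < q i) (hd : vertCoeff F = 0) : horizMap F = 0 := by
  ext1 v
  refine eq_zero_of_weightedForm_star_self (β := β₂) hq ?_
  have hform := (h.segrePair h1).weightedForm_horizMap v (star v)
  rwa [h.horizMap_conjMap, star_star, h.vertCoeff_conjMap, hd, star_zero, mul_zero] at hform

lemma injective_fderiv_of_vertCoeff_ne_zero (h : CRGerm β₁ p β₂ q F basePoint)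
    (h1 : F basePoint = basePoint) (hp : ∀ i, 0 < p i) (hd : vertCoeff F ≠ 0) :
    Function.Injective (fderiv ℂ F basePoint) := by
  rw [injective_iff_map_eq_zero]
  rintro ⟨v, t⟩ hvt
  rw [(h.segrePair h1).fderiv_apply, Prod.mk_eq_zero, mul_eq_zero_iff_right hd] at hvt
  obtain ⟨hv, rfl⟩ := hvt
  rw [zero_smul, add_zero] at hv
  have hinj := (h.segrePair h1).horizMap_injective hp
    (h.vertCoeff_conjMap ▸ star_ne_zero.2 hd)
  rw [(injective_iff_map_eq_zero _).1 hinj v hv, Prod.mk_zero_zero]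

lemma vertCoeff_ne_zero (h : CRGerm β₁ p β₂ q F basePoint) (h1 : F basePoint = basePoint)
    (hq : ∀ i, 0 < q i) (hi : Function.Injective (fderiv ℂ F basePoint)) : vertCoeff F ≠ 0 := by
  intro hd
  have hkill (v : Fin n → ℂ) (t : ℂ) : fderiv ℂ F basePoint (v, t) = (t • vertVec F, 0) := by
    rw [(h.segrePair h1).fderiv_apply, hd, h.horizMap_eq_zero h1 hq hd]
    simp
  have hzero (v : Fin n → ℂ) : v = 0 :=
    congrArg Prod.fst ((injective_iff_map_eq_zero _).1 hi (v, 0) (by simp [hkill]))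
  have hone : ((0, 1) : (Fin n → ℂ) × ℂ) = 0 :=
    (injective_iff_map_eq_zero _).1 hi (0, 1) (by simp [hkill, hzero (vertVec F)])
  exact one_ne_zero (congrArg Prod.snd hone)

end CRGerm

lemma eventually_fst_mem_prodBalls (β : Fin n → Fin l) :
    ∀ᶠ P : (Fin n → ℂ) × ℂ in 𝓝 basePoint, P.1 ∈ prodBalls β :=
  continuousAt_fst.eventually ((isOpen_prodBalls β).mem_nhds (zero_mem_prodBalls β))

lemma hasFDerivAt_bundleAut_basePoint (hx : x ∈ circBundle β p) :
    HasFDerivAt (bundleAut β p x) (fderiv ℂ (bundleAut β p x) basePoint) basePoint :=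
  (differentiableAt_bundleAut hx (zero_mem_prodBalls β)).hasFDerivAt

lemma fderiv_bundleAut_conjSnd_apply (hx : x ∈ circBundle β p) (u : (Fin n → ℂ) × ℂ) :
    fderiv ℂ (bundleAut β p (conjSnd x)) x (fderiv ℂ (bundleAut β p x) basePoint u) = u := by
  have hinv : HasFDerivAt (bundleAut β p (conjSnd x))
      (fderiv ℂ (bundleAut β p (conjSnd x)) x) (bundleAut β p x basePoint) := by
    rw [bundleAut_basePoint]
    exact (differentiableAt_bundleAut (conjSnd_mem_circBundle hx) hx.1).hasFDerivAt
  have hcomp := hinv.comp basePoint (hasFDerivAt_bundleAut_basePoint hx)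
  have hid := (hasFDerivAt_id (𝕜 := ℂ) (basePoint : (Fin n → ℂ) × ℂ)).congr_of_eventuallyEq
    ((eventually_fst_mem_prodBalls β).mono fun P hP => bundleAut_conjSnd_bundleAut hx hP)
  exact DFunLike.congr_fun (hcomp.unique hid) u

lemma fderiv_bundleAut_injective (hx : x ∈ circBundle β p) :
    Function.Injective (fderiv ℂ (bundleAut β p x) basePoint) :=
  Function.LeftInverse.injective (g := fderiv ℂ (bundleAut β p (conjSnd x)) x)
    (fderiv_bundleAut_conjSnd_apply hx)

lemma fderiv_bundleAut_surjective (hx : x ∈ circBundle β p) :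
    Function.Surjective (fderiv ℂ (bundleAut β p x) basePoint) :=
  LinearMap.injective_iff_surjective.1 (fderiv_bundleAut_injective hx)

/-- The linear form `s` such that the vectors `(v, s v)` are tangent at `P` to the Segre varieties
of the points over `b`. -/
def segreSlope (β : Fin n → Fin l) (p : Fin l → ℕ) (P : (Fin n → ℂ) × ℂ) (b : Fin n → ℂ) :
    (Fin n → ℂ) →L[ℂ] ℂ :=
  -P.2 • ∑ i, (p i / (1 - blockForm β i P.1 b)) • (blockForm β i).flip b

lemma segreSlope_apply (P : (Fin n → ℂ) × ℂ) (b v : Fin n → ℂ) : segreSlope β p P b v =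
    -P.2 * ∑ i, p i * (blockForm β i v b / (1 - blockForm β i P.1 b)) := by
  simp [segreSlope, div_mul_eq_mul_div, mul_div_assoc]

lemma bundleAut_snd_mul_sub_gnormPolar {P : (Fin n → ℂ) × ℂ} (hx : x ∈ circBundle β p)
    (hP : P.1 ∈ prodBalls β) :
    (bundleAut β p x P).2 * star x.2 - gnormPolar β p (bundleAut β p x P).1 (star x.1) =
      normSq x.2 * (P.2 - 1) / gnormPolar β p P.1 (star x.1) := by
  simp only [bundleAut, gnormPolar_ballInvolution_center hx hP, ← Complex.mul_conj, star_def]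
  ring

lemma exists_fderiv_bundleAut_eq_segreSlope (hx : x ∈ circBundle β p) (v : Fin n → ℂ) :
    ∃ u, fderiv ℂ (bundleAut β p x) basePoint (u, 0) = (v, segreSlope β p x (star x.1) v) := by
  obtain ⟨⟨u, t⟩, hut⟩ := fderiv_bundleAut_surjective hx (v, segreSlope β p x (star x.1) v)
  suffices ht : t = 0 from ⟨u, ht ▸ hut⟩
  -- differentiate the equation of the Segre variety of `x` along the image of this line
  set line : ℂ → (Fin n → ℂ) × ℂ := fun s => basePoint + s • (u, t) with hline
  have hline0 : line 0 = basePoint := by simp [hline]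
  have hlinederiv : HasDerivAt line (u, t) 0 := (hasDerivAt_smul_vec (u, t)).const_add basePoint
  have hcurve : HasDerivAt (fun s => bundleAut β p x (line s))
      (v, segreSlope β p x (star x.1) v) 0 := by
    have hT : HasFDerivAt (bundleAut β p x) (fderiv ℂ (bundleAut β p x) basePoint) (line 0) := by
      rw [hline0]
      exact hasFDerivAt_bundleAut_basePoint hx
    rw [← hut]
    exact hT.comp_hasDerivAt 0 hlinederiv
  have hρ : normSq x.2 = gnormPolar β p x.1 (star x.1) := by rw [gnormPolar_star_self, hx.2]
  have hleft := ((hasDerivAt_snd hcurve).mul_const (star x.2)).fun_sub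
    (hasDerivAt_gnormPolar_left (p := p) (b := star x.1) (hasDerivAt_fst hcurve)
      (by simpa only [hline0, bundleAut_basePoint] using
        one_sub_blockForm_star_ne_zero hx.1 hx.1))
  have hden : DifferentiableAt ℂ (fun s => gnormPolar β p (line s).1 (star x.1)) 0 := by
    have := hlinederiv.differentiableAt
    fun_prop
  have hright := (((hasDerivAt_snd hlinederiv).sub_const 1).const_mul
    (normSq x.2 : ℂ)).fun_div hden.hasDerivAt (by simp [hline0])
  have hball : ∀ᶠ s : ℂ in 𝓝 0, (line s).1 ∈ prodBalls β := by
    have htend := hlinederiv.continuousAt.tendsto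
    rw [hline0] at htend
    exact htend.eventually (eventually_fst_mem_prodBalls β)
  have hunique := hleft.unique (hright.congr_of_eventuallyEq (hball.mono fun s hs =>
    bundleAut_snd_mul_sub_gnormPolar hx hs))
  simp only [hline0, bundleAut_basePoint, ← hρ, segreSlope_apply, basePoint_fst, basePoint_snd,
    gnormPolar_zero_left, sub_self, mul_zero, zero_mul, mul_one, sub_zero, one_pow,
    div_one] at hunique
  have hx2 : (normSq x.2 : ℂ) ≠ 0 := by
    simpa using snd_ne_zero_of_mem_circBundle hx
  refine (mul_eq_zero.1 (hunique.symm.trans ?_)).resolve_left hx2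
  rw [← Complex.mul_conj, star_def]
  ring

end Moving

section Nonconstant

variable {n l l' : ℕ} {β₁ : Fin n → Fin l} {p : Fin l → ℕ} {β₂ : Fin n → Fin l'}
  {q : Fin l' → ℕ} {F : (Fin n → ℂ) × ℂ → (Fin n → ℂ) × ℂ} {x : (Fin n → ℂ) × ℂ}

/-- The germ at the base point obtained from the germ of `F` at `x` by moving `x` and `F x` to the
base points. -/
def centeredGerm (β₁ : Fin n → Fin l) (p : Fin l → ℕ) (β₂ : Fin n → Fin l') (q : Fin l' → ℕ)
    (F : (Fin n → ℂ) × ℂ → (Fin n → ℂ) × ℂ) (x P : (Fin n → ℂ) × ℂ) : (Fin n → ℂ) × ℂ :=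
  bundleAut β₂ q (conjSnd (F x)) (F (bundleAut β₁ p x P))

lemma frequently_segreSlope_ne_zero [NeZero n] (hp : ∀ i, 0 < p i) {P : (Fin n → ℂ) × ℂ}
    (hP : P.2 ≠ 0) : ∃ᶠ w in 𝓝 0, segreSlope β₁ p P w ≠ 0 := by
  have hline : Tendsto (fun t : ℂ => (Pi.single 0 t : Fin n → ℂ)) (𝓝[≠] 0) (𝓝 0) :=
    (Continuous.tendsto' (continuous_single 0) _ _ (by simp)).mono_left nhdsWithin_le_nhds
  refine hline.frequently (Eventually.frequently ?_)
  have hden : ∀ᶠ t : ℂ in 𝓝[≠] 0, 1 - P.1 0 * t ≠ 0 :=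
    (Tendsto.eventually_ne (Continuous.tendsto (by fun_prop) 0) (by simp)).filter_mono
      nhdsWithin_le_nhds
  filter_upwards [hden, self_mem_nhdsWithin] with t ht ht0 h
  have happly := DFunLike.congr_fun h (Pi.single 0 1)
  rw [segreSlope_apply, Finset.sum_eq_single (β₁ 0)
    (fun i _ hi => by simp [blockForm_single_left, hi.symm]) (by simp),
    blockForm_comm _ _ P.1] at happly
  exact ht0 (by simpa [blockForm_single_left, hP, (hp _).ne', mul_comm t, ht] using happly)

namespace CRGerm

lemma eventually (h : CRGerm β₁ p β₂ q F x) :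
    ∀ᶠ y in 𝓝 x, y ∈ circBundle β₁ p → CRGerm β₁ p β₂ q F y := by
  filter_upwards [h.differentiableAt.eventually_nhds, h.map.eventually_nhds] with y h1 h2 h3
  exact ⟨h1, h2, h3⟩

lemma apply_mem (h : CRGerm β₁ p β₂ q F x) : F x ∈ circBundle β₂ q := h.map.self_of_nhds h.mem

lemma tendsto_bundleAut (h : CRGerm β₁ p β₂ q F x) :
    Tendsto (bundleAut β₁ p x) (𝓝 basePoint) (𝓝 x) := by
  simpa using (hasFDerivAt_bundleAut_basePoint h.mem).continuousAt.tendsto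

lemma comp_bundleAut (h : CRGerm β₁ p β₂ q F x) :
    CRGerm β₁ p β₂ q (F ∘ bundleAut β₁ p x) basePoint where
  differentiableAt := by
    filter_upwards [h.tendsto_bundleAut.eventually h.differentiableAt,
      eventually_fst_mem_prodBalls β₁] with P h1 h2
    exact h1.comp P (differentiableAt_bundleAut h.mem h2)
  map := by
    filter_upwards [h.tendsto_bundleAut.eventually h.map] with P h1 h2
    exact h1 (bundleAut_mem_circBundle h.mem h2)
  mem := basePoint_mem_circBundle _ _

lemma eventually_apply_bundleAut_mem (h : CRGerm β₁ p β₂ q F x) :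
    ∀ᶠ P in 𝓝 basePoint, (F (bundleAut β₁ p x P)).1 ∈ prodBalls β₂ :=
  h.tendsto_bundleAut.eventually (h.differentiableAt.self_of_nhds.continuousAt.fst.eventually
    ((isOpen_prodBalls β₂).mem_nhds h.apply_mem.1))

lemma centeredGerm_basePoint (h : CRGerm β₁ p β₂ q F x) :
    centeredGerm β₁ p β₂ q F x basePoint = basePoint := by
  rw [centeredGerm, bundleAut_basePoint, bundleAut_conjSnd_self h.apply_mem]

lemma centered (h : CRGerm β₁ p β₂ q F x) :
    CRGerm β₁ p β₂ q (centeredGerm β₁ p β₂ q F x) basePoint where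
  differentiableAt := by
    filter_upwards [h.comp_bundleAut.differentiableAt,
      h.eventually_apply_bundleAut_mem] with P h1 h2
    exact (differentiableAt_bundleAut (conjSnd_mem_circBundle h.apply_mem) h2).comp P h1
  map := by
    filter_upwards [h.comp_bundleAut.map] with P h1 h2
    exact bundleAut_mem_circBundle (conjSnd_mem_circBundle h.apply_mem) (h1 h2)
  mem := basePoint_mem_circBundle _ _

lemma eventually_bundleAut_centeredGerm (h : CRGerm β₁ p β₂ q F x) : ∀ᶠ P in 𝓝 basePoint,
    bundleAut β₂ q (F x) (centeredGerm β₁ p β₂ q F x P) = F (bundleAut β₁ p x P) :=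
  h.eventually_apply_bundleAut_mem.mono fun _ => bundleAut_bundleAut_conjSnd h.apply_mem

lemma fderiv_apply_fderiv_bundleAut (h : CRGerm β₁ p β₂ q F x) (u : (Fin n → ℂ) × ℂ) :
    fderiv ℂ F x (fderiv ℂ (bundleAut β₁ p x) basePoint u) =
      fderiv ℂ (bundleAut β₂ q (F x)) basePoint
        (fderiv ℂ (centeredGerm β₁ p β₂ q F x) basePoint u) := by
  have hF : HasFDerivAt F (fderiv ℂ F x) (bundleAut β₁ p x basePoint) := by
    rw [bundleAut_basePoint]
    exact h.differentiableAt.self_of_nhds.hasFDerivAt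
  have hleft := hF.comp basePoint (hasFDerivAt_bundleAut_basePoint h.mem)
  have hN : HasFDerivAt (bundleAut β₂ q (F x)) (fderiv ℂ (bundleAut β₂ q (F x)) basePoint)
      (centeredGerm β₁ p β₂ q F x basePoint) := by
    rw [h.centeredGerm_basePoint]
    exact hasFDerivAt_bundleAut_basePoint h.apply_mem
  have hright := hN.comp basePoint h.centered.differentiableAt.self_of_nhds.hasFDerivAt
  exact DFunLike.congr_fun (hleft.unique (hright.congr_of_eventuallyEq
    (h.eventually_bundleAut_centeredGerm.mono fun P hP => hP.symm))) u

lemma injective_fderiv_centeredGerm_iff (h : CRGerm β₁ p β₂ q F x) :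
    Function.Injective (fderiv ℂ (centeredGerm β₁ p β₂ q F x) basePoint) ↔
      Function.Injective (fderiv ℂ F x) := by
  have hcomp : fderiv ℂ F x ∘ fderiv ℂ (bundleAut β₁ p x) basePoint =
      fderiv ℂ (bundleAut β₂ q (F x)) basePoint ∘
        fderiv ℂ (centeredGerm β₁ p β₂ q F x) basePoint :=
    funext h.fderiv_apply_fderiv_bundleAut
  rw [← (fderiv_bundleAut_injective h.apply_mem).of_comp_iff, ← hcomp,
    Function.Injective.of_comp_iff' _
      ⟨fderiv_bundleAut_injective h.mem, fderiv_bundleAut_surjective h.mem⟩]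

lemma fderiv_segreSlope_eq_zero (h : CRGerm β₁ p β₂ q F x) (hp : ∀ i, 0 < p i)
    (hq : ∀ i, 0 < q i) (hi : ¬Function.Injective (fderiv ℂ F x)) (v : Fin n → ℂ) :
    fderiv ℂ F x (v, segreSlope β₁ p x (star x.1) v) = 0 := by
  obtain ⟨u, hu⟩ := exists_fderiv_bundleAut_eq_segreSlope h.mem v
  have hd : vertCoeff (centeredGerm β₁ p β₂ q F x) = 0 := by
    contrapose! hi
    exact h.injective_fderiv_centeredGerm_iff.1
      (h.centered.injective_fderiv_of_vertCoeff_ne_zero h.centeredGerm_basePoint hp hi)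
  rw [← hu, h.fderiv_apply_fderiv_bundleAut,
    (h.centered.segrePair h.centeredGerm_basePoint).fderiv_apply,
    h.centered.horizMap_eq_zero h.centeredGerm_basePoint hq hd]
  simp [← Prod.zero_eq_mk]

lemma eventually_fderiv_segreSlope_eq_zero (h : CRGerm β₁ p β₂ q F basePoint)
    (hp : ∀ i, 0 < p i) (hq : ∀ i, 0 < q i)
    (hi : ∀ᶠ x in 𝓝 basePoint, x ∈ circBundle β₁ p → ¬Function.Injective (fderiv ℂ F x)) :
    ∀ᶠ R in 𝓝 (basePoint, basePoint), Segre β₁ p R.1 R.2 →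
      ∀ v, fderiv ℂ F R.1 (v, segreSlope β₁ p R.1 R.2.1 v) = 0 := by
  have hzero := eventually_eq_zero_of_circBundle (β := β₁) (p := p) (H := fun R =>
    fderiv ℂ F R.1 ∘L (ContinuousLinearMap.inl ℂ _ _ +
      ContinuousLinearMap.inr ℂ _ _ ∘L segreSlope β₁ p R.1 R.2.1)) ?_ ?_
  · filter_upwards [hzero] with R hR hseg v
    simpa [-map_add, ← map_add] using DFunLike.congr_fun (hR hseg) v
  · have hden : ∀ᶠ R in 𝓝 ((basePoint, basePoint) : ((Fin n → ℂ) × ℂ) × ((Fin n → ℂ) × ℂ)),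
        ∀ i, 1 - blockForm β₁ i R.1.1 R.2.1 ≠ 0 := eventually_all.2 fun i => by
      have hcont : ContinuousAt (fun R : ((Fin n → ℂ) × ℂ) × ((Fin n → ℂ) × ℂ) =>
          1 - blockForm β₁ i R.1.1 R.2.1) (basePoint, basePoint) := by fun_prop
      exact hcont.eventually_ne (by simp)
    filter_upwards [continuousAt_fst.eventually
      (eventually_differentiableAt_fderiv h.differentiableAt), hden] with R hF hR
    have hF' := hF.comp R differentiableAt_fst
    refine hF'.clm_comp
      ((differentiableAt_const _).fun_add ((differentiableAt_const _).clm_comp ?_))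
    unfold segreSlope
    have (i : Fin l) := differentiableAt_fun_div (differentiableAt_const (p i : ℂ))
      (by fun_prop : DifferentiableAt ℂ (fun R : ((Fin n → ℂ) × ℂ) × ((Fin n → ℂ) × ℂ) =>
        1 - blockForm β₁ i R.1.1 R.2.1) R) (hR i)
    have (i : Fin l) : DifferentiableAt ℂ (fun R : ((Fin n → ℂ) × ℂ) × ((Fin n → ℂ) × ℂ) =>
      (blockForm β₁ i).flip R.2.1) R := by fun_prop
    fun_prop
  · filter_upwards [h.eventually, hi] with P hP1 hP2 hP
    ext1 v
    simpa [-map_add, ← map_add] using (hP1 hP).fderiv_segreSlope_eq_zero hp hq (hP2 hP) v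

lemma eventually_fderiv_eq_zero [NeZero n] (h : CRGerm β₁ p β₂ q F basePoint)
    (hp : ∀ i, 0 < p i) (hq : ∀ i, 0 < q i)
    (hi : ∀ᶠ x in 𝓝 basePoint, x ∈ circBundle β₁ p → ¬Function.Injective (fderiv ℂ F x)) :
    ∀ᶠ P in 𝓝 basePoint, fderiv ℂ F P = 0 := by
  have hpair : Tendsto (fun R : ((Fin n → ℂ) × ℂ) × (Fin n → ℂ) =>
      (R.1, R.2, gnormPolar β₁ p R.1.1 R.2 / R.1.2)) (𝓝 (basePoint, 0))
      (𝓝 (basePoint, basePoint)) := by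
    have hcont : ContinuousAt (fun R : ((Fin n → ℂ) × ℂ) × (Fin n → ℂ) =>
        gnormPolar β₁ p R.1.1 R.2 / R.1.2) (basePoint, 0) :=
      DifferentiableAt.continuousAt (𝕜 := ℂ)
        (differentiableAt_fun_div (by fun_prop) (by fun_prop) (by simp))
    simpa [basePoint] using
      (continuousAt_fst.prodMk (continuousAt_snd.prodMk hcont)).tendsto
  have hslope := hpair.eventually (h.eventually_fderiv_segreSlope_eq_zero hp hq hi)
  rw [nhds_prod_eq] at hslope
  filter_upwards [hslope.curry, continuousAt_snd.eventually_ne one_ne_zero] with P hP hP2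
  have hkill : ∀ᶠ w in 𝓝 0, ∀ v, fderiv ℂ F P (v, segreSlope β₁ p P w v) = 0 :=
    hP.mono fun w hw => hw (mul_div_cancel₀ _ hP2)
  have hhoriz (v : Fin n → ℂ) : fderiv ℂ F P (v, 0) = 0 := by
    simpa [segreSlope_apply] using hkill.self_of_nhds v
  obtain ⟨w, hws, hw⟩ := ((frequently_segreSlope_ne_zero (β₁ := β₁) hp hP2).and_eventually
    hkill).exists
  obtain ⟨v, hv⟩ := DFunLike.ne_iff.1 hws
  have hvert : fderiv ℂ F P (0, 1) = 0 := by
    refine (smul_eq_zero.1 ?_).resolve_left hv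
    rw [← map_smul, ← hw v, ← sub_eq_zero, ← map_sub, ← hhoriz (-v)]
    simp
  ext1
  · ext1 v
    exact hhoriz v
  · ext1
    exact hvert

lemma eventually_eq_of_eventually_not_injective [NeZero n] (h : CRGerm β₁ p β₂ q F x)
    (hp : ∀ i, 0 < p i) (hq : ∀ i, 0 < q i)
    (hi : ∀ᶠ y in 𝓝 x, y ∈ circBundle β₁ p → ¬Function.Injective (fderiv ℂ F y)) :
    ∀ᶠ y in 𝓝 x, F y = F x := by
  have hcomp : ∀ᶠ P in 𝓝 basePoint, P ∈ circBundle β₁ p →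
      ¬Function.Injective (fderiv ℂ (F ∘ bundleAut β₁ p x) P) := by
    filter_upwards [h.tendsto_bundleAut.eventually hi,
      h.tendsto_bundleAut.eventually h.differentiableAt] with P h1 h2 hP hinj
    rw [fderiv_comp P h2 (differentiableAt_bundleAut h.mem hP.1)] at hinj
    have hbij := LinearMap.injective_iff_surjective.1
      (Function.Injective.of_comp (f := fderiv ℂ F _) hinj)
    exact h1 (bundleAut_mem_circBundle h.mem hP)
      ((hbij.forall₂).2 fun a b hab => congrArg _ (hinj hab))
  obtain ⟨r, hr, hball⟩ := Metric.eventually_nhds_iff_ball.1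
    ((h.comp_bundleAut.eventually_fderiv_eq_zero hp hq hcomp).and
      h.comp_bundleAut.differentiableAt)
  have hconst : Set.EqOn (F ∘ bundleAut β₁ p x) (fun _ => F x) (ball basePoint r) := fun P hP => by
    rw [isOpen_ball.is_const_of_fderiv_eq_zero (𝕜 := ℂ) (convex_ball _ r).isPreconnected
      (fun y hy => (hball y hy).2.differentiableWithinAt) (fun y hy => (hball y hy).1) hP
      (mem_ball_self hr), Function.comp_apply, bundleAut_basePoint]
  have hinv : Tendsto (bundleAut β₁ p (conjSnd x)) (𝓝 x) (𝓝 basePoint) := by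
    have := (differentiableAt_bundleAut (conjSnd_mem_circBundle h.mem) h.mem.1).continuousAt.tendsto
    rwa [bundleAut_conjSnd_self h.mem] at this
  filter_upwards [hinv.eventually (ball_mem_nhds basePoint hr), continuousAt_fst.eventually
    ((isOpen_prodBalls β₁).mem_nhds h.mem.1)] with P hP hP'
  rw [← bundleAut_bundleAut_conjSnd h.mem hP']
  exact hconst hP

end CRGerm

lemma exists_crGerm_injective_fderiv [NeZero n] (hp : ∀ i, 0 < p i) (hq : ∀ i, 0 < q i)
    {U : Set ((Fin n → ℂ) × ℂ)} (hUo : IsOpen U) (hUc : IsPreconnected U)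
    (hU : (U ∩ circBundle β₁ p).Nonempty) (hF : DifferentiableOn ℂ F U)
    (hFc : ¬∃ c, Set.EqOn F (fun _ => c) U)
    (hFm : Set.MapsTo F (U ∩ circBundle β₁ p) (circBundle β₂ q)) :
    ∃ x ∈ U, CRGerm β₁ p β₂ q F x ∧ Function.Injective (fderiv ℂ F x) := by
  have hgerm (x) (hxU : x ∈ U) (hx : x ∈ circBundle β₁ p) : CRGerm β₁ p β₂ q F x :=
    ⟨hF.eventually_differentiableAt (hUo.mem_nhds hxU),
      (hUo.eventually_mem hxU).mono fun P hP hP' => hFm ⟨hP, hP'⟩, hx⟩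
  by_contra! hcon
  obtain ⟨x, hxU, hx⟩ := hU
  refine hFc ⟨F x, eqOn_const_of_eventually hUo hUc hF hxU ?_⟩
  exact (hgerm x hxU hx).eventually_eq_of_eventually_not_injective hp hq
    ((hUo.eventually_mem hxU).mono fun y hyU hy => hcon y hyU (hgerm y hyU hy))

end Nonconstant

section Blocks

variable {n l l' : ℕ} {β : Fin n → Fin l} {i : Fin l} {z w : Fin n → ℂ}

lemma blockSq_eq_zero_iff : blockSq β i z = 0 ↔ ∀ m, β m = i → z m = 0 := by
  simp [blockSq, Finset.sum_eq_zero_iff_of_nonneg, normSq_nonneg]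

lemma blockSq_add_add_blockSq_sub :
    blockSq β i (z + w) + blockSq β i (z - w) = 2 * (blockSq β i z + blockSq β i w) := by
  simp only [blockSq, ← Finset.sum_add_distrib, Finset.mul_sum]
  refine Finset.sum_congr rfl fun m _ => ?_
  simp only [normSq_apply, Pi.add_apply, Pi.sub_apply, add_re, add_im, sub_re, sub_im]
  ring

lemma blockSq_add_of_eq_zero (h : blockSq β i w = 0) : blockSq β i (z + w) = blockSq β i z := by
  refine Finset.sum_congr rfl fun m hm => ?_
  rw [Pi.add_apply, blockSq_eq_zero_iff.1 h m (Finset.mem_filter.1 hm).2, add_zero]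

lemma blockSq_neg : blockSq β i (-z) = blockSq β i z := by
  simp [blockSq]

lemma blockSq_nonneg : 0 ≤ blockSq β i z :=
  Finset.sum_nonneg fun m _ => normSq_nonneg (z m)

lemma blockSq_single {m : Fin n} :
    blockSq β i (Pi.single m 1) = if β m = i then 1 else 0 := by
  simp [blockSq, Pi.single_apply, apply_ite normSq]

lemma blockSq_indicator_preimage (i' : Fin l) :
    blockSq β i' (Set.indicator (β ⁻¹' {i}) z) = if i' = i then blockSq β i z else 0 := by
  split_ifs with h
  · subst h
    refine Finset.sum_congr rfl fun m hm => ?_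
    rw [Set.indicator_of_mem (by simpa using hm)]
  · rw [blockSq_eq_zero_iff]
    rintro m rfl
    exact Set.indicator_of_notMem (by simpa using h) z

lemma sum_indicator_preimage (β : Fin n → Fin l) (z : Fin n → ℂ) :
    ∑ i, Set.indicator (β ⁻¹' {i}) z = z := by
  ext m
  rw [Finset.sum_apply, Finset.sum_eq_single (β m)]
  · exact Set.indicator_of_mem (Set.mem_preimage.2 rfl) z
  · exact fun i _ hi => Set.indicator_of_notMem (fun hm => hi hm.symm) z
  · exact fun h => absurd (Finset.mem_univ _) h

variable {β₁ : Fin n → Fin l} {β₂ : Fin n → Fin l'} {j : Fin l'}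
  {M : (Fin n → ℂ) →ₗ[ℂ] (Fin n → ℂ)}

lemma blockSq_map_eq_of_forall_ne
    (h : ∀ i' ≠ i, blockSq β₂ j (M (Set.indicator (β₁ ⁻¹' {i'}) z)) = 0) :
    blockSq β₂ j (M z) = blockSq β₂ j (M (Set.indicator (β₁ ⁻¹' {i}) z)) := by
  have hrest : blockSq β₂ j (M (∑ i' ∈ Finset.univ.erase i,
      Set.indicator (β₁ ⁻¹' {i'}) z)) = 0 := by
    rw [blockSq_eq_zero_iff]
    intro m hm
    rw [map_sum, Finset.sum_apply]
    exact Finset.sum_eq_zero fun i' hi' =>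
      blockSq_eq_zero_iff.1 (h i' (Finset.ne_of_mem_erase hi')) m hm
  rw [← blockSq_add_of_eq_zero (z := M (Set.indicator (β₁ ⁻¹' {i}) z)) hrest, ← map_add,
    Finset.add_sum_erase _ (fun i' => Set.indicator (β₁ ⁻¹' {i'}) z) (Finset.mem_univ i),
    sum_indicator_preimage]

lemma blockSq_map_eq_zero_or_eq
    (hM : ∀ z j, blockSq β₂ j (M z) ≠ 0 → ∃ i, blockSq β₁ i z = blockSq β₂ j (M z))
    (hz : ∀ i' ≠ i, blockSq β₁ i' z = 0) (j : Fin l') :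
    blockSq β₂ j (M z) = 0 ∨ blockSq β₂ j (M z) = blockSq β₁ i z := by
  refine or_iff_not_imp_left.2 fun h0 => ?_
  obtain ⟨i', hi'⟩ := hM z j h0
  obtain rfl : i' = i := by
    by_contra hne
    exact h0 (hi'.symm.trans (hz i' hne))
  exact hi'.symm

lemma blockSq_add_eq_zero (hz : blockSq β i z = 0) (hw : blockSq β i w = 0) :
    blockSq β i (z + w) = 0 := by
  rw [blockSq_add_of_eq_zero hw, hz]

lemma blockSq_map_eq_of_ne_zero
    (hM : ∀ z j, blockSq β₂ j (M z) ≠ 0 → ∃ i, blockSq β₁ i z = blockSq β₂ j (M z))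
    (hz : ∀ i' ≠ i, blockSq β₁ i' z = 0) (hw : ∀ i' ≠ i, blockSq β₁ i' w = 0)
    (h : blockSq β₂ j (M w) ≠ 0) : blockSq β₂ j (M z) = blockSq β₁ i z := by
  refine (blockSq_map_eq_zero_or_eq hM hz j).elim (fun h0 => ?_) id
  have key : ∀ v, (∀ i' ≠ i, blockSq β₁ i' v = 0) → blockSq β₂ j (M v) = 0 →
      blockSq β₂ j (M w) = blockSq β₁ i (w + v) := by
    intro v hv hv0
    rw [← blockSq_add_of_eq_zero hv0, ← map_add]
    refine (blockSq_map_eq_zero_or_eq hM (fun i' hi' => ?_) j).resolve_left ?_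
    · exact blockSq_add_eq_zero (hw i' hi') (hv i' hi')
    · rwa [map_add, blockSq_add_of_eq_zero hv0]
  have hw' := (blockSq_map_eq_zero_or_eq hM hw j).resolve_left h
  have hadd := key z hz h0
  have hsub := key (-z) (fun i' hi' => blockSq_neg.trans (hz i' hi'))
    (by rw [map_neg, blockSq_neg, h0])
  rw [← sub_eq_add_neg] at hsub
  linarith [blockSq_add_add_blockSq_sub (β := β₁) (i := i) (z := w) (w := z)]

lemma eq_of_blockSq_map_ne_zero {i' : Fin l}
    (hM : ∀ z j, blockSq β₂ j (M z) ≠ 0 → ∃ i, blockSq β₁ i z = blockSq β₂ j (M z))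
    (hz : ∀ k ≠ i, blockSq β₁ k z = 0) (hw : ∀ k ≠ i', blockSq β₁ k w = 0)
    (hz0 : blockSq β₂ j (M z) ≠ 0) (hw0 : blockSq β₂ j (M w) ≠ 0) : i = i' := by
  by_contra hne
  have hz1 := blockSq_map_eq_of_ne_zero hM hz hz hz0
  have hw1 := blockSq_map_eq_of_ne_zero hM hw hw hw0
  have hzpos : 0 < blockSq β₁ i z := hz1 ▸ blockSq_nonneg.lt_of_ne' hz0
  have hwpos : 0 < blockSq β₁ i' w := hw1 ▸ blockSq_nonneg.lt_of_ne' hw0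
  have key : ∀ v, (∀ k, blockSq β₁ k v = blockSq β₁ k w) →
      blockSq β₂ j (M (z + v)) < blockSq β₁ i z + blockSq β₁ i' w := by
    intro v hv
    by_cases h0 : blockSq β₂ j (M (z + v)) = 0
    · rw [h0]
      positivity
    obtain ⟨k, hk⟩ := hM _ _ h0
    rw [← hk]
    by_cases hki : k = i
    · rw [hki, blockSq_add_of_eq_zero (by rw [hv, hw i hne])]
      linarith
    · rw [add_comm, blockSq_add_of_eq_zero (hz k hki), hv]
      by_cases hki' : k = i'
      · rw [hki']
        linarith
      · rw [hw k hki']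
        positivity
  have hsub := key (-w) fun k => blockSq_neg
  rw [← sub_eq_add_neg, map_sub] at hsub
  have hadd := key w fun k => rfl
  rw [map_add] at hadd
  linarith [blockSq_add_add_blockSq_sub (β := β₂) (i := j) (z := M z) (w := M w)]

lemma exists_blockSq_map_eq (hβ₂ : Function.Surjective β₂) (hMs : Function.Surjective M)
    (hM : ∀ z j, blockSq β₂ j (M z) ≠ 0 → ∃ i, blockSq β₁ i z = blockSq β₂ j (M z))
    (j : Fin l') : ∃ i, ∀ z, blockSq β₂ j (M z) = blockSq β₁ i z := by
  have hsupp : ∀ i z, ∀ k ≠ i, blockSq β₁ k (Set.indicator (β₁ ⁻¹' {i}) z) = 0 :=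
    fun i z k hk => (blockSq_indicator_preimage k).trans (if_neg hk)
  obtain ⟨m, rfl⟩ := hβ₂ j
  obtain ⟨w, hw⟩ := hMs (Pi.single m 1)
  obtain ⟨i, hi⟩ : ∃ i, blockSq β₂ (β₂ m) (M (Set.indicator (β₁ ⁻¹' {i}) w)) ≠ 0 := by
    by_contra! h
    have h1 := blockSq_map_eq_of_forall_ne (i := β₁ m) fun i' _ => h i'
    simp [h, hw, blockSq_single] at h1
  refine ⟨i, fun z => ?_⟩
  rw [blockSq_map_eq_of_forall_ne (i := i) fun i' hi' => ?_,
    blockSq_map_eq_of_ne_zero hM (hsupp i z) (hsupp i w) hi, blockSq_indicator_preimage,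
    if_pos rfl]
  by_contra h
  exact hi' (eq_of_blockSq_map_ne_zero hM (hsupp i' z) (hsupp i w) h hi)

lemma exists_blockSq_map_equiv (hβ₁ : Function.Surjective β₁) (hβ₂ : Function.Surjective β₂)
    (hMs : Function.Surjective M)
    (hM : ∀ z j, blockSq β₂ j (M z) ≠ 0 → ∃ i, blockSq β₁ i z = blockSq β₂ j (M z))
    (hM' : ∀ z i, blockSq β₁ i z ≠ 0 → ∃ j, blockSq β₂ j (M z) = blockSq β₁ i z) :
    ∃ τ : Fin l' ≃ Fin l, ∀ j z, blockSq β₂ j (M z) = blockSq β₁ (τ j) z := by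
  choose τ hτ using exists_blockSq_map_eq hβ₂ hMs hM
  refine ⟨Equiv.ofBijective τ ⟨fun j j' hjj => ?_, fun i => ?_⟩, hτ⟩
  · obtain ⟨m, rfl⟩ := hβ₂ j
    obtain ⟨w, hw⟩ := hMs (Pi.single m 1)
    have h1 := (hτ (β₂ m) w).trans ((congrArg (blockSq β₁ · w) hjj).trans (hτ j' w).symm)
    simp only [hw, blockSq_single, if_true] at h1
    by_contra hne
    simp [hne] at h1
  · obtain ⟨m, rfl⟩ := hβ₁ i
    obtain ⟨j, hj⟩ := hM' (Pi.single m 1) (β₁ m) (by simp [blockSq_single])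
    rw [hτ] at hj
    simp only [blockSq_single, if_true] at hj
    exact ⟨j, by_contra fun hne => by simp [Ne.symm hne] at hj⟩

lemma natCast_eq_mul_of_forall_sum_eq {p : Fin l → ℕ} {q : Fin l' → ℕ} {d : ℂ}
    {τ : Fin l' ≃ Fin l} (hβ₁ : Function.Surjective β₁)
    (hτ : ∀ j z, blockSq β₂ j (M z) = blockSq β₁ (τ j) z)
    (hS : ∀ z, ∑ j, (q j : ℂ) * blockSq β₂ j (M z) = d * ∑ i, (p i : ℂ) * blockSq β₁ i z)
    (j : Fin l') : (q j : ℂ) = d * p (τ j) := by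
  obtain ⟨m, hm⟩ := hβ₁ (τ j)
  have h := hS (Pi.single m 1)
  simpa [hτ, blockSq_single, hm, apply_ite ofReal] using h

lemma eq_one_of_forall_natCast_eq_mul {p : Fin l → ℕ} {q : Fin l' → ℕ} {d : ℂ}
    {τ : Fin l' ≃ Fin l} (h : ∀ j, (q j : ℂ) = d * p (τ j)) (hp : ∃ i, p i = 1)
    (hq : ∃ j, q j = 1) : d = 1 := by
  obtain ⟨i, hi⟩ := hp
  obtain ⟨j, hj⟩ := hq
  have hd := h (τ.symm i)
  rw [τ.apply_symm_apply, hi, Nat.cast_one, mul_one] at hd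
  have hmul := h j
  rw [← hd, hj, ← Nat.cast_mul, Nat.cast_inj] at hmul
  rw [← hd, Nat.eq_one_of_mul_eq_one_right hmul.symm, Nat.cast_one]

end Blocks

lemma eq_zero_of_eventually_sum_div {s : Finset ℂ} {c : ℂ → ℂ}
    (h : ∀ᶠ u in 𝓝 (0 : ℂ), ∑ w ∈ s, c w * (w / (1 - u * w)) = 0) {v : ℂ} (hvs : v ∈ s)
    (hv : v ≠ 0) : c v = 0 := by
  let P : Polynomial ℂ := ∑ w ∈ s, Polynomial.C (c w * w) *
    ∏ w' ∈ s.erase w, (1 - Polynomial.C w' * Polynomial.X)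
  have hP : ∀ u, P.eval u = ∑ w ∈ s, c w * w * ∏ w' ∈ s.erase w, (1 - u * w') := fun u => by
    simp [P, Polynomial.eval_finsetSum, Polynomial.eval_prod, mul_comm u]
  have hne : ∀ᶠ u in 𝓝 (0 : ℂ), ∀ w ∈ s, 1 - u * w ≠ 0 := by
    rw [eventually_all_finset]
    exact fun w _ => Tendsto.eventually_ne
      (Continuous.tendsto' (by fun_prop) _ 1 (by simp)) one_ne_zero
  have hroot : ∀ᶠ u in 𝓝 (0 : ℂ), P.IsRoot u := by
    filter_upwards [h, hne] with u hu hu0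
    rw [Polynomial.IsRoot, hP, ← mul_zero (∏ w ∈ s, (1 - u * w)), ← hu, Finset.mul_sum]
    refine Finset.sum_congr rfl fun w hw => ?_
    rw [← Finset.mul_prod_erase s _ hw]
    linear_combination -(c w * ∏ w' ∈ s.erase w, (1 - u * w')) * div_mul_cancel₀ w (hu0 w hw)
  have hval := hP v⁻¹
  rw [Polynomial.eq_zero_of_infinite_isRoot P (infinite_of_mem_nhds 0 hroot),
    Polynomial.eval_zero, Finset.sum_eq_single_of_mem v hvs] at hval
  · have hprod : ∏ w' ∈ s.erase v, (1 - v⁻¹ * w') ≠ 0 := by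
      refine Finset.prod_ne_zero_iff.2 fun w hw h0 => Finset.ne_of_mem_erase hw ?_
      field_simp at h0
      linear_combination -h0
    simpa [hprod, hv] using hval.symm
  · intro w _ hw
    rw [Finset.prod_eq_zero (Finset.mem_erase.2 ⟨hw.symm, hvs⟩)
      (by rw [inv_mul_cancel₀ hv, sub_self]), mul_zero]

lemma sum_fiber_eq_zero_of_eventually_sum_div {ι : Type*} [Fintype ι] {a x : ι → ℂ}
    (h : ∀ᶠ u in 𝓝 (0 : ℂ), ∑ i, a i * (x i / (1 - u * x i)) = 0) {v : ℂ} (hv : v ≠ 0) :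
    ∑ i with x i = v, a i = 0 := by
  classical
  refine eq_zero_of_eventually_sum_div (s := insert v (Finset.univ.image x))
    (c := fun w => ∑ i with x i = w, a i) ?_ (Finset.mem_insert_self _ _) hv
  filter_upwards [h] with u hu
  rw [← hu, ← Finset.sum_fiberwise_of_maps_to (g := x) (t := insert v (Finset.univ.image x))
    (by simp)]
  refine Finset.sum_congr rfl fun w _ => ?_
  rw [Finset.sum_mul]
  exact Finset.sum_congr rfl fun i hi => by rw [(Finset.mem_filter.1 hi).2]

lemma exists_eq_of_eventually_sum_div_eq {ι κ : Type*} [Fintype ι] [Fintype κ] {a x : ι → ℂ}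
    {q : κ → ℕ} {y : κ → ℂ} (hq : ∀ j, 0 < q j)
    (h : ∀ᶠ u in 𝓝 (0 : ℂ),
      ∑ j, q j * (y j / (1 - u * y j)) = ∑ i, a i * (x i / (1 - u * x i)))
    {j : κ} (hj : y j ≠ 0) : ∃ i, x i = y j := by
  by_contra! hne
  have h0 := sum_fiber_eq_zero_of_eventually_sum_div (ι := κ ⊕ ι)
    (a := Sum.elim (fun j => (q j : ℂ)) (-a)) (x := Sum.elim y x) (by
      filter_upwards [h] with u hu
      simp [Fintype.sum_sum_type, hu]) hj
  rw [Finset.sum_filter, Fintype.sum_sum_type] at h0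
  simp only [Sum.elim_inl, Sum.elim_inr, hne, if_false, Finset.sum_const_zero, add_zero] at h0
  have hsum : ∑ j', (if y j' = y j then q j' else 0) = 0 := by
    exact_mod_cast h0
  exact (hq j).ne' (by simpa using Finset.sum_eq_zero_iff.1 hsum j (Finset.mem_univ j))

section SeveralBlocks

variable {n l l' : ℕ} {β₁ : Fin n → Fin l} {p : Fin l → ℕ} {β₂ : Fin n → Fin l'} {q : Fin l' → ℕ}
  {F G : (Fin n → ℂ) × ℂ → (Fin n → ℂ) × ℂ}

lemma eventually_eq_of_fderiv_snd_eq_zero {E E' : Type*} [NormedAddCommGroup E] [NormedSpace ℂ E]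
    [NormedAddCommGroup E'] [NormedSpace ℂ E'] {f : E × ℂ → E'} {a : E} {b : ℂ}
    (hf : ∀ᶠ P in 𝓝 (a, b), DifferentiableAt ℂ f P)
    (h : ∀ᶠ P in 𝓝 (a, b), fderiv ℂ f P (0, 1) = 0) : ∀ᶠ P in 𝓝 (a, b), f P = f (P.1, b) := by
  obtain ⟨r, hr, hball⟩ := Metric.eventually_nhds_iff_ball.1 (hf.and h)
  filter_upwards [ball_mem_nhds _ hr] with P hP
  rw [← ball_prod_same] at hP
  have hderiv : ∀ ξ ∈ ball b r, HasDerivAt (fun ξ => f (P.1, ξ)) 0 ξ := fun ξ hξ => by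
    obtain ⟨hd, h0⟩ := hball (P.1, ξ) (ball_prod_same a b r ▸ ⟨hP.1, hξ⟩)
    exact (hd.hasFDerivAt.comp_hasDerivAt ξ
      ((hasDerivAt_const ξ P.1).prodMk (hasDerivAt_id ξ))).congr_deriv h0
  exact isOpen_ball.is_const_of_deriv_eq_zero (convex_ball b r).isPreconnected
    (fun ξ hξ => (hderiv ξ hξ).differentiableAt.differentiableWithinAt)
    (fun ξ hξ => (hderiv ξ hξ).deriv) hP.2 (mem_ball_self hr)

lemma eventually_of_eventually_segre {H : ((Fin n → ℂ) × ℂ) × ((Fin n → ℂ) × ℂ) → Prop}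
    (h : ∀ᶠ R in 𝓝 (basePoint, basePoint), Segre β₁ p R.1 R.2 → H R) :
    ∀ᶠ P in 𝓝 basePoint, H (P, (0, P.2⁻¹)) := by
  have hne : ∀ᶠ P : (Fin n → ℂ) × ℂ in 𝓝 basePoint, P.2 ≠ 0 :=
    ContinuousAt.eventually_ne continuousAt_snd (by simp)
  have hlift : Tendsto (fun P : (Fin n → ℂ) × ℂ => (P, ((0 : Fin n → ℂ), P.2⁻¹)))
      (𝓝 basePoint) (𝓝 (basePoint, basePoint)) := by
    have hc : ContinuousAt (fun P : (Fin n → ℂ) × ℂ => (P, ((0 : Fin n → ℂ), P.2⁻¹))) basePoint :=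
      continuousAt_id.prodMk
        (continuousAt_const.prodMk (continuousAt_snd.inv₀ (by simp)))
    simpa [ContinuousAt, basePoint] using hc
  filter_upwards [hlift.eventually h, hne] with P hP hP0
  exact hP (by simp [Segre, hP0])

lemma fderiv_bundleAut_vertical {x : (Fin n → ℂ) × ℂ} (hx : x ∈ circBundle β₁ p) (t : ℂ) :
    fderiv ℂ (bundleAut β₁ p x) basePoint (0, t) = (0, x.2 * t) := by
  have hline : HasDerivAt (fun s : ℂ => ((0 : Fin n → ℂ), 1 + s * t)) (0, t) 0 :=
    (hasDerivAt_const _ _).prodMk (by simpa using ((hasDerivAt_id (0 : ℂ)).mul_const t).const_add 1)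
  have hcomp : HasFDerivAt (bundleAut β₁ p x) (fderiv ℂ (bundleAut β₁ p x) basePoint)
      ((0 : Fin n → ℂ), 1 + 0 * t) := by
    simpa [basePoint] using hasFDerivAt_bundleAut_basePoint hx
  refine (hcomp.comp_hasDerivAt (0 : ℂ) hline).unique ?_
  have hval : bundleAut β₁ p x ∘ (fun s : ℂ => ((0 : Fin n → ℂ), 1 + s * t)) =
      fun s => (x.1, x.2 * (1 + s * t)) := by
    ext s <;> simp [bundleAut]
  rw [hval]
  exact (hasDerivAt_const _ _).prodMk
    (by simpa using (((hasDerivAt_id (0 : ℂ)).mul_const t).const_add 1).const_mul x.2)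

namespace CRGerm

variable {m m' : Fin n}

lemma eventually_injective_fderiv {x : (Fin n → ℂ) × ℂ} (h : CRGerm β₁ p β₂ q F x)
    (hi : Function.Injective (fderiv ℂ F x)) :
    ∀ᶠ P in 𝓝 x, Function.Injective (fderiv ℂ F P) :=
  (differentiableAt_fderiv h.differentiableAt).continuousAt.eventually
    (ContinuousLinearMap.isOpen_injective.mem_nhds hi)

lemma fst_fderiv_vertical_eq_zero {x : (Fin n → ℂ) × ℂ} (h : CRGerm β₁ p β₂ q F x)
    (hp : ∀ i, 0 < p i) (hq : ∀ i, 0 < q i) (hi : Function.Injective (fderiv ℂ F x))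
    (hm : β₁ m ≠ β₁ m') : (fderiv ℂ F x (0, 1)).1 = 0 := by
  have hd := h.centered.vertCoeff_ne_zero h.centeredGerm_basePoint hq
    (h.injective_fderiv_centeredGerm_iff.2 hi)
  have hc := (h.centered.segrePair h.centeredGerm_basePoint).vertVec_eq_zero hp hq hd hm
  have hvert : fderiv ℂ (centeredGerm β₁ p β₂ q F x) basePoint (0, 1) =
      (0, vertCoeff (centeredGerm β₁ p β₂ q F x)) := Prod.ext hc rfl
  have hchain := h.fderiv_apply_fderiv_bundleAut (0, 1)
  rw [hvert, fderiv_bundleAut_vertical h.mem, fderiv_bundleAut_vertical h.apply_mem,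
    show ((0, x.2 * 1) : (Fin n → ℂ) × ℂ) = x.2 • (0, 1) by ext <;> simp, map_smul] at hchain
  exact (smul_eq_zero.1 (congrArg Prod.fst hchain)).resolve_left
    (snd_ne_zero_of_mem_circBundle h.mem)

lemma eventually_fst_fderiv_vertical_eq_zero (h : CRGerm β₁ p β₂ q F basePoint)
    (hp : ∀ i, 0 < p i) (hq : ∀ i, 0 < q i) (hi : Function.Injective (fderiv ℂ F basePoint))
    (hm : β₁ m ≠ β₁ m') : ∀ᶠ P in 𝓝 basePoint, (fderiv ℂ F P (0, 1)).1 = 0 := by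
  refine eventually_of_eventually_segre (p := p) (β₁ := β₁)
    (eventually_eq_zero_of_circBundle (H := fun R => (fderiv ℂ F R.1 (0, 1)).1) ?_ ?_)
  · filter_upwards [continuousAt_fst.eventually h.differentiableAt.eventually_nhds] with R hR
    exact ((differentiableAt_fderiv_apply (0, 1) hR).comp R differentiableAt_fst).fst
  · filter_upwards [h.eventually, h.eventually_injective_fderiv hi] with x hx hxi hxm
    exact (hx hxm).fst_fderiv_vertical_eq_zero hp hq hxi hm

lemma eventually_fst_eq_horizMap (h : CRGerm β₁ p β₂ q F basePoint) (h1 : F basePoint = basePoint)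
    (hp : ∀ i, 0 < p i) (hq : ∀ i, 0 < q i) (hi : Function.Injective (fderiv ℂ F basePoint))
    (hm : β₁ m ≠ β₁ m') : ∀ᶠ P in 𝓝 basePoint, (F P).1 = horizMap F P.1 := by
  have : NeZero n := ⟨fun h0 => (h0 ▸ m).elim0⟩
  have hd := h.vertCoeff_ne_zero h1 hq hi
  have hpair := h.segrePair h1
  have hc : vertVec (conjMap F) = 0 :=
    hpair.symm.vertVec_eq_zero hp hq (hpair.vertCoeff_eq hp ▸ hd) hm
  have hlin : ∀ᶠ z in 𝓝 (0 : Fin n → ℂ), (F (z, 1)).1 = horizMap F z := by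
    filter_upwards [hpair.eventually_fst_eq hp hq hd] with z hz
    rw [hz.2, poleForm_apply, hc, map_zero, mul_zero, sub_zero, inv_one, one_smul]
  have hconst := eventually_eq_of_fderiv_snd_eq_zero (f := fun P => (F P).1)
    (a := (0 : Fin n → ℂ)) (b := 1)
    (h.differentiableAt.mono fun P hP => hP.fst) (by
      filter_upwards [h.differentiableAt, h.eventually_fst_fderiv_vertical_eq_zero hp hq hi hm]
        with P hP h0
      rw [fderiv.fst hP]
      exact h0)
  filter_upwards [hconst, continuousAt_fst.eventually hlin] with P hP hPlin
  exact hP.trans hPlin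

end CRGerm

/-- The second component of `F` along the fibre over `0`. -/
def fibreMap (F : (Fin n → ℂ) × ℂ → (Fin n → ℂ) × ℂ) (ξ : ℂ) : ℂ := (F (0, ξ)).2

namespace SegrePair

lemma fibreMap_one (h : SegrePair β₁ p β₂ q F G) : fibreMap F 1 = 1 :=
  congrArg Prod.snd h.map_left

lemma eventually_differentiableAt_fibreMap (h : SegrePair β₁ p β₂ q F G) :
    ∀ᶠ ξ in 𝓝 1, DifferentiableAt ℂ (fibreMap F) ξ := by
  have hlift : Tendsto (fun ξ : ℂ => ((0 : Fin n → ℂ), ξ)) (𝓝 1) (𝓝 basePoint) :=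
    Continuous.tendsto' (by fun_prop) _ _ rfl
  filter_upwards [hlift.eventually h.differentiableAt_left] with ξ hξ
  exact (hξ.comp ξ (f := fun ξ : ℂ => ((0 : Fin n → ℂ), ξ)) (by fun_prop)).snd

lemma eventually_snd_mul_fibreMap_inv (h : SegrePair β₁ p β₂ q F G)
    (hG : ∀ᶠ P in 𝓝 basePoint, (G P).1 = horizMap G P.1) :
    ∀ᶠ P in 𝓝 basePoint, (F P).2 * fibreMap G P.2⁻¹ = 1 := by
  have hG' : ∀ᶠ R : ((Fin n → ℂ) × ℂ) × ((Fin n → ℂ) × ℂ) in 𝓝 (basePoint, basePoint),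
      Segre β₁ p R.1 R.2 → Segre β₂ q (F R.1) (G R.2) ∧ (G R.2).1 = horizMap G R.2.1 := by
    filter_upwards [h.map_segre, continuousAt_snd.eventually hG] with R hR hGR hseg
    exact ⟨hR hseg, hGR⟩
  filter_upwards [eventually_of_eventually_segre hG'] with P hP
  simpa [Segre, hP.2, fibreMap] using hP.1

lemma eventually_snd_eq_fibreMap (h : SegrePair β₁ p β₂ q F G)
    (hG : ∀ᶠ P in 𝓝 basePoint, (G P).1 = horizMap G P.1) :
    ∀ᶠ P in 𝓝 basePoint, (F P).2 = fibreMap F P.2 := by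
  have hfibre : Tendsto (fun P : (Fin n → ℂ) × ℂ => ((0 : Fin n → ℂ), P.2)) (𝓝 basePoint)
      (𝓝 basePoint) := Continuous.tendsto' (by fun_prop) _ _ rfl
  filter_upwards [h.eventually_snd_mul_fibreMap_inv hG,
    hfibre.eventually (h.eventually_snd_mul_fibreMap_inv hG)] with P hP hP0
  exact mul_right_cancel₀ (right_ne_zero_of_mul_eq_one hP) (hP.trans (Eq.symm hP0))

lemma eventually_fibreMap_gnormPolar_mul (h : SegrePair β₁ p β₂ q F G)
    (hF : ∀ᶠ P in 𝓝 basePoint, (F P).1 = horizMap F P.1)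
    (hG : ∀ᶠ P in 𝓝 basePoint, (G P).1 = horizMap G P.1) :
    ∀ᶠ T : ℂ × (Fin n → ℂ) × (Fin n → ℂ) in 𝓝 (1, 0, 0),
      fibreMap F (gnormPolar β₁ p T.2.1 T.2.2 * T.1) =
        gnormPolar β₂ q (horizMap F T.2.1) (horizMap G T.2.2) * fibreMap F T.1 := by
  have hne : ∀ᶠ T : ℂ × (Fin n → ℂ) × (Fin n → ℂ) in 𝓝 (1, 0, 0), T.1 ≠ 0 :=
    ContinuousAt.eventually_ne continuousAt_fst one_ne_zero
  have hleft : Tendsto (fun T : ℂ × (Fin n → ℂ) × (Fin n → ℂ) =>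
      (T.2.1, gnormPolar β₁ p T.2.1 T.2.2 * T.1)) (𝓝 (1, 0, 0)) (𝓝 basePoint) :=
    (Differentiable.continuous (𝕜 := ℂ) fun T => by fun_prop).tendsto' _ _ (by simp [basePoint])
  have hright : Tendsto (fun T : ℂ × (Fin n → ℂ) × (Fin n → ℂ) => (T.2.2, T.1⁻¹))
      (𝓝 (1, 0, 0)) (𝓝 basePoint) := by
    have hc : ContinuousAt (fun T : ℂ × (Fin n → ℂ) × (Fin n → ℂ) => (T.2.2, T.1⁻¹)) (1, 0, 0) :=
      ContinuousAt.prodMk (by fun_prop) (continuousAt_fst.inv₀ one_ne_zero)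
    simpa [ContinuousAt, basePoint] using hc
  filter_upwards [(hleft.prodMk_nhds hright).eventually h.map_segre, hleft.eventually hF,
    hright.eventually hG, hleft.eventually (h.eventually_snd_eq_fibreMap hG),
    hright.eventually (h.symm.eventually_snd_mul_fibreMap_inv hF), hne] with T hseg h1 h2 h3 h4 h0
  have hmul := hseg (by simp [Segre, h0])
  simp only [Segre, h1, h2, h3] at hmul
  rw [inv_inv] at h4
  rw [← hmul, mul_assoc, h4, mul_one]

lemma eventually_hasDerivAt_fibreMap [NeZero n] (h : SegrePair β₁ p β₂ q F G)
    (hF : ∀ᶠ P in 𝓝 basePoint, (F P).1 = horizMap F P.1)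
    (hG : ∀ᶠ P in 𝓝 basePoint, (G P).1 = horizMap G P.1) (hp : ∀ i, 0 < p i) :
    ∀ᶠ t in 𝓝 1, HasDerivAt (fibreMap F) (vertCoeff G * fibreMap F t / t) t := by
  have hcurry := (nhds_prod_eq (X := ℂ) (Y := (Fin n → ℂ) × (Fin n → ℂ)) ▸
    h.eventually_fibreMap_gnormPolar_mul hF hG).curry
  filter_upwards [hcurry, h.eventually_differentiableAt_fibreMap, eventually_ne_nhds one_ne_zero]
    with t ht hdiff ht0
  refine hdiff.hasDerivAt.congr_deriv ?_
  set e : Fin n → ℂ := Pi.single 0 1 with he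
  have hline : Tendsto (fun c : ℂ => c • e) (𝓝 0) (𝓝 0) :=
    Continuous.tendsto' (by fun_prop) _ _ (by simp)
  rw [nhds_prod_eq] at ht
  obtain ⟨c, hc, hc0⟩ := (((hline.mono_left nhdsWithin_le_nhds).eventually ht.curry).and
    (self_mem_nhdsWithin (a := (0 : ℂ)) (s := {0}ᶜ))).exists
  have hleft := (hasDerivAt_gnormPolar_right (β := β₁) (p := p) (hasDerivAt_smul_vec e)
    (by simp) (c • e)).mul_const t
  have hright := (hasDerivAt_gnormPolar_right (β := β₂) (p := q)
    (((horizMap G).hasFDerivAt).comp_hasDerivAt (0 : ℂ) (hasDerivAt_smul_vec e))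
    (by simp) (horizMap F (c • e))).mul_const (fibreMap F t)
  have hcomp : HasDerivAt (fibreMap F) (deriv (fibreMap F) t)
      (gnormPolar β₁ p (c • e) ((0 : ℂ) • e) * t) := by
    simpa using hdiff.hasDerivAt
  have huniq := (hcomp.comp (0 : ℂ) hleft).unique
    (hright.congr_of_eventuallyEq
      (f₁ := fibreMap F ∘ fun s => gnormPolar β₁ p (c • e) (s • e) * t) (hline.eventually hc))
  rw [h.weightedForm_horizMap] at huniq
  have hform : weightedForm β₁ p (c • e) e ≠ 0 := by
    simpa [he, weightedForm_single_right, (hp (β₁ 0)).ne'] using hc0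
  rw [eq_div_iff ht0]
  exact mul_left_cancel₀ hform (by linear_combination -huniq)

lemma eventually_fibreMap_eq_self [NeZero n] (h : SegrePair β₁ p β₂ q F G)
    (hF : ∀ᶠ P in 𝓝 basePoint, (F P).1 = horizMap F P.1)
    (hG : ∀ᶠ P in 𝓝 basePoint, (G P).1 = horizMap G P.1) (hp : ∀ i, 0 < p i)
    (hd : vertCoeff G = 1) : ∀ᶠ t in 𝓝 1, fibreMap F t = t := by
  obtain ⟨r, hr, hball⟩ := Metric.eventually_nhds_iff_ball.1
    ((h.eventually_hasDerivAt_fibreMap hF hG hp).and (eventually_ne_nhds one_ne_zero))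
  have hderiv : ∀ t ∈ ball (1 : ℂ) r, HasDerivAt (fun t => fibreMap F t / t) 0 t := fun t ht => by
    obtain ⟨h1, h0⟩ := hball t ht
    refine (h1.fun_div (hasDerivAt_id t) h0).congr_deriv ?_
    simp [hd, h0]
  filter_upwards [ball_mem_nhds _ hr] with t ht
  have hconst := isOpen_ball.is_const_of_deriv_eq_zero (convex_ball (1 : ℂ) r).isPreconnected
    (fun s hs => (hderiv s hs).differentiableAt.differentiableWithinAt)
    (fun s hs => (hderiv s hs).deriv) ht (mem_ball_self hr)
  rwa [h.fibreMap_one, div_one, div_eq_one_iff_eq (hball t ht).2] at hconst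

end SegrePair

lemma eventually_one_sub_mul_ne_zero {ι : Type*} [Finite ι] (x : ι → ℂ) :
    ∀ᶠ u in 𝓝 (0 : ℂ), ∀ i, 1 - u * x i ≠ 0 :=
  eventually_all.2 fun _ => Tendsto.eventually_ne
    (Continuous.tendsto' (by fun_prop) _ 1 (by simp)) one_ne_zero

lemma logDeriv_prod_one_sub_mul_pow {ι : Type*} [Fintype ι] {x : ι → ℂ} (p : ι → ℕ) {u : ℂ}
    (hu : ∀ i, 1 - u * x i ≠ 0) :
    logDeriv (fun u => ∏ i, (1 - u * x i) ^ p i) u = -∑ i, p i * (x i / (1 - u * x i)) := by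
  have hderiv : ∀ i, HasDerivAt (fun u => 1 - u * x i) (-x i) u := fun i => by
    simpa using ((hasDerivAt_id u).mul_const (x i)).const_sub 1
  rw [logDeriv_prod (f := fun i u => (1 - u * x i) ^ p i) (fun i _ => pow_ne_zero _ (hu i))
    (fun i _ => ((hderiv i).fun_pow (p i)).differentiableAt), ← Finset.sum_neg_distrib]
  refine Finset.sum_congr rfl fun i _ => ?_
  rw [logDeriv_fun_pow (hderiv i).differentiableAt, logDeriv_apply, (hderiv i).deriv, neg_div,
    mul_neg]

namespace SegrePair

lemma eventually_fibreMap_prod_blockForm (h : SegrePair β₁ p β₂ q F G)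
    (hF : ∀ᶠ P in 𝓝 basePoint, (F P).1 = horizMap F P.1)
    (hG : ∀ᶠ P in 𝓝 basePoint, (G P).1 = horizMap G P.1) (z w : Fin n → ℂ) : ∀ᶠ u in 𝓝 0,
      fibreMap F (∏ i, (1 - u * blockForm β₁ i z w) ^ p i) =
        ∏ j, (1 - u * blockForm β₂ j (horizMap F z) (horizMap G w)) ^ q j := by
  have hline : Tendsto (fun c : ℂ => c • z) (𝓝[≠] 0) (𝓝 0) :=
    (Continuous.tendsto' (by fun_prop) _ _ (by simp)).mono_left nhdsWithin_le_nhds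
  have hcurry := (nhds_prod_eq (X := ℂ) (Y := (Fin n → ℂ) × (Fin n → ℂ)) ▸
    h.eventually_fibreMap_gnormPolar_mul hF hG).curry.self_of_nhds
  rw [nhds_prod_eq] at hcurry
  obtain ⟨c, hc, hc0 : c ≠ 0⟩ :=
    ((hline.eventually hcurry.curry).and self_mem_nhdsWithin).exists
  have hscale : Tendsto (fun u : ℂ => (u / c) • w) (𝓝 0) (𝓝 0) :=
    Continuous.tendsto' (by fun_prop) _ _ (by simp)
  filter_upwards [hscale.eventually hc] with u hu
  simpa only [gnormPolar, map_smul, smul_apply, smul_eq_mul, ← mul_assoc, mul_one,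
    div_mul_cancel₀ u hc0, h.fibreMap_one] using hu

lemma eventually_sum_div_blockForm [NeZero n] (h : SegrePair β₁ p β₂ q F G)
    (hF : ∀ᶠ P in 𝓝 basePoint, (F P).1 = horizMap F P.1)
    (hG : ∀ᶠ P in 𝓝 basePoint, (G P).1 = horizMap G P.1) (hp : ∀ i, 0 < p i)
    (z w : Fin n → ℂ) : ∀ᶠ u in 𝓝 0,
      ∑ j, q j * (blockForm β₂ j (horizMap F z) (horizMap G w) /
        (1 - u * blockForm β₂ j (horizMap F z) (horizMap G w))) =
      ∑ i, vertCoeff G * p i * (blockForm β₁ i z w / (1 - u * blockForm β₁ i z w)) := by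
  set a : ℂ → ℂ := fun u => ∏ i, (1 - u * blockForm β₁ i z w) ^ p i with ha
  set b : ℂ → ℂ := fun u => ∏ j, (1 - u * blockForm β₂ j (horizMap F z) (horizMap G w)) ^ q j
  have hab : ∀ᶠ u in 𝓝 0, fibreMap F (a u) = b u := h.eventually_fibreMap_prod_blockForm hF hG z w
  have hlim : Tendsto a (𝓝 0) (𝓝 1) := Continuous.tendsto' (by fun_prop) _ _ (by simp [ha])
  filter_upwards [hab.eventually_nhds,
    hlim.eventually (h.eventually_hasDerivAt_fibreMap hF hG hp),
    eventually_one_sub_mul_ne_zero fun i => blockForm β₁ i z w,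
    eventually_one_sub_mul_ne_zero fun j => blockForm β₂ j (horizMap F z) (horizMap G w)]
    with u hu hderiv hx hy
  have hlog : logDeriv b u = vertCoeff G * logDeriv a u := by
    have ha0 : a u ≠ 0 := Finset.prod_ne_zero_iff.2 fun i _ => pow_ne_zero _ (hx i)
    have hb0 : b u ≠ 0 := Finset.prod_ne_zero_iff.2 fun j _ => pow_ne_zero _ (hy j)
    have hadiff : DifferentiableAt ℂ a u := by fun_prop
    have hcomp := hderiv.comp u hadiff.hasDerivAt
    rw [logDeriv_apply, logDeriv_apply, (hcomp.congr_of_eventuallyEq (EventuallyEq.symm hu)).deriv,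
      hu.self_of_nhds]
    field_simp
  rw [logDeriv_prod_one_sub_mul_pow _ hx, logDeriv_prod_one_sub_mul_pow _ hy] at hlog
  simp only [mul_assoc, ← Finset.mul_sum]
  linear_combination -hlog

end SegrePair

namespace CRGerm

variable {m m' : Fin n}

lemma eventually_fst_conjMap_eq_horizMap (h : CRGerm β₁ p β₂ q F basePoint)
    (hF : ∀ᶠ P in 𝓝 basePoint, (F P).1 = horizMap F P.1) :
    ∀ᶠ P in 𝓝 basePoint, (conjMap F P).1 = horizMap (conjMap F) P.1 := by
  filter_upwards [eventually_conjMap hF] with P hP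
  rw [h.horizMap_conjMap, conjMap, Prod.fst_star, hP, Prod.fst_star]

lemma blockForm_horizMap_star (h : CRGerm β₁ p β₂ q F basePoint) (j : Fin l') (z : Fin n → ℂ) :
    blockForm β₂ j (horizMap F z) (horizMap (conjMap F) (star z)) =
      blockSq β₂ j (horizMap F z) := by
  rw [h.horizMap_conjMap, star_star, blockForm_star_self]

lemma sum_blockSq_horizMap (h : CRGerm β₁ p β₂ q F basePoint) (h1 : F basePoint = basePoint)
    (z : Fin n → ℂ) : ∑ j, (q j : ℂ) * blockSq β₂ j (horizMap F z) =
      vertCoeff (conjMap F) * ∑ i, (p i : ℂ) * blockSq β₁ i z := by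
  have hform := (h.segrePair h1).weightedForm_horizMap z (star z)
  simp only [weightedForm_eq_sum_blockForm, h.blockForm_horizMap_star, blockForm_star_self]
    at hform
  rw [hform, mul_comm]

lemma exists_blockSq_horizMap_equiv (h : CRGerm β₁ p β₂ q F basePoint)
    (h1 : F basePoint = basePoint) (hβ₁ : Function.Surjective β₁) (hβ₂ : Function.Surjective β₂)
    (hp : ∀ i, 0 < p i) (hq : ∀ j, 0 < q j) (hi : Function.Injective (fderiv ℂ F basePoint))
    (hm : β₁ m ≠ β₁ m') :
    ∃ τ : Fin l' ≃ Fin l, ∀ j z, blockSq β₂ j (horizMap F z) = blockSq β₁ (τ j) z := by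
  have : NeZero n := ⟨fun h0 => (h0 ▸ m).elim0⟩
  have hd : vertCoeff (conjMap F) ≠ 0 :=
    h.vertCoeff_conjMap ▸ star_ne_zero.2 (h.vertCoeff_ne_zero h1 hq hi)
  have hF := h.eventually_fst_eq_horizMap h1 hp hq hi hm
  have hsum (z : Fin n → ℂ) := (h.segrePair h1).eventually_sum_div_blockForm hF
    (h.eventually_fst_conjMap_eq_horizMap hF) hp z (star z)
  simp only [h.blockForm_horizMap_star, blockForm_star_self] at hsum
  refine exists_blockSq_map_equiv (M := (horizMap F).toLinearMap) hβ₁ hβ₂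
    ((h.segrePair h1).horizMap_surjective hp hd) (fun z j hj => ?_) fun z i hi' => ?_
  · obtain ⟨i, hi'⟩ := exists_eq_of_eventually_sum_div_eq hq (hsum z) (ofReal_ne_zero.2 hj)
    exact ⟨i, ofReal_inj.1 hi'⟩
  · have hswap : ∀ᶠ u in 𝓝 (0 : ℂ),
        ∑ i, p i * ((blockSq β₁ i z : ℂ) / (1 - u * blockSq β₁ i z)) =
        ∑ j, (q j / vertCoeff (conjMap F)) * ((blockSq β₂ j (horizMap F z) : ℂ) /
          (1 - u * blockSq β₂ j (horizMap F z))) := by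
      filter_upwards [hsum z] with u hu
      simp only [mul_assoc, ← Finset.mul_sum] at hu
      simp only [div_mul_eq_mul_div _ (vertCoeff (conjMap F)), ← Finset.sum_div, hu]
      rw [mul_div_cancel_left₀ _ hd]
    obtain ⟨j, hj⟩ := exists_eq_of_eventually_sum_div_eq hp hswap (ofReal_ne_zero.2 hi')
    exact ⟨j, ofReal_inj.1 hj⟩

lemma eventually_eq_horizMap (h : CRGerm β₁ p β₂ q F basePoint) (h1 : F basePoint = basePoint)
    (hp : ∀ i, 0 < p i) (hq : ∀ j, 0 < q j) (hi : Function.Injective (fderiv ℂ F basePoint))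
    (hm : β₁ m ≠ β₁ m') (hd : vertCoeff (conjMap F) = 1) :
    ∀ᶠ P in 𝓝 basePoint, F P = (horizMap F P.1, P.2) := by
  have : NeZero n := ⟨fun h0 => (h0 ▸ m).elim0⟩
  have hF := h.eventually_fst_eq_horizMap h1 hp hq hi hm
  have hG := h.eventually_fst_conjMap_eq_horizMap hF
  filter_upwards [hF, (h.segrePair h1).eventually_snd_eq_fibreMap hG,
    (continuousAt_snd (p := basePoint (n := n))).eventually
      ((h.segrePair h1).eventually_fibreMap_eq_self hF hG hp hd)] with P hfst hsnd hfibre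
  exact Prod.ext hfst (hsnd.trans hfibre)

theorem exists_blockEquiv_eventually_eq (h : CRGerm β₁ p β₂ q F basePoint)
    (h1 : F basePoint = basePoint) (hβ₁ : Function.Surjective β₁) (hβ₂ : Function.Surjective β₂)
    (hp : ∀ i, 0 < p i) (hq : ∀ j, 0 < q j) (hp1 : ∃ i, p i = 1) (hq1 : ∃ j, q j = 1)
    (hi : Function.Injective (fderiv ℂ F basePoint)) (hm : β₁ m ≠ β₁ m') :
    (∀ᶠ P in 𝓝 basePoint, F P = (horizMap F P.1, P.2)) ∧
      ∃ τ : Fin l' ≃ Fin l, q = p ∘ τ ∧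
        ∀ j z, blockSq β₂ j (horizMap F z) = blockSq β₁ (τ j) z := by
  obtain ⟨τ, hτ⟩ := h.exists_blockSq_horizMap_equiv h1 hβ₁ hβ₂ hp hq hi hm
  have hqp := natCast_eq_mul_of_forall_sum_eq (M := (horizMap F).toLinearMap) hβ₁ hτ
    (h.sum_blockSq_horizMap h1)
  have hd := eq_one_of_forall_natCast_eq_mul hqp hp1 hq1
  refine ⟨h.eventually_eq_horizMap h1 hp hq hi hm hd, τ, funext fun j => ?_, hτ⟩
  exact Nat.cast_injective ((hqp j).trans (by rw [hd, one_mul, Function.comp_apply]))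

end CRGerm

end SeveralBlocks

section SingleBlock

variable {n l l' : ℕ} {β₁ : Fin n → Fin l} {p : Fin l → ℕ} {β₂ : Fin n → Fin l'} {q : Fin l' → ℕ}
  {F G : (Fin n → ℂ) × ℂ → (Fin n → ℂ) × ℂ}

/-- The difference between `(1 - ξ')⁻¹`, where `ξ'` is the second coordinate of `F P`, and its
principal part along the hyperplane `P.2 = 1`. It is constant exactly when `F` is linear
fractional. -/
def poleRemainder (β₂ : Fin n → Fin l') (q : Fin l' → ℕ)
    (F G : (Fin n → ℂ) × ℂ → (Fin n → ℂ) × ℂ) (P : (Fin n → ℂ) × ℂ) : ℂ :=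
  (1 - (F P).2)⁻¹ - (1 - poleForm β₂ q F G P.1) / (vertCoeff F * (1 - P.2))

lemma eqOn_zero_of_weightedForm_ne_zero (hp : ∀ i, 0 < p i) {z : Fin n → ℂ} (hz : z ≠ 0) {r : ℝ}
    {f : (Fin n → ℂ) × ℂ → ℂ} (hf : ∀ Q ∈ ball basePoint r, DifferentiableAt ℂ f Q)
    (h : ∀ w ∈ ball 0 r, weightedForm β₁ p z w ≠ 0 → ∀ᶠ η in 𝓝 (1 : ℂ), f (w, η) = 0) :
    Set.EqOn f 0 (ball basePoint r) := by
  have hne : ∀ Q ∈ ball (basePoint (n := n)) r, weightedForm β₁ p z Q.1 ≠ 0 → f Q = 0 := by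
    rintro ⟨w, η⟩ hQ hzw
    rw [basePoint, ← ball_prod_same] at hQ
    have hw : ((w, 1) : (Fin n → ℂ) × ℂ) ∈ ball (basePoint (n := n)) r := by
      rw [basePoint, ← ball_prod_same]
      exact ⟨hQ.1, mem_ball_self (pos_of_mem_ball hQ.1)⟩
    have ht : Tendsto (fun t : ℂ => 1 + t) (𝓝[≠] 0) (𝓝 1) :=
      (Continuous.tendsto' (by fun_prop) _ _ (by simp)).mono_left nhdsWithin_le_nhds
    have hline := eq_zero_on_line (t := η - 1) (b := (0, 1)) hf hw
      (Eventually.frequently <| by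
        filter_upwards [ht.eventually (h w hQ.1 hzw)] with t ht using by simpa using ht)
      (by simpa [basePoint, ← ball_prod_same] using hQ)
    simpa using hline
  intro Q hQ
  by_cases hzQ : weightedForm β₁ p z Q.1 = 0
  · have ht : Tendsto (fun t : ℂ => Q + t • (star z, (0 : ℂ))) (𝓝[≠] 0) (𝓝 Q) :=
      (Continuous.tendsto' (by fun_prop) _ _ (by simp)).mono_left nhdsWithin_le_nhds
    have hline := eq_zero_on_line (t := 0) (b := (star z, 0)) hf hQ
      (Eventually.frequently <| by
        filter_upwards [ht.eventually (isOpen_ball.mem_nhds hQ), eventually_mem_nhdsWithin] with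
          t ht ht0
        refine hne _ ht ?_
        simpa [hzQ] using ⟨ht0, mt (eq_zero_of_weightedForm_star_self hp) hz⟩)
      (by simpa using hQ)
    simpa using hline
  · exact hne Q hQ hzQ

namespace SegrePair

lemma eventually_weightedForm_snd_of_ne_zero [NeZero n] (h : SegrePair β₁ p β₂ q F G)
    (hp : ∀ i, 0 < p i) (hq : ∀ i, 0 < q i) (hd : vertCoeff F ≠ 0)
    (h₁ : ∀ z w, gnormPolar β₁ p z w = 1 - weightedForm β₁ p z w)
    (h₂ : ∀ z w, gnormPolar β₂ q z w = 1 - weightedForm β₂ q z w) :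
    ∀ᶠ w in 𝓝 (0 : Fin n → ℂ), ∀ z, weightedForm β₁ p z w ≠ 0 → ∀ᶠ η in 𝓝 (1 : ℂ),
      (1 - η) * (weightedForm β₂ q (horizMap F z) (G (w, η)).1 +
        (1 - (G (w, η)).2) * poleForm β₂ q F G z) =
      (1 - (G (w, η)).2) * weightedForm β₁ p z w := by
  have hswap : Tendsto (fun T : (Fin n → ℂ) × (Fin n → ℂ) => (T.2, T.1)) (𝓝 (0, 0)) (𝓝 (0, 0)) :=
    Continuous.tendsto' (by fun_prop) _ _ rfl
  filter_upwards [(hswap.eventually h.eventually_snd_eq_gnormPolar).curry_nhds] with w hw z hz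
  have ht : Tendsto (fun η : ℂ => ((1 - η) / weightedForm β₁ p z w) • z) (𝓝 1) (𝓝 0) :=
    Continuous.tendsto' (by fun_prop) _ _ (by simp)
  filter_upwards [ht.eventually hw, ht.eventually (h.eventually_fst_eq hp hq hd)] with
    η hη ⟨hne, hfst⟩
  have hρ : gnormPolar β₁ p (((1 - η) / weightedForm β₁ p z w) • z) w = η := by
    simp [h₁, hz]
  rw [hρ, h₂, hfst] at hη
  simp only [map_smul, smul_apply, smul_eq_mul] at hη hne
  field_simp at hη hne
  have hne' := (div_ne_zero_iff.1 hne).1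
  field_simp at hη
  linear_combination hη

lemma eventually_weightedForm_snd [NeZero n] (h : SegrePair β₁ p β₂ q F G)
    (hp : ∀ i, 0 < p i) (hq : ∀ i, 0 < q i) (hd : vertCoeff F ≠ 0)
    (h₁ : ∀ z w, gnormPolar β₁ p z w = 1 - weightedForm β₁ p z w)
    (h₂ : ∀ z w, gnormPolar β₂ q z w = 1 - weightedForm β₂ q z w) :
    ∀ᶠ Q in 𝓝 basePoint, ∀ z, (1 - Q.2) * (weightedForm β₂ q (horizMap F z) (G Q).1 +
        (1 - (G Q).2) * poleForm β₂ q F G z) = (1 - (G Q).2) * weightedForm β₁ p z Q.1 := by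
  obtain ⟨r, hr, hball⟩ := Metric.eventually_nhds_iff_ball.1 h.differentiableAt_right
  obtain ⟨s, hs, hne⟩ := Metric.eventually_nhds_iff_ball.1
    (h.eventually_weightedForm_snd_of_ne_zero hp hq hd h₁ h₂)
  filter_upwards [ball_mem_nhds _ (lt_min hr hs)] with Q hQ z
  rcases eq_or_ne z 0 with rfl | hz
  · simp
  refine sub_eq_zero.1 (eqOn_zero_of_weightedForm_ne_zero (β₁ := β₁) (f := fun Q =>
    (1 - Q.2) * (weightedForm β₂ q (horizMap F z) (G Q).1 + (1 - (G Q).2) * poleForm β₂ q F G z) -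
      (1 - (G Q).2) * weightedForm β₁ p z Q.1) hp hz (fun Q hQ => ?_) (fun w hw hzw => ?_) hQ)
  · have := hball Q (ball_subset_ball (min_le_left _ _) hQ)
    fun_prop
  · filter_upwards [hne w (ball_subset_ball (min_le_right _ _) hw) z hzw] with η hη
      using sub_eq_zero.2 hη

lemma eventually_smul_snd_fst_eq [NeZero n] (h : SegrePair β₁ p β₂ q F G)
    (hp : ∀ i, 0 < p i) (hq : ∀ i, 0 < q i) (hd : vertCoeff F ≠ 0)
    (h₁ : ∀ z w, gnormPolar β₁ p z w = 1 - weightedForm β₁ p z w)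
    (h₂ : ∀ z w, gnormPolar β₂ q z w = 1 - weightedForm β₂ q z w) :
    ∀ᶠ Q in 𝓝 basePoint, (1 - Q.2) • (G Q).1 =
      ((1 - (G Q).2) / vertCoeff G) • (horizMap G Q.1 - (1 - Q.2) • vertVec G) := by
  have hd' : vertCoeff G ≠ 0 := h.vertCoeff_eq hp ▸ hd
  filter_upwards [h.eventually_weightedForm_snd hp hq hd h₁ h₂] with Q hQ
  refine sub_eq_zero.1 (eq_zero_of_forall_weightedForm_eq_zero (β := β₂) hq fun w => ?_)
  obtain ⟨z, rfl⟩ := h.horizMap_surjective hp hd' w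
  have hz := hQ z
  rw [poleForm_apply] at hz
  rw [weightedForm_comm]
  simp only [map_sub, map_smul, smul_eq_mul, h.weightedForm_horizMap]
  field_simp at hz ⊢
  linear_combination hz

lemma eventually_snd_ne_one (h : SegrePair β₁ p β₂ q F G) (hd : vertCoeff F ≠ 0) :
    ∀ᶠ P in 𝓝 basePoint, P.2 ≠ 1 → (F P).2 ≠ 1 := by
  have hstrict : HasStrictFDerivAt F (fderiv ℂ F basePoint) basePoint :=
    hasStrictFDerivAt_of_hasFDerivAt_of_continuousAt
      (h.differentiableAt_left.mono fun P hP => hP.hasFDerivAt)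
      (differentiableAt_fderiv h.differentiableAt_left).continuousAt
  have ht : Tendsto (fun P : (Fin n → ℂ) × ℂ => (P, (P.1, (1 : ℂ)))) (𝓝 basePoint)
      (𝓝 (basePoint, basePoint)) := Continuous.tendsto' (by fun_prop) _ _ rfl
  filter_upwards [ht.eventually (hstrict.isLittleO.def (half_pos (norm_pos_iff.2 hd))),
    (continuousAt_fst (p := basePoint (n := n))).eventually h.eventually_snd_eq_one] with
    P hP hP1 hne hF
  have hsub : P - (P.1, 1) = (0, P.2 - 1) := by ext <;> simp
  rw [hsub, h.fderiv_apply] at hP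
  have hsnd := (norm_snd_le _).trans hP
  simp only [Prod.snd_sub, hF, hP1, sub_self, zero_sub, norm_neg, norm_mul, Prod.norm_mk,
    norm_zero, max_eq_right (norm_nonneg _)] at hsnd
  nlinarith [mul_pos (norm_pos_iff.2 (sub_ne_zero.2 hne)) (norm_pos_iff.2 hd)]

lemma eventually_poleRemainder_add [NeZero n] (h : SegrePair β₁ p β₂ q F G)
    (hp : ∀ i, 0 < p i) (hq : ∀ i, 0 < q i) (hd : vertCoeff F ≠ 0)
    (h₁ : ∀ z w, gnormPolar β₁ p z w = 1 - weightedForm β₁ p z w)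
    (h₂ : ∀ z w, gnormPolar β₂ q z w = 1 - weightedForm β₂ q z w) :
    ∀ᶠ R in 𝓝 (basePoint, basePoint), Segre β₁ p R.1 R.2 → R.1.2 ≠ 1 → R.2.2 ≠ 1 →
      poleRemainder β₂ q F G R.1 + poleRemainder β₂ q G F R.2 = 1 - 1 / vertCoeff F +
        weightedForm β₂ q (vertVec F) (vertVec G) / vertCoeff F ^ 2 := by
  have hdeq := h.vertCoeff_eq hp
  have hd' : vertCoeff G ≠ 0 := hdeq ▸ hd
  filter_upwards [h.map_segre, continuousAt_fst.eventually (h.eventually_snd_ne_one hd),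
    continuousAt_snd.eventually (h.symm.eventually_snd_ne_one hd'),
    continuousAt_fst.eventually (h.symm.eventually_smul_snd_fst_eq hp hq hd' h₁ h₂),
    continuousAt_snd.eventually (h.eventually_smul_snd_fst_eq hp hq hd h₁ h₂)] with
    ⟨⟨z, ξ⟩, w, η⟩ hmap hFne hGne hF hG hR hξ hη
  have hFG := congrArg₂ (fun a b => weightedForm β₂ q a b) hF hG
  have hmap' := hmap hR
  have hFne' := sub_ne_zero.2 (hFne hξ).symm
  have hGne' := sub_ne_zero.2 (hGne hη).symm
  have hξ' := sub_ne_zero.2 (Ne.symm hξ)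
  have hη' := sub_ne_zero.2 (Ne.symm hη)
  simp only [Segre, h₁, h₂] at hR hmap'
  simp only [map_smul, map_sub, smul_apply, sub_apply, smul_eq_mul, h.weightedForm_horizMap] at hFG
  simp only [poleRemainder, poleForm_apply]
  rw [weightedForm_comm β₂ q (horizMap G w)]
  rw [eq_sub_iff_add_eq, ← eq_sub_iff_add_eq'] at hR hmap'
  rw [hmap', hR, ← hdeq] at hFG
  simp only [← hdeq]
  field_simp at hFG ⊢
  linear_combination hFG

lemma eventually_poleRemainder_eq_zero_left [NeZero n] (h : SegrePair β₁ p β₂ q F G)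
    (hp : ∀ i, 0 < p i) (hq : ∀ i, 0 < q i) (hd : vertCoeff F ≠ 0)
    (h₁ : ∀ z w, gnormPolar β₁ p z w = 1 - weightedForm β₁ p z w)
    (h₂ : ∀ z w, gnormPolar β₂ q z w = 1 - weightedForm β₂ q z w) :
    ∀ᶠ P in 𝓝 basePoint, P.2 ≠ 1 → poleRemainder β₂ q F G P = poleRemainder β₂ q F G (0, P.2) := by
  have hsum := h.eventually_poleRemainder_add hp hq hd h₁ h₂
  have ht (f : (Fin n → ℂ) → Fin n → ℂ) (hf : Continuous f) (hf0 : f 0 = 0) :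
      Tendsto (fun P : (Fin n → ℂ) × ℂ => ((f P.1, P.2), ((0 : Fin n → ℂ), P.2⁻¹)))
        (𝓝 basePoint) (𝓝 (basePoint, basePoint)) := by
    have : ContinuousAt (fun P : (Fin n → ℂ) × ℂ => ((f P.1, P.2), ((0 : Fin n → ℂ), P.2⁻¹)))
        basePoint := by fun_prop (disch := simp)
    simpa [ContinuousAt, hf0, basePoint] using this
  have hne : ∀ᶠ P in 𝓝 (basePoint (n := n)), P.2 ≠ 0 :=
    continuousAt_snd.eventually_ne (by simp)
  filter_upwards [(ht id continuous_id rfl).eventually hsum,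
    (ht (fun _ => 0) continuous_const rfl).eventually hsum, hne] with P hP hP0 hne hP1
  have hinv : P.2⁻¹ ≠ 1 := by simpa using hP1
  have hseg (z : Fin n → ℂ) : Segre β₁ p (z, P.2) (0, P.2⁻¹) := by simp [Segre, hne]
  exact add_right_cancel ((hP (hseg _) hP1 hinv).trans (hP0 (hseg _) hP1 hinv).symm)

lemma exists_eventually_poleRemainder_zero_left_eq [NeZero n] (h : SegrePair β₁ p β₂ q F G)
    (hp : ∀ i, 0 < p i) (hq : ∀ i, 0 < q i) (hd : vertCoeff F ≠ 0)
    (h₁ : ∀ z w, gnormPolar β₁ p z w = 1 - weightedForm β₁ p z w)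
    (h₂ : ∀ z w, gnormPolar β₂ q z w = 1 - weightedForm β₂ q z w) :
    ∃ k, ∀ᶠ ξ in 𝓝 (1 : ℂ), ξ ≠ 1 → poleRemainder β₂ q F G (0, ξ) = k := by
  have hzero := h.eventually_poleRemainder_eq_zero_left hp hq hd h₁ h₂
  have hswap : Tendsto (fun T : (Fin n → ℂ) × ((Fin n → ℂ) × ℂ) × ℂ => (T.2.1, (T.1, T.2.2)))
      (𝓝 (0, (basePoint, 1))) (𝓝 (basePoint, basePoint)) :=
    Continuous.tendsto' (by fun_prop) _ _ rfl
  have hcurry := (hswap.eventually (h.eventually_poleRemainder_add hp hq hd h₁ h₂)).curry_nhds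
  set e : Fin n → ℂ := Pi.single 0 1 with he
  have hc : Tendsto (fun c : ℂ => c • e) (𝓝[≠] 0) (𝓝 0) :=
    (Continuous.tendsto' (by fun_prop) _ _ (by simp)).mono_left nhdsWithin_le_nhds
  obtain ⟨c, hsum, hc0⟩ := ((hc.eventually hcurry).and eventually_mem_nhdsWithin).exists
  have hb : weightedForm β₁ p e (c • e) ≠ 0 := by
    simpa [he, weightedForm_single_right, (hp _).ne'] using hc0
  have ht : Tendsto (fun T : ℂ × ℂ =>
      ((((1 - T.2 * T.1) / weightedForm β₁ p e (c • e)) • e, T.2), T.1))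
      (𝓝 (1, 1)) (𝓝 (basePoint, 1)) :=
    Continuous.tendsto' (by fun_prop) _ _ (by simp [basePoint])
  have hboth := ((ht.eventually hsum).and
    ((continuous_fst.tendsto _).comp ht |>.eventually hzero)).curry_nhds
  obtain ⟨η, hη, hη1⟩ := ((hboth.filter_mono (nhdsWithin_le_nhds (s := {1}ᶜ))).and
    eventually_mem_nhdsWithin).exists
  refine ⟨1 - 1 / vertCoeff F + weightedForm β₂ q (vertVec F) (vertVec G) / vertCoeff F ^ 2 -
    poleRemainder β₂ q G F (c • e, η), ?_⟩
  filter_upwards [hη] with ξ ⟨hadd, hz⟩ hξ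
  refine eq_sub_of_add_eq ((hz hξ).symm ▸ hadd ?_ hξ hη1)
  rw [Segre, h₁, map_smul (weightedForm β₁ p), smul_apply, smul_eq_mul, div_mul_cancel₀ _ hb,
    sub_sub_cancel]

lemma exists_eventually_poleRemainder_eq [NeZero n] (h : SegrePair β₁ p β₂ q F G)
    (hp : ∀ i, 0 < p i) (hq : ∀ i, 0 < q i) (hd : vertCoeff F ≠ 0)
    (h₁ : ∀ z w, gnormPolar β₁ p z w = 1 - weightedForm β₁ p z w)
    (h₂ : ∀ z w, gnormPolar β₂ q z w = 1 - weightedForm β₂ q z w) :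
    ∃ k, ∀ᶠ P in 𝓝 basePoint, P.2 ≠ 1 → poleRemainder β₂ q F G P = k := by
  obtain ⟨k, hk⟩ := h.exists_eventually_poleRemainder_zero_left_eq hp hq hd h₁ h₂
  refine ⟨k, ?_⟩
  filter_upwards [h.eventually_poleRemainder_eq_zero_left hp hq hd h₁ h₂,
    (continuousAt_snd (p := basePoint (n := n))).eventually hk] with P hP hkP hP1
    using (hP hP1).trans (hkP hP1)

lemma eventually_apply_eq [NeZero n] (h : SegrePair β₁ p β₂ q F G)
    (hp : ∀ i, 0 < p i) (hq : ∀ i, 0 < q i) (hd : vertCoeff F ≠ 0)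
    (h₁ : ∀ z w, gnormPolar β₁ p z w = 1 - weightedForm β₁ p z w)
    (h₂ : ∀ z w, gnormPolar β₂ q z w = 1 - weightedForm β₂ q z w) {k : ℂ}
    (hk : ∀ᶠ P in 𝓝 basePoint, P.2 ≠ 1 → poleRemainder β₂ q F G P = k) :
    ∀ᶠ P in 𝓝 basePoint, P.2 ≠ 1 → ∀ ν : ℂ,
      ν = (1 - poleForm β₂ q F G P.1) / vertCoeff F + k * (1 - P.2) →
      F P = ((vertCoeff F * ν)⁻¹ • (horizMap F P.1 - (1 - P.2) • vertVec F),
        1 - (1 - P.2) / ν) := by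
  have hd' : vertCoeff G ≠ 0 := h.vertCoeff_eq hp ▸ hd
  filter_upwards [hk, h.eventually_snd_ne_one hd,
    h.symm.eventually_smul_snd_fst_eq hp hq hd' h₁ h₂] with P hkP hFne hF hP ν hν
  have hξ := sub_ne_zero.2 hP.symm
  have hξ' := sub_ne_zero.2 (hFne hP).symm
  have hmul : ν * (1 - (F P).2) = 1 - P.2 := by
    rw [hν, ← hkP hP, poleRemainder]
    field_simp
    ring
  have hν0 : ν ≠ 0 := left_ne_zero_of_mul (hmul ▸ hξ)
  have hsnd : 1 - (F P).2 = (1 - P.2) / ν := eq_div_of_mul_eq hν0 ((mul_comm _ _).trans hmul)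
  refine Prod.ext ?_ (by simp [← hsnd])
  rw [← smul_right_inj hξ, hF, hsnd, smul_smul]
  congr 1
  field_simp

end SegrePair

namespace CRGerm

lemma vertVec_conjMap (h : CRGerm β₁ p β₂ q F basePoint) :
    vertVec (conjMap F) = star (vertVec F) := by
  rw [vertVec, fderiv_conjMap h.differentiableAt, vertVec,
    show star ((0, 1) : (Fin n → ℂ) × ℂ) = (0, 1) by ext <;> simp, Prod.fst_star]

lemma poleRemainder_conjMap (h : CRGerm β₁ p β₂ q F basePoint) (Q : (Fin n → ℂ) × ℂ) :
    poleRemainder β₂ q (conjMap F) F Q = star (poleRemainder β₂ q F (conjMap F) (star Q)) := by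
  simp only [poleRemainder, poleForm_apply, h.vertCoeff_conjMap, h.horizMap_conjMap,
    h.vertVec_conjMap]
  simp [conjMap, star_weightedForm]

lemma exists_eventually_poleRemainder_eq [NeZero n] (h : CRGerm β₁ p β₂ q F basePoint)
    (h1 : F basePoint = basePoint) (hp : ∀ i, 0 < p i) (hq : ∀ i, 0 < q i) (hd : vertCoeff F ≠ 0)
    (h₁ : ∀ z w, gnormPolar β₁ p z w = 1 - weightedForm β₁ p z w)
    (h₂ : ∀ z w, gnormPolar β₂ q z w = 1 - weightedForm β₂ q z w) :
    ∃ k, (∀ᶠ P in 𝓝 basePoint, P.2 ≠ 1 → poleRemainder β₂ q F (conjMap F) P = k) ∧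
      k + star k = 1 - 1 / vertCoeff F +
        weightedForm β₂ q (vertVec F) (star (vertVec F)) / vertCoeff F ^ 2 := by
  have hpair := h.segrePair h1
  obtain ⟨k, hk⟩ := hpair.exists_eventually_poleRemainder_eq hp hq hd h₁ h₂
  refine ⟨k, hk, ?_⟩
  have ht : Tendsto (fun ξ : ℂ => (((0 : Fin n → ℂ), ξ), ((0 : Fin n → ℂ), ξ⁻¹))) (𝓝[≠] 1)
      (𝓝 (basePoint, basePoint)) := by
    have : ContinuousAt (fun ξ : ℂ => (((0 : Fin n → ℂ), ξ), ((0 : Fin n → ℂ), ξ⁻¹))) 1 := by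
      fun_prop (disch := simp)
    simpa [basePoint] using this.tendsto.mono_left nhdsWithin_le_nhds
  have hne : ∀ᶠ ξ in 𝓝[≠] (1 : ℂ), ξ ≠ 0 :=
    nhdsWithin_le_nhds (continuousAt_id.eventually_ne one_ne_zero)
  obtain ⟨ξ, hsum, hkξ, hkξ', hξ0, hξ⟩ := ((ht.eventually
    (hpair.eventually_poleRemainder_add hp hq hd h₁ h₂)).and
    ((ht.eventually (continuousAt_fst.eventually hk)).and
    ((ht.eventually (continuousAt_snd.eventually (eventually_conjMap hk))).and
    (hne.and eventually_mem_nhdsWithin)))).exists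
  have hξ' : ξ ≠ 1 := hξ
  have hadd := hsum (by simp [Segre, hξ0]) hξ (by simpa using hξ')
  rwa [hkξ hξ, h.poleRemainder_conjMap, hkξ' fun hstar => hξ' (by simpa using congrArg star hstar),
    h.vertVec_conjMap] at hadd

end CRGerm

end SingleBlock

section RationalMaps

variable {n : ℕ} {s t : Set ((Fin n → ℂ) × ℂ)} {f g : (Fin n → ℂ) × ℂ → ℂ}
  {G H : (Fin n → ℂ) × ℂ → (Fin n → ℂ) × ℂ}

/-- The function `f` agrees on `s` with a quotient of polynomials whose denominator has no zero
on `s`; nothing is asked of `f` outside `s`. -/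
def RatOn (s : Set ((Fin n → ℂ) × ℂ)) (f : (Fin n → ℂ) × ℂ → ℂ) : Prop :=
  ∃ R Q : MvPolynomial (Fin n ⊕ Unit) ℂ, ∀ P ∈ s, evalP Q P ≠ 0 ∧ f P = evalP R P / evalP Q P

/-- Every component of the map `G` is rational without poles on `s`. -/
structure RatMap (s : Set ((Fin n → ℂ) × ℂ)) (G : (Fin n → ℂ) × ℂ → (Fin n → ℂ) × ℂ) : Prop where
  ratOn_fst (j : Fin n) : RatOn s fun P => (G P).1 j
  ratOn_snd : RatOn s fun P => (G P).2

lemma differentiable_evalP (R : MvPolynomial (Fin n ⊕ Unit) ℂ) : Differentiable ℂ (evalP R) := by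
  unfold evalP
  induction R using MvPolynomial.induction_on with
  | C a => simp
  | add p q hp hq => simpa only [MvPolynomial.eval_add] using hp.fun_add hq
  | mul_X p i hp =>
    simp only [MvPolynomial.eval_mul, MvPolynomial.eval_X]
    refine hp.fun_mul ?_
    cases i <;> simp only [Sum.elim_inl, Sum.elim_inr] <;> fun_prop

namespace RatOn

lemma differentiableOn (hf : RatOn s f) : DifferentiableOn ℂ f s := by
  obtain ⟨R, Q, h⟩ := hf
  refine DifferentiableOn.congr (f := fun P => evalP R P / evalP Q P) (fun P hP => ?_)
    fun P hP => (h P hP).2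
  exact (differentiableAt_fun_div (differentiable_evalP R P) (differentiable_evalP Q P)
    (h P hP).1).differentiableWithinAt

lemma const (c : ℂ) : RatOn s fun _ => c :=
  ⟨.C c, 1, fun P _ => by simp [evalP]⟩

lemma fst (j : Fin n) : RatOn s fun P => P.1 j :=
  ⟨.X (.inl j), 1, fun P _ => by simp [evalP]⟩

lemma snd : RatOn s fun P => P.2 :=
  ⟨.X (.inr ()), 1, fun P _ => by simp [evalP]⟩

lemma add (hf : RatOn s f) (hg : RatOn s g) : RatOn s fun P => f P + g P := by
  obtain ⟨R, Q, h⟩ := hf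
  obtain ⟨R', Q', h'⟩ := hg
  refine ⟨R * Q' + R' * Q, Q * Q', fun P hP => ?_⟩
  obtain ⟨hQ, hfP⟩ := h P hP
  obtain ⟨hQ', hgP⟩ := h' P hP
  simp only [hfP, hgP, evalP, MvPolynomial.eval_mul, MvPolynomial.eval_add] at *
  exact ⟨mul_ne_zero hQ hQ', div_add_div _ _ hQ hQ' |>.trans (by ring)⟩

lemma mul (hf : RatOn s f) (hg : RatOn s g) : RatOn s fun P => f P * g P := by
  obtain ⟨R, Q, h⟩ := hf
  obtain ⟨R', Q', h'⟩ := hg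
  refine ⟨R * R', Q * Q', fun P hP => ?_⟩
  obtain ⟨hQ, hfP⟩ := h P hP
  obtain ⟨hQ', hgP⟩ := h' P hP
  simp only [hfP, hgP, evalP, MvPolynomial.eval_mul] at *
  exact ⟨mul_ne_zero hQ hQ', div_mul_div_comm _ _ _ _⟩

lemma inv (hf : RatOn s f) (h0 : ∀ P ∈ s, f P ≠ 0) : RatOn s fun P => (f P)⁻¹ := by
  obtain ⟨R, Q, h⟩ := hf
  refine ⟨Q, R, fun P hP => ⟨fun hR => h0 P hP ?_, ?_⟩⟩
  · rw [(h P hP).2, hR, zero_div]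
  · simp only [(h P hP).2, inv_div]

lemma div (hf : RatOn s f) (hg : RatOn s g) (h0 : ∀ P ∈ s, g P ≠ 0) :
    RatOn s fun P => f P / g P := by
  simpa only [div_eq_mul_inv] using hf.mul (hg.inv h0)

lemma sub (hf : RatOn s f) (hg : RatOn s g) : RatOn s fun P => f P - g P := by
  simpa only [sub_eq_add_neg, neg_one_mul] using hf.add ((const (-1)).mul hg)

lemma pow (hf : RatOn s f) (m : ℕ) : RatOn s fun P => f P ^ m := by
  induction m with
  | zero => simpa using const 1
  | succ m ih => simpa only [pow_succ] using ih.mul hf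

lemma sum {ι : Type*} (u : Finset ι) {f : ι → (Fin n → ℂ) × ℂ → ℂ} (hf : ∀ i, RatOn s (f i)) :
    RatOn s fun P => ∑ i ∈ u, f i P := by
  classical
  induction u using Finset.induction_on with
  | empty => simpa using const 0
  | insert i u hi ih => simpa only [Finset.sum_insert hi] using (hf i).add ih

lemma prod {ι : Type*} (u : Finset ι) {f : ι → (Fin n → ℂ) × ℂ → ℂ} (hf : ∀ i, RatOn s (f i)) :
    RatOn s fun P => ∏ i ∈ u, f i P := by
  classical
  induction u using Finset.induction_on with
  | empty => simpa using const 1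
  | insert i u hi ih => simpa only [Finset.prod_insert hi] using (hf i).mul ih

lemma evalP_comp (hG : RatMap s G) (R : MvPolynomial (Fin n ⊕ Unit) ℂ) :
    RatOn s fun P => evalP R (G P) := by
  unfold evalP
  induction R using MvPolynomial.induction_on with
  | C a => simpa using const a
  | add p q hp hq => simpa using hp.add hq
  | mul_X p i hp =>
    simp only [MvPolynomial.eval_mul, MvPolynomial.eval_X]
    refine hp.mul ?_
    cases i
    · exact hG.ratOn_fst _
    · exact hG.ratOn_snd

lemma comp (hf : RatOn t f) (hG : RatMap s G) (hst : Set.MapsTo G s t) :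
    RatOn s fun P => f (G P) := by
  obtain ⟨R, Q, h⟩ := hf
  obtain ⟨R', Q', h'⟩ :=
    (evalP_comp hG R).div (evalP_comp hG Q) fun P hP => (h _ (hst hP)).1
  exact ⟨R', Q', fun P hP => ⟨(h' P hP).1, (h _ (hst hP)).2.trans (h' P hP).2⟩⟩

lemma linearMap (A : (Fin n → ℂ) →ₗ[ℂ] ℂ) : RatOn s fun P => A P.1 := by
  rw [funext fun P : (Fin n → ℂ) × ℂ => A.pi_apply_eq_sum_univ P.1]
  exact sum _ fun i => (fst i).mul (const _)

lemma blockForm {l : ℕ} (β : Fin n → Fin l) (i : Fin l) (w : Fin n → ℂ) :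
    RatOn s fun P => _root_.blockForm β i P.1 w :=
  linearMap ((_root_.blockForm β i).flip w).toLinearMap

lemma gnormPolar {l : ℕ} (β : Fin n → Fin l) (p : Fin l → ℕ) (w : Fin n → ℂ) :
    RatOn s fun P => _root_.gnormPolar β p P.1 w :=
  prod _ fun i => ((const _).sub (RatOn.blockForm β i w)).pow _

end RatOn

namespace RatMap

lemma differentiableOn (hG : RatMap s G) : DifferentiableOn ℂ G s :=
  (differentiableOn_pi.2 fun j => (hG.ratOn_fst j).differentiableOn).prodMk
    hG.ratOn_snd.differentiableOn

lemma comp (hH : RatMap t H) (hG : RatMap s G) (hst : Set.MapsTo G s t) : RatMap s (H ∘ G) :=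
  ⟨fun j => (hH.ratOn_fst j).comp hG hst, hH.ratOn_snd.comp hG hst⟩

lemma exists_common_denominator (hG : RatMap s G) :
    ∃ (Pz : Fin n → MvPolynomial (Fin n ⊕ Unit) ℂ) (Pξ Q : MvPolynomial (Fin n ⊕ Unit) ℂ),
      (∀ P ∈ s, evalP Q P ≠ 0) ∧ Set.EqOn G
        (fun P => ((fun j => evalP (Pz j) P / evalP Q P), evalP Pξ P / evalP Q P)) s := by
  obtain ⟨hfst, Rξ, Qξ, hsnd⟩ := hG
  choose Rz Qz hfst using hfst
  refine ⟨fun j => Rz j * ((∏ i ∈ Finset.univ.erase j, Qz i) * Qξ), Rξ * ∏ i, Qz i,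
    (∏ i, Qz i) * Qξ, ?_⟩
  have hprod : ∀ P ∈ s, ∏ i, evalP (Qz i) P ≠ 0 := fun P hP =>
    Finset.prod_ne_zero_iff.2 fun i _ => (hfst i P hP).1
  simp only [evalP, MvPolynomial.eval_mul, MvPolynomial.eval_prod] at *
  refine ⟨fun P hP => mul_ne_zero (hprod P hP) (hsnd P hP).1, fun P hP =>
    Prod.ext (funext fun j => ?_) ?_⟩
  · have hrest := hprod P hP
    rw [← Finset.mul_prod_erase Finset.univ _ (Finset.mem_univ j)] at hrest
    simp only [(hfst j P hP).2]
    rw [← Finset.mul_prod_erase Finset.univ _ (Finset.mem_univ j), mul_assoc,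
      mul_div_mul_right _ _ (mul_ne_zero (right_ne_zero_of_mul hrest) (hsnd P hP).1)]
  · simp only [(hsnd P hP).2]
    rw [mul_comm _ (MvPolynomial.eval _ Qξ), mul_div_mul_right _ _ (hprod P hP)]

end RatMap

namespace Biholo

variable {E : Type*} [NormedAddCommGroup E] [NormedSpace ℂ E] {a b c : Set E} {u v : E → E}

lemma comp (hv : Biholo v b c) (hu : Biholo u a b) : Biholo (v ∘ u) a c := by
  obtain ⟨hud, hum, u', hud', hum', hul, hur⟩ := hu
  obtain ⟨hvd, hvm, v', hvd', hvm', hvl, hvr⟩ := hv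
  exact ⟨hvd.comp hud hum, hvm.comp hum, u' ∘ v', hud'.comp hvd' hvm', hum'.comp hvm',
    hul.comp hvl hum, hur.comp hvr hvm'⟩

lemma congr (hu : Biholo u a b) (h : Set.EqOn v u a) : Biholo v a b := by
  obtain ⟨hud, hum, u', hud', hum', hul, hur⟩ := hu
  exact ⟨hud.congr h, hum.congr h.symm, u', hud', hum', hul.congr_right h.symm,
    hur.congr_right hum' h.symm⟩

end Biholo

section Automorphisms

variable {l : ℕ} {β : Fin n → Fin l} {p : Fin l → ℕ} {A : (Fin n → ℂ) × ℂ}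

lemma ratMap_bundleAut (hA : A ∈ circBundle β p) :
    RatMap (discBundle β p) (bundleAut β p A) := by
  refine ⟨fun j => ?_, ?_⟩
  · have hform := RatOn.blockForm (s := discBundle β p) β (β j) (star A.1)
    exact ((((RatOn.const 1).sub (hform.div (RatOn.const _) fun _ _ =>
      one_add_blockRadius_ne_zero hA.1 (β j))).mul (RatOn.const _)).sub
      ((RatOn.const _).mul (RatOn.fst j))).div ((RatOn.const 1).sub hform) fun P hP =>
      one_sub_blockForm_star_ne_zero hP.1 hA.1 _
  · exact ((RatOn.const _).mul RatOn.snd).div (RatOn.gnormPolar β p _) fun P hP =>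
      gnormPolar_star_ne_zero hP.1 hA.1

lemma biholo_bundleAut (hA : A ∈ circBundle β p) :
    Biholo (bundleAut β p A) (discBundle β p) (discBundle β p) :=
  ⟨(ratMap_bundleAut hA).differentiableOn, fun _ hP => bundleAut_mem_discBundle hA hP,
    bundleAut β p (conjSnd A), (ratMap_bundleAut (conjSnd_mem_circBundle hA)).differentiableOn,
    fun _ hP => bundleAut_mem_discBundle (conjSnd_mem_circBundle hA) hP,
    fun _ hP => bundleAut_conjSnd_bundleAut hA hP.1,
    fun _ hP => bundleAut_bundleAut_conjSnd hA hP.1⟩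

end Automorphisms

end RationalMaps

section LinearFractional

variable {n l l' : ℕ} {β₁ : Fin n → Fin l} {p : Fin l → ℕ} {β₂ : Fin n → Fin l'} {q : Fin l' → ℕ}

/-- The squared norm `∑ᵢ pᵢ ‖z⁽ⁱ⁾‖²` belonging to `weightedForm β p`. -/
def weightedSq {n l : ℕ} (β : Fin n → Fin l) (p : Fin l → ℕ) (z : Fin n → ℂ) : ℝ :=
  ∑ j, p (β j) * normSq (z j)

lemma weightedSq_nonneg (β : Fin n → Fin l) (p : Fin l → ℕ) (z : Fin n → ℂ) :
    0 ≤ weightedSq β p z :=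
  Finset.sum_nonneg fun _ _ => mul_nonneg (Nat.cast_nonneg _) (normSq_nonneg _)

lemma weightedForm_star_self (β : Fin n → Fin l) (p : Fin l → ℕ) (z : Fin n → ℂ) :
    weightedForm β p z (star z) = weightedSq β p z := by
  simp [weightedForm_apply, weightedSq, Complex.mul_conj]

lemma weightedSq_smul (β : Fin n → Fin l) (p : Fin l → ℕ) (t : ℂ) (z : Fin n → ℂ) :
    weightedSq β p (t • z) = normSq t * weightedSq β p z := by
  simp only [weightedSq, Pi.smul_apply, smul_eq_mul, map_mul, mul_left_comm _ (normSq t),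
    Finset.mul_sum]

/-- The unit ball of `ℂⁿ × ℂ` for the squared norm `weightedSq β p z + |ξ|²`. -/
def weightedBall {n l : ℕ} (β : Fin n → Fin l) (p : Fin l → ℕ) : Set ((Fin n → ℂ) × ℂ) :=
  {P | weightedSq β p P.1 + normSq P.2 < 1}

/-- The data of a linear fractional map `LinFrac.map` fixing the base point, with the relations
making it preserve the weighted unit balls: `e`, `c` and `d` are the `horizMap`, `vertVec` and
`vertCoeff` of the map, and `k` is its `poleRemainder`. -/
@[ext] structure LinFrac (β₁ : Fin n → Fin l) (p : Fin l → ℕ) (β₂ : Fin n → Fin l')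
    (q : Fin l' → ℕ) where
  e : (Fin n → ℂ) ≃ₗ[ℂ] (Fin n → ℂ)
  c : Fin n → ℂ
  d : ℝ
  k : ℂ
  d_pos : 0 < d
  isometry (z w : Fin n → ℂ) :
    weightedForm β₂ q (e z) (star (e w)) = d * weightedForm β₁ p z (star w)
  trace : k + star k = 1 - 1 / d + weightedForm β₂ q c (star c) / d ^ 2

namespace LinFrac

variable (T : LinFrac β₁ p β₂ q)

lemma d_ne_zero : (T.d : ℂ) ≠ 0 := by exact_mod_cast T.d_pos.ne'

/-- The denominator of the linear fractional map. -/
def den (P : (Fin n → ℂ) × ℂ) : ℂ :=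
  (1 - weightedForm β₂ q (T.e P.1) (star T.c) / T.d) / T.d + T.k * (1 - P.2)

/-- The linear fractional map with the given data. -/
def map (P : (Fin n → ℂ) × ℂ) : (Fin n → ℂ) × ℂ :=
  ((T.d * T.den P)⁻¹ • (T.e P.1 - (1 - P.2) • T.c), 1 - (1 - P.2) / T.den P)

lemma weightedSq_e_sub_smul (z : Fin n → ℂ) (t : ℂ) :
    (weightedSq β₂ q (T.e z - t • T.c) : ℂ) = T.d * weightedSq β₁ p z -
      star t * weightedForm β₂ q (T.e z) (star T.c) -
      t * star (weightedForm β₂ q (T.e z) (star T.c)) +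
      t * star t * weightedForm β₂ q T.c (star T.c) := by
  rw [star_weightedForm, star_star, weightedForm_comm β₂ q (star (T.e z)),
    ← weightedForm_star_self, ← weightedForm_star_self, ← T.isometry]
  simp only [map_sub, map_smul, sub_apply, smul_apply, star_sub, star_smul, smul_eq_mul]
  ring

/-- Up to the positive factor `d`, the defining function of the target ball pulls back to that of
the source ball. -/
lemma weightedSq_add_normSq_den_sub (P : (Fin n → ℂ) × ℂ) :
    T.d * (weightedSq β₂ q (T.e P.1 - (1 - P.2) • T.c) / T.d ^ 2 +
      normSq (T.den P - (1 - P.2)) - normSq (T.den P)) =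
      weightedSq β₁ p P.1 + normSq P.2 - 1 := by
  have hd := T.d_ne_zero
  have hk : star T.k = 1 - 1 / T.d + weightedForm β₂ q T.c (star T.c) / T.d ^ 2 - T.k :=
    eq_sub_of_add_eq' T.trace
  have hdstar : star (T.d : ℂ) = T.d := conj_ofReal T.d
  apply ofReal_injective
  push_cast
  rw [T.weightedSq_e_sub_smul, ← mul_conj, ← mul_conj, ← mul_conj, ← star_def, den]
  simp only [star_add, star_sub, star_div₀, star_mul', hdstar, star_one, hk]
  field_simp
  ring

lemma den_ne_zero {P : (Fin n → ℂ) × ℂ} (hP : P ∈ weightedBall β₁ p) : T.den P ≠ 0 := by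
  intro h
  have hid := T.weightedSq_add_normSq_den_sub P
  rw [h, map_zero, sub_zero] at hid
  have hnonneg := mul_nonneg T.d_pos.le (add_nonneg
    (div_nonneg (weightedSq_nonneg β₂ q (T.e P.1 - (1 - P.2) • T.c)) (sq_nonneg T.d))
    (normSq_nonneg (0 - (1 - P.2))))
  have hlt : weightedSq β₁ p P.1 + normSq P.2 < 1 := hP
  linarith

lemma map_mem_weightedBall {P : (Fin n → ℂ) × ℂ} (hP : P ∈ weightedBall β₁ p) :
    T.map P ∈ weightedBall β₂ q := by
  have hden := T.den_ne_zero hP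
  have hpos := normSq_pos.2 hden
  have hsnd : (T.map P).2 = (T.den P - (1 - P.2)) / T.den P := by
    rw [map, sub_div (T.den P), div_self hden]
  have hlt : weightedSq β₁ p P.1 + normSq P.2 - 1 < 0 := sub_neg.2 hP
  rw [← T.weightedSq_add_normSq_den_sub P] at hlt
  have hnum := sub_neg.1 ((pos_iff_neg_of_mul_neg hlt).1 T.d_pos)
  rw [weightedBall, Set.mem_ofPred_eq, hsnd, map, weightedSq_smul, map_inv₀, map_mul,
    normSq_ofReal, map_div₀]
  calc _ = (weightedSq β₂ q (T.e P.1 - (1 - P.2) • T.c) / T.d ^ 2 +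
        normSq (T.den P - (1 - P.2))) / normSq (T.den P) := by
        have := T.d_pos
        field_simp
    _ < 1 := (div_lt_one hpos).2 hnum

/-- The data of the inverse linear fractional map. -/
def symm : LinFrac β₂ q β₁ p where
  e := T.e.symm
  c := -(T.d : ℂ)⁻¹ • T.e.symm T.c
  d := T.d⁻¹
  k := -T.d * T.k + weightedForm β₂ q T.c (star T.c) / T.d
  d_pos := inv_pos.2 T.d_pos
  isometry z w := by
    have h := T.isometry (T.e.symm z) (T.e.symm w)
    rw [T.e.apply_symm_apply, T.e.apply_symm_apply] at h
    rw [h, ofReal_inv, inv_mul_cancel_left₀ T.d_ne_zero]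
  trace := by
    have hd := T.d_ne_zero
    have hc := T.isometry (T.e.symm T.c) (T.e.symm T.c)
    have hk : star T.k = 1 - 1 / T.d + weightedForm β₂ q T.c (star T.c) / T.d ^ 2 - T.k :=
      eq_sub_of_add_eq' T.trace
    rw [T.e.apply_symm_apply, weightedForm_star_self, weightedForm_star_self] at hc
    have hsq : weightedSq β₁ p (T.e.symm T.c) = weightedSq β₂ q T.c / T.d := by
      rw [eq_div_iff T.d_pos.ne', mul_comm]
      exact_mod_cast hc.symm
    rw [weightedForm_star_self] at hk
    rw [weightedForm_star_self, weightedForm_star_self, weightedSq_smul, hsq, star_add, star_mul',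
      hk, star_neg, star_div₀, star_def, conj_ofReal, conj_ofReal]
    push_cast [normSq_neg, map_inv₀, normSq_ofReal]
    field_simp
    ring

lemma symm_symm : T.symm.symm = T := by
  have hd := T.d_ne_zero
  have hc := T.isometry (T.e.symm T.c) (T.e.symm T.c)
  rw [T.e.apply_symm_apply] at hc
  ext1
  · exact T.e.symm_symm
  · simp [symm, smul_smul, hd]
  · simp [symm]
  · simp only [symm, star_smul, map_smul, smul_apply, smul_eq_mul, star_neg, star_inv₀, star_def,
      conj_ofReal, ofReal_inv, hc]
    field_simp
    ring

lemma weightedForm_e_symm (z : Fin n → ℂ) :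
    weightedForm β₁ p (T.e.symm z) (star T.symm.c) =
      -weightedForm β₂ q z (star T.c) / T.d ^ 2 := by
  have hd := T.d_ne_zero
  have h := T.isometry (T.e.symm z) (T.e.symm T.c)
  rw [T.e.apply_symm_apply, T.e.apply_symm_apply] at h
  simp only [symm, h, star_smul, map_smul, smul_eq_mul, star_neg, star_inv₀, star_def,
    conj_ofReal]
  field_simp

lemma den_symm_map {P : (Fin n → ℂ) × ℂ} (hP : T.den P ≠ 0) :
    T.symm.den (T.map P) = (T.den P)⁻¹ := by
  have hd := T.d_ne_zero
  have hform : weightedForm β₂ q (T.e P.1) (star T.c) =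
      T.d * (1 - T.d * (T.den P - T.k * (1 - P.2))) := by
    rw [den]
    field_simp
    ring
  rw [den, show T.symm.e = T.e.symm from rfl, T.weightedForm_e_symm, map, map_smul, map_sub,
    map_smul, smul_apply, sub_apply, smul_apply, hform]
  simp only [symm, smul_eq_mul, ofReal_inv]
  field_simp
  ring

lemma symm_map_map {P : (Fin n → ℂ) × ℂ} (hP : T.den P ≠ 0) : T.symm.map (T.map P) = P := by
  have hd := T.d_ne_zero
  rw [map, T.den_symm_map hP]
  refine Prod.ext (funext fun j => ?_) ?_
  · simp only [map, symm, map_smul, map_sub, LinearEquiv.symm_apply_apply, Pi.smul_apply,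
      Pi.sub_apply, smul_eq_mul, ofReal_inv]
    field_simp
    ring
  · simp only [map]
    field_simp
    ring

lemma ratMap : RatMap (weightedBall β₁ p) T.map := by
  have h1 : RatOn (weightedBall β₁ p) fun P => 1 - P.2 := (RatOn.const 1).sub RatOn.snd
  have hden : RatOn (weightedBall β₁ p) T.den :=
    (((RatOn.const 1).sub ((RatOn.linearMap
      (((weightedForm β₂ q).flip (star T.c)).toLinearMap ∘ₗ T.e.toLinearMap)).div
      (RatOn.const _) fun _ _ => T.d_ne_zero)).div (RatOn.const _) fun _ _ => T.d_ne_zero).add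
      ((RatOn.const _).mul h1)
  refine ⟨fun j => ?_, (RatOn.const 1).sub (h1.div hden fun P => T.den_ne_zero)⟩
  exact (((RatOn.const _).mul hden).inv fun P hP => mul_ne_zero T.d_ne_zero (T.den_ne_zero hP)).mul
    ((RatOn.linearMap (LinearMap.proj j ∘ₗ T.e.toLinearMap)).sub (h1.mul (RatOn.const _)))

lemma biholo : Biholo T.map (weightedBall β₁ p) (weightedBall β₂ q) :=
  ⟨T.ratMap.differentiableOn, fun _ => T.map_mem_weightedBall, T.symm.map,
    T.symm.ratMap.differentiableOn, fun _ => T.symm.map_mem_weightedBall,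
    fun _ hP => T.symm_map_map (T.den_ne_zero hP), fun P hP => by
      simpa only [T.symm_symm] using T.symm.symm_map_map (T.symm.den_ne_zero hP)⟩

end LinFrac

section Subsingleton

variable {β : Fin n → Fin l} [Subsingleton (Fin l)]

lemma gnormPolar_eq_one_sub_weightedForm (hp1 : ∃ i, p i = 1) (z w : Fin n → ℂ) :
    gnormPolar β p z w = 1 - weightedForm β p z w := by
  obtain ⟨i, hi⟩ := hp1
  rw [gnormPolar, weightedForm_eq_sum_blockForm, Fintype.prod_subsingleton _ i,
    Fintype.sum_subsingleton _ i, hi, pow_one, Nat.cast_one, one_mul]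

lemma discBundle_eq_weightedBall (hp1 : ∃ i, p i = 1) : discBundle β p = weightedBall β p := by
  have hgnorm (z : Fin n → ℂ) : gnorm β p z = 1 - weightedSq β p z := by
    apply ofReal_injective
    rw [← gnormPolar_star_self, gnormPolar_eq_one_sub_weightedForm hp1, weightedForm_star_self]
    push_cast
    rfl
  obtain ⟨i, hi⟩ := hp1
  have hmem (z : Fin n → ℂ) : z ∈ prodBalls β ↔ 0 < gnorm β p z := by
    rw [gnorm, Fintype.prod_subsingleton _ i, hi, pow_one, sub_pos]
    exact ⟨fun h => h i, fun h j => Subsingleton.elim i j ▸ h⟩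
  ext P
  simp only [discBundle, weightedBall, Set.mem_ofPred_eq, hmem, hgnorm]
  refine ⟨fun h => by linarith [h.2], fun h => ⟨?_, ?_⟩⟩ <;> linarith [normSq_nonneg P.2]

end Subsingleton

lemma CRGerm.exists_pos_vertCoeff_eq [NeZero n] {F : (Fin n → ℂ) × ℂ → (Fin n → ℂ) × ℂ}
    (h : CRGerm β₁ p β₂ q F basePoint) (h1 : F basePoint = basePoint) (hp : ∀ i, 0 < p i)
    (hd : vertCoeff F ≠ 0) : ∃ d : ℝ, 0 < d ∧ vertCoeff F = d := by
  have hreal : star (vertCoeff F) = vertCoeff F :=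
    h.vertCoeff_conjMap ▸ ((h.segrePair h1).vertCoeff_eq hp).symm
  obtain ⟨d, hd'⟩ := conj_eq_iff_real.1 hreal
  have hform := (h.segrePair h1).weightedForm_horizMap (Pi.single 0 1) (star (Pi.single 0 1))
  rw [h.horizMap_conjMap, h.vertCoeff_conjMap, hreal, star_star, weightedForm_star_self,
    weightedForm_star_self, hd'] at hform
  refine ⟨d, (le_iff_eq_or_lt.1 ?_).resolve_left fun h0 => hd (by simp [hd', ← h0]), hd'⟩
  have hsq : weightedSq β₁ p (Pi.single 0 1) = p (β₁ 0) := by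
    simp [weightedSq, Pi.single_apply, apply_ite normSq]
  have hreal' : weightedSq β₂ q (horizMap F (Pi.single 0 1)) = p (β₁ 0) * d := by
    rw [← hsq]
    exact_mod_cast hform
  have hp0 : (0 : ℝ) < p (β₁ 0) := Nat.cast_pos.2 (hp _)
  exact (mul_nonneg_iff_of_pos_left hp0).1 (hreal' ▸ weightedSq_nonneg _ _ _)

theorem CRGerm.exists_linFrac_eventually_eq [NeZero n] [Subsingleton (Fin l)]
    [Subsingleton (Fin l')] {F : (Fin n → ℂ) × ℂ → (Fin n → ℂ) × ℂ}
    (h : CRGerm β₁ p β₂ q F basePoint) (h1 : F basePoint = basePoint) (hp : ∀ i, 0 < p i)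
    (hq : ∀ j, 0 < q j) (hp1 : ∃ i, p i = 1) (hq1 : ∃ j, q j = 1) (hd : vertCoeff F ≠ 0) :
    ∃ T : LinFrac β₁ p β₂ q, ∀ᶠ P in 𝓝 basePoint, P.2 ≠ 1 → F P = T.map P := by
  have h₁ := gnormPolar_eq_one_sub_weightedForm (β := β₁) hp1
  have h₂ := gnormPolar_eq_one_sub_weightedForm (β := β₂) hq1
  have hpair := h.segrePair h1
  have hd' : vertCoeff (conjMap F) ≠ 0 := hpair.vertCoeff_eq hp ▸ hd
  obtain ⟨d, hd0, hdF⟩ := h.exists_pos_vertCoeff_eq h1 hp hd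
  have hdF' : vertCoeff (conjMap F) = d := by rw [← hpair.vertCoeff_eq hp, hdF]
  obtain ⟨k, hk, htrace⟩ := h.exists_eventually_poleRemainder_eq h1 hp hq hd h₁ h₂
  obtain ⟨e, he⟩ : ∃ e : (Fin n → ℂ) ≃ₗ[ℂ] (Fin n → ℂ), ∀ z, e z = horizMap F z :=
    ⟨.ofBijective (horizMap F).toLinearMap ⟨hpair.horizMap_injective hp hd',
      hpair.horizMap_surjective hp hd'⟩, fun _ => rfl⟩
  refine ⟨⟨e, vertVec F, d, k, hd0, fun z w => ?_, hdF ▸ htrace⟩, ?_⟩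
  · simpa [he, h.horizMap_conjMap, hdF', mul_comm] using hpair.weightedForm_horizMap z (star w)
  · filter_upwards [hpair.eventually_apply_eq hp hq hd h₁ h₂ hk] with P hP hP1
    rw [hP hP1 _ rfl]
    simp [LinFrac.map, LinFrac.den, he, poleForm_apply, h.vertVec_conjMap, hdF, hdF',
      div_eq_inv_mul]

end LinearFractional

section Extension

variable {n l l' : ℕ} {β₁ : Fin n → Fin l} {p : Fin l → ℕ} {β₂ : Fin n → Fin l'} {q : Fin l' → ℕ}
  {F : (Fin n → ℂ) × ℂ → (Fin n → ℂ) × ℂ}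

lemma map_mem_discBundle_iff {A : (Fin n → ℂ) → Fin n → ℂ} {τ : Fin l' ≃ Fin l} (hqp : q = p ∘ τ)
    (hτ : ∀ j z, blockSq β₂ j (A z) = blockSq β₁ (τ j) z) (P : (Fin n → ℂ) × ℂ) :
    (A P.1, P.2) ∈ discBundle β₂ q ↔ P ∈ discBundle β₁ p := by
  have hgnorm : gnorm β₂ q (A P.1) = gnorm β₁ p P.1 :=
    Fintype.prod_equiv τ _ _ fun j => by rw [hqp, hτ, Function.comp_apply]
  have hball : A P.1 ∈ prodBalls β₂ ↔ P.1 ∈ prodBalls β₁ :=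
    τ.forall_congr fun j => by rw [hτ]
  exact and_congr hball (by rw [hgnorm])

lemma ratMap_prodMap_linearMap (A : (Fin n → ℂ) →ₗ[ℂ] (Fin n → ℂ)) (s : Set ((Fin n → ℂ) × ℂ)) :
    RatMap s fun P => (A P.1, P.2) :=
  ⟨fun j => RatOn.linearMap (LinearMap.proj j ∘ₗ A), RatOn.snd⟩

lemma biholo_prodMap_linearEquiv {e : (Fin n → ℂ) ≃ₗ[ℂ] (Fin n → ℂ)} {τ : Fin l' ≃ Fin l}
    (hqp : q = p ∘ τ) (hτ : ∀ j z, blockSq β₂ j (e z) = blockSq β₁ (τ j) z) :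
    Biholo (fun P : (Fin n → ℂ) × ℂ => (e P.1, P.2)) (discBundle β₁ p) (discBundle β₂ q) := by
  refine ⟨(ratMap_prodMap_linearMap e.toLinearMap _).differentiableOn,
    fun P => (map_mem_discBundle_iff hqp hτ P).2, fun P => (e.symm P.1, P.2),
    (ratMap_prodMap_linearMap e.symm.toLinearMap _).differentiableOn, fun P hP => ?_,
    fun P _ => by simp, fun P _ => by simp⟩
  rw [← map_mem_discBundle_iff hqp hτ]
  simpa using hP

lemma snd_ne_one_of_mem_discBundle {β : Fin n → Fin l} {P : (Fin n → ℂ) × ℂ}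
    (hP : P ∈ discBundle β p) : P.2 ≠ 1 := by
  intro h
  have hgnorm : gnorm β p P.1 ≤ 1 :=
    Finset.prod_le_one (fun i _ => pow_nonneg (sub_nonneg.2 (hP.1 i).le) _) fun i _ =>
      pow_le_one₀ (sub_nonneg.2 (hP.1 i).le) (sub_le_self _ blockSq_nonneg)
  have hlt := hP.2.trans_le hgnorm
  rw [h, map_one] at hlt
  exact hlt.false

lemma isOpen_discBundle (β : Fin n → Fin l) (p : Fin l → ℕ) : IsOpen (discBundle β p) := by
  have hgnorm : Continuous (gnorm β p) := by
    unfold gnorm blockSq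
    fun_prop
  exact ((isOpen_prodBalls β).preimage continuous_fst).inter (isOpen_lt
    (continuous_normSq.comp continuous_snd) (hgnorm.comp continuous_fst))

lemma circBundle_subset_closure (β : Fin n → Fin l) (p : Fin l → ℕ) :
    circBundle β p ⊆ closure (discBundle β p) := by
  intro x hx
  have ht : Tendsto (fun t : ℝ => (x.1, (t : ℂ) * x.2)) (𝓝[<] 1) (𝓝 x) :=
    (Continuous.tendsto' (by fun_prop) _ _ (by simp)).mono_left nhdsWithin_le_nhds
  refine mem_closure_of_tendsto ht ?_
  filter_upwards [self_mem_nhdsWithin, nhdsWithin_le_nhds (lt_mem_nhds one_pos)] with t ht1 ht0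
  refine ⟨hx.1, ?_⟩
  rw [map_mul, normSq_ofReal, ← hx.2]
  exact mul_lt_of_lt_one_left (normSq_pos.2 (snd_ne_zero_of_mem_circBundle hx))
    (mul_lt_one_of_nonneg_of_lt_one_left ht0.le ht1 ht1.le)

namespace CRGerm

lemma exists_ratMap_biholo_of_apply_basePoint [NeZero n] (h : CRGerm β₁ p β₂ q F basePoint)
    (h1 : F basePoint = basePoint) (hβ₁ : Function.Surjective β₁) (hβ₂ : Function.Surjective β₂)
    (hp : ∀ i, 0 < p i) (hq : ∀ j, 0 < q j) (hp1 : ∃ i, p i = 1) (hq1 : ∃ j, q j = 1)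
    (hi : Function.Injective (fderiv ℂ F basePoint)) :
    ∃ G, RatMap (discBundle β₁ p) G ∧ Biholo G (discBundle β₁ p) (discBundle β₂ q) ∧
      ∀ᶠ P in 𝓝[discBundle β₁ p] basePoint, F P = G P := by
  have hd := h.vertCoeff_ne_zero h1 hq hi
  have hpair := h.segrePair h1
  by_cases hm : ∃ m m', β₁ m ≠ β₁ m'
  · obtain ⟨m, m', hm⟩ := hm
    obtain ⟨hF, τ, hqp, hτ⟩ := h.exists_blockEquiv_eventually_eq h1 hβ₁ hβ₂ hp hq hp1 hq1 hi hm
    have hd' : vertCoeff (conjMap F) ≠ 0 := hpair.vertCoeff_eq hp ▸ hd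
    let e := LinearEquiv.ofBijective (horizMap F).toLinearMap
      ⟨hpair.horizMap_injective hp hd', hpair.horizMap_surjective hp hd'⟩
    exact ⟨_, ratMap_prodMap_linearMap e.toLinearMap _, biholo_prodMap_linearEquiv hqp hτ,
      nhdsWithin_le_nhds hF⟩
  · push Not at hm
    have : Subsingleton (Fin l) := ⟨hβ₁.forall₂.2 hm⟩
    have : Subsingleton (Fin l') := hpair.subsingleton_target hp hq hd hβ₂
    obtain ⟨T, hT⟩ := h.exists_linFrac_eventually_eq h1 hp hq hp1 hq1 hd
    refine ⟨T.map, discBundle_eq_weightedBall (β := β₁) hp1 ▸ T.ratMap, ?_, ?_⟩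
    · rw [discBundle_eq_weightedBall hp1, discBundle_eq_weightedBall hq1]
      exact T.biholo
    · filter_upwards [nhdsWithin_le_nhds hT, self_mem_nhdsWithin] with P hP hPD
      exact hP (snd_ne_one_of_mem_discBundle hPD)

theorem exists_ratMap_biholo [NeZero n] {x : (Fin n → ℂ) × ℂ} (h : CRGerm β₁ p β₂ q F x)
    (hβ₁ : Function.Surjective β₁) (hβ₂ : Function.Surjective β₂) (hp : ∀ i, 0 < p i)
    (hq : ∀ j, 0 < q j) (hp1 : ∃ i, p i = 1) (hq1 : ∃ j, q j = 1)
    (hi : Function.Injective (fderiv ℂ F x)) :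
    ∃ G, RatMap (discBundle β₁ p) G ∧ Biholo G (discBundle β₁ p) (discBundle β₂ q) ∧
      ∀ᶠ P in 𝓝[discBundle β₁ p] x, F P = G P := by
  obtain ⟨G, hG, hGb, hGF⟩ := h.centered.exists_ratMap_biholo_of_apply_basePoint
    h.centeredGerm_basePoint hβ₁ hβ₂ hp hq hp1 hq1 (h.injective_fderiv_centeredGerm_iff.2 hi)
  have hy := h.apply_mem
  have hx := conjSnd_mem_circBundle h.mem
  refine ⟨bundleAut β₂ q (F x) ∘ (G ∘ bundleAut β₁ p (conjSnd x)),
    (ratMap_bundleAut hy).comp (hG.comp (ratMap_bundleAut hx)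
      fun P => bundleAut_mem_discBundle hx)
      (hGb.2.1.comp fun P => bundleAut_mem_discBundle hx),
    (biholo_bundleAut hy).comp (hGb.comp (biholo_bundleAut hx)), ?_⟩
  have ht : Tendsto (bundleAut β₁ p (conjSnd x)) (𝓝 x) (𝓝 basePoint) := by
    simpa only [bundleAut_conjSnd_self h.mem] using
      (differentiableAt_bundleAut (P := x) hx h.mem.1).continuousAt.tendsto
  have htD : Tendsto (bundleAut β₁ p (conjSnd x)) (𝓝[discBundle β₁ p] x)
      (𝓝[discBundle β₁ p] basePoint) :=
    ht.inf (tendsto_principal_principal.2 fun P => bundleAut_mem_discBundle hx)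
  filter_upwards [htD.eventually hGF,
    nhdsWithin_le_nhds (ht.eventually h.eventually_bundleAut_centeredGerm),
    self_mem_nhdsWithin] with P hGP hFP hPD
  rw [bundleAut_bundleAut_conjSnd h.mem hPD.1] at hFP
  rw [← hFP, hGP, Function.comp_apply, Function.comp_apply]

end CRGerm

end Extension

/-- Part (1) of the main theorem, for products of balls: a nonconstant holomorphic map
defined near a piece of the circle bundle `Σ₁` over `Ω₁ = 𝔹^{n₁} × ⋯ × 𝔹^{n_l}` (with
generic norm `ρ₁`) sending the piece into the circle bundle `Σ₂` over
`Ω₂ = 𝔹^{m₁} × ⋯ × 𝔹^{m_{l'}}` (with generic norm `ρ₂`) coincides on a nonempty open set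
with a rational map that restricts to a biholomorphism from `D₁` onto `D₂`. -/
theorem main_theorem_part1 (n : ℕ) (hn : 1 ≤ n) (l l' : ℕ)
    (β₁ : Fin n → Fin l) (hβ₁ : Function.Surjective β₁)
    (β₂ : Fin n → Fin l') (hβ₂ : Function.Surjective β₂)
    (p : Fin l → ℕ) (hp : ∀ i, 0 < p i) (hp1 : ∃ i, p i = 1)
    (q : Fin l' → ℕ) (hq : ∀ j, 0 < q j) (hq1 : ∃ j, q j = 1)
    (U : Set ((Fin n → ℂ) × ℂ)) (hUopen : IsOpen U) (hUconn : IsConnected U)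
    (hUS : (U ∩ circBundle β₁ p).Nonempty)
    (F : ((Fin n → ℂ) × ℂ) → ((Fin n → ℂ) × ℂ))
    (hF : DifferentiableOn ℂ F U)
    (hFnc : ¬ ∃ c, Set.EqOn F (fun _ => c) U)
    (hFmap : Set.MapsTo F (U ∩ circBundle β₁ p) (circBundle β₂ q)) :
    ∃ (Pz : Fin n → MvPolynomial (Fin n ⊕ Unit) ℂ) (Pξ Q : MvPolynomial (Fin n ⊕ Unit) ℂ),
      (∀ P ∈ discBundle β₁ p, evalP Q P ≠ 0) ∧
      Biholo (fun P => ((fun j => evalP (Pz j) P / evalP Q P), evalP Pξ P / evalP Q P))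
        (discBundle β₁ p) (discBundle β₂ q) ∧
      ∃ V : Set ((Fin n → ℂ) × ℂ), IsOpen V ∧ V.Nonempty ∧ V ⊆ U ∧
        Set.EqOn F
          (fun P => ((fun j => evalP (Pz j) P / evalP Q P), evalP Pξ P / evalP Q P)) V := by
  have : NeZero n := ⟨(Nat.zero_lt_of_lt hn).ne'⟩
  obtain ⟨x, hxU, hx, hi⟩ :=
    exists_crGerm_injective_fderiv hp hq hUopen hUconn.isPreconnected hUS hF hFnc hFmap
  obtain ⟨G, hG, hGb, hFG⟩ := hx.exists_ratMap_biholo hβ₁ hβ₂ hp hq hp1 hq1 hi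
  obtain ⟨Pz, Pξ, Q, hQ, hGQ⟩ := hG.exists_common_denominator
  obtain ⟨W, hWopen, hxW, hW⟩ :=
    mem_nhdsWithin.1 (hFG.and (nhdsWithin_le_nhds (hUopen.mem_nhds hxU)))
  exact ⟨Pz, Pξ, Q, hQ, hGb.congr hGQ.symm, W ∩ discBundle β₁ p,
    hWopen.inter (isOpen_discBundle β₁ p),
    mem_closure_iff.1 (circBundle_subset_closure β₁ p hx.mem) W hWopen hxW,
    fun P hP => (hW hP).2, fun P hP => (hW hP).1.trans (hGQ hP.2)⟩
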